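/- Let E := {d·d′ : d, d′ positive integers, d < d′ < 2d} and let R_x := #{n ≤ x : n has no divisor belonging to E}. Then there exists c > 0 such that R_x ≤ x·exp(−c·√(log log x)) for all sufficiently large x; moreover, with β := 1 − (1 + log log 3)/log 3, for every ε > 0 one has R_x ≥ x/(log x)^{β+ε} for all sufficiently large x. -/

import Mathlib

/-!
Both bounds rest on the same dictionary. Dividing `d < d' < 2 * d` by their gcd, a squarefree integer
`∏ S` has a divisor in `E` exactly when two disjoint subsets of `S`, not both empty, have products
within a factor `2` of each other (`not_RR_of`, `exists_of_not_RR`), that is, when some signed sum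
`∑ ε_p log p` over `S` with signs in `{0, 1, -1}`, not all zero, is less than `log 2` in absolute
value. The primes are processed in blocks `T < log p ≤ M * T` along a geometric sequence of scales
`T`, and sets of primes are weighted by `∏ 1 / p`, so that a block of total mass about `M` behaves as
a random set of about `log M` primes. Mertens' theorems and Chebyshev's bounds in short windows of
`log p` are the only facts used about primes.

Upper bound. Integers without divisor in `E` are closed under divisors, hence `R_x / x` is at most a
constant times the proportion, in weight, of sets of primes up to `x` without such a coincidence
(`Rcount_le`). Let `aa N S` be the probability that two independent random signed sums over `S` are
close. When `T * aa N S` and `T⁻¹ ∑ log p` are bounded, the second moment method applied to pairs of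
new primes in the block shows that the block creates a coincidence with probability bounded below
(`attempt`). A small power of `T * aa N S` drifts downwards: a new prime makes two sign vectors agree
with probability `1 / 3`, while distinct signs at a large prime rarely allow a collision; this gives
a Lyapunov function `VV` (`drift_V`). Together the two facts make `I * (1 + η * VV)` contract by a
fixed factor over each block (`contract`), and there are about `log log x` blocks. This saves a power
of `log x`, which is more than `exp (-c √(log log x))`.

Lower bound. Keep the sets with exactly `g` primes in each block, where `3 ^ g` is just below `M`.
After `k` blocks there are `3 ^ (g * k)` pairs of disjoint subsets, and each of them excludes a window
of weight `O(M ^ (-k))` for a new prime, so the weight lost through coincidences is a convergent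
geometric series, at most one half of the total if the first block is far enough (`fail_block`,
`good_weight`). The total weight is `((log M) ^ g / g!) ^ k`, nearly
`(log x) ^ ((1 + log log 3) / log 3)` by Stirling's formula. Multiplying these integers by a prime
larger than `√x` creates no divisor in `E` and gives the count (`RR_mul_big`, `Rcount_ge`).
-/

open Filter Topology
open scoped Classical

/-- The set `E = {d·d' : d < d' < 2d}`. -/
def Eset : Set ℕ :=
  {m : ℕ | ∃ d d' : ℕ, 0 < d ∧ d < d' ∧ d' < 2 * d ∧ m = d * d'}

/-- `R_x`: the number of `n ≤ x` having no divisor in `E`. -/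
noncomputable def Rcount (x : ℕ) : ℕ :=
  ((Finset.Icc 1 x).filter (fun n => ¬ ∃ e ∈ Eset, e ∣ n)).card

namespace ExSet

/-! ### Mertens estimates -/

/-- `log k / k` at primes, `0` elsewhere. -/
noncomputable def aL (k : ℕ) : ℝ := if k.Prime then Real.log k / k else 0

/-- `1 / k` at primes, `0` elsewhere. -/
noncomputable def aP (k : ℕ) : ℝ := if k.Prime then 1 / (k : ℝ) else 0

lemma aL_nonneg (k : ℕ) : 0 ≤ aL k := by
  unfold aL; split_ifs <;> positivity

lemma aP_nonneg (k : ℕ) : 0 ≤ aP k := by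
  unfold aP; split_ifs <;> positivity

/-- Legendre: the logarithm of `n!` through its prime factorization. -/
lemma log_factorial_eq (n : ℕ) :
    Real.log (n.factorial : ℝ) =
      ∑ p ∈ (Finset.range (n + 1)).filter Nat.Prime,
        ((n.factorial).factorization p : ℝ) * Real.log p := by
  rw [Real.log_nat_eq_sum_factorization, Finsupp.sum]
  apply Finset.sum_subset
  · intro p hp
    simp only [Nat.support_factorization, Nat.mem_primeFactors] at hp
    simp only [Finset.mem_filter, Finset.mem_range]
    exact ⟨Nat.lt_succ_of_le ((Nat.Prime.dvd_factorial hp.1).1 hp.2.1), hp.1⟩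
  · intro p _ hp
    rw [Finsupp.notMem_support_iff.1 hp]; simp

lemma log_div_summable_aux :
    ∃ C : ℝ, 0 ≤ C ∧ ∀ s : Finset ℕ, (∀ p ∈ s, 2 ≤ p) →
      ∑ p ∈ s, Real.log p / (p * (p - 1 : ℝ)) ≤ C := by
  have hs : Summable (fun n : ℕ => 4 * (1 / (n : ℝ) ^ (3 / 2 : ℝ))) :=
    (Real.summable_one_div_nat_rpow.2 (by norm_num)).mul_left 4
  refine ⟨∑' n : ℕ, 4 * (1 / (n : ℝ) ^ (3 / 2 : ℝ)), tsum_nonneg (fun n => by positivity), ?_⟩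
  intro s h2
  refine le_trans (Finset.sum_le_sum ?_) (hs.sum_le_tsum s (fun n _ => by positivity))
  intro p hp
  have hp2 : (2 : ℝ) ≤ p := by exact_mod_cast h2 p hp
  have h1 : Real.log p ≤ (p : ℝ) ^ (1 / 2 : ℝ) / (1 / 2) :=
    Real.log_le_rpow_div (by linarith) (by norm_num)
  have h3 : (p : ℝ) ^ (1 / 2 : ℝ) * (p : ℝ) ^ (3 / 2 : ℝ) = p ^ 2 := by
    rw [← Real.rpow_add (by linarith)]; norm_num
  have h4 : 0 < (p : ℝ) ^ (3 / 2 : ℝ) := Real.rpow_pos_of_pos (by linarith) _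
  have h5 : 0 < (p : ℝ) ^ (1 / 2 : ℝ) := Real.rpow_pos_of_pos (by linarith) _
  rw [mul_one_div, div_le_div_iff₀ (by nlinarith) h4]
  calc Real.log p * (p : ℝ) ^ (3 / 2 : ℝ) ≤ (p : ℝ) ^ (1 / 2 : ℝ) / (1 / 2) * (p : ℝ) ^ (3 / 2 : ℝ) := by gcongr
    _ = 2 * p ^ 2 := by linear_combination 2 * h3
    _ ≤ 4 * (p * (p - 1)) := by nlinarith

lemma sum_aL_eq (n : ℕ) : ∑ k ∈ Finset.range (n + 1), aL k =
    ∑ p ∈ (Finset.range (n + 1)).filter Nat.Prime, Real.log p / p := by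
  unfold aL; rw [Finset.sum_filter]

lemma log_factorial_ge (n : ℕ) (hn : 1 ≤ n) :
    n * Real.log n - n ≤ Real.log (n.factorial : ℝ) := by
  induction n, hn using Nat.le_induction with
  | base => simp
  | succ n hn ih =>
    rw [Nat.factorial_succ]
    have hn' : (1 : ℝ) ≤ n := by exact_mod_cast hn
    have : (n.factorial : ℝ) ≠ 0 := by exact_mod_cast n.factorial_ne_zero
    push_cast
    rw [Real.log_mul (by positivity) this]
    have h : Real.log ((n + 1 : ℝ)) ≤ Real.log n + 1 / n := by
      have := Real.log_le_sub_one_of_pos (show 0 < ((n + 1 : ℝ) / n) by positivity)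
      rw [Real.log_div (by positivity) (by positivity)] at this
      have e : ((n : ℝ) + 1) / n = 1 + 1 / n := by field_simp
      linarith
    have : (n : ℝ) * Real.log (n + 1) ≤ n * Real.log n + 1 := by
      calc (n : ℝ) * Real.log (n + 1) ≤ n * (Real.log n + 1 / n) := by gcongr
        _ = _ := by field_simp
    linarith

lemma log_factorial_le (n : ℕ) : Real.log (n.factorial : ℝ) ≤ n * Real.log n := by
  have := Nat.factorial_le_pow n
  have h2 : (n.factorial : ℝ) ≤ (n : ℝ) ^ n := by exact_mod_cast this
  calc _ ≤ Real.log ((n : ℝ) ^ n) := Real.log_le_log (by exact_mod_cast n.factorial_pos) h2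
    _ = _ := by rw [Real.log_pow]

/-- Mertens' first theorem. -/
lemma mertens1 : ∃ C : ℝ, 0 ≤ C ∧ ∀ n : ℕ, 1 ≤ n →
    |∑ k ∈ Finset.range (n + 1), aL k - Real.log n| ≤ C := by
  obtain ⟨C, hC, h⟩ := log_div_summable_aux
  refine ⟨C + 1 + Real.log 4, by positivity, fun n hn => ?_⟩
  have hn' : (1 : ℝ) ≤ n := by exact_mod_cast hn
  have hmem : ∀ p ∈ (Finset.range (n + 1)).filter Nat.Prime, p.Prime ∧ p ≤ n := by
    intro p hp; simp at hp; exact ⟨hp.2, by omega⟩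
  rw [sum_aL_eq]
  set s := (Finset.range (n + 1)).filter Nat.Prime with hs
  -- Compare `v_p(n!)` with `n / (p - 1)` from above and with `n / p - 1` from below.
  have hlow : n * Real.log n - n ≤ n * (∑ p ∈ s, Real.log p / p) + n * C := by
    refine (log_factorial_ge n hn).trans ?_
    rw [log_factorial_eq]
    have h1 := h s (fun p hp => (hmem p hp).1.two_le)
    calc _ ≤ ∑ p ∈ s, (n * (Real.log p / p) + n * (Real.log p / (p * (p - 1 : ℝ)))) := by
          apply Finset.sum_le_sum
          intro p hp
          have hp' := (hmem p hp).1
          have hp2 : (2 : ℝ) ≤ p := by exact_mod_cast hp'.two_le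
          have hl : 0 ≤ Real.log p := Real.log_nonneg (by linarith)
          have h3 : ((n.factorial.factorization p : ℕ) : ℝ) ≤ n / (p - 1 : ℝ) := by
            calc ((n.factorial.factorization p : ℕ) : ℝ) ≤ ((n / (p - 1) : ℕ) : ℝ) := by
                  exact_mod_cast Nat.factorization_factorial_le_div_pred hp' n
              _ ≤ (n : ℝ) / ((p - 1 : ℕ) : ℝ) := Nat.cast_div_le
              _ = _ := by rw [Nat.cast_sub hp'.one_le]; simp
          calc _ ≤ n / (p - 1 : ℝ) * Real.log p := by gcongr
            _ = _ := by
              have : (p : ℝ) - 1 ≠ 0 := by linarith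
              field_simp
              ring
      _ = n * (∑ p ∈ s, Real.log p / p) + n * (∑ p ∈ s, Real.log p / (p * (p - 1 : ℝ))) := by
          rw [Finset.sum_add_distrib, Finset.mul_sum, Finset.mul_sum]
      _ ≤ _ := by gcongr
  have hup : n * (∑ p ∈ s, Real.log p / p) ≤ n * Real.log n + n * Real.log 4 := by
    have h1 : ∑ p ∈ s, (n / p - 1 : ℝ) * Real.log p ≤ n * Real.log n := by
      refine le_trans ?_ (log_factorial_le n)
      rw [log_factorial_eq]
      apply Finset.sum_le_sum
      intro p hp
      have hp' := (hmem p hp).1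
      have hl : 0 ≤ Real.log p := Real.log_nonneg (by exact_mod_cast hp'.one_le)
      have : n / p ≤ n.factorial.factorization p := by
        rw [Nat.factorization_factorial hp' (Nat.lt_succ_self _)]
        have := Finset.single_le_sum (f := fun i => n / p ^ i) (s := Finset.Ico 1 (Nat.log p n).succ)
          (fun i _ => Nat.zero_le _) (a := 1) (by
            simp only [Finset.mem_Ico, le_refl, true_and, Nat.succ_eq_add_one]
            have := Nat.log_pos hp'.one_lt (hmem p hp).2
            omega)
        simpa using this
      gcongr
      have h2 : (n : ℝ) / p < (n / p : ℕ) + 1 := by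
        rw [div_lt_iff₀ (by exact_mod_cast hp'.pos)]
        have := Nat.lt_div_mul_add hp'.pos (a := n)
        have h3 : n < (n / p + 1) * p := by linarith [add_mul (n/p) 1 p]
        exact_mod_cast h3
      have h3 : ((n / p : ℕ) : ℝ) ≤ (n.factorial.factorization p : ℝ) := by exact_mod_cast this
      linarith
    have h2 : ∑ p ∈ s, Real.log p ≤ n * Real.log 4 := by
      have := Chebyshev.theta_le_log4_mul_x (x := (n : ℝ)) (by positivity)
      rw [Chebyshev.theta_eq_sum_Icc] at this
      rw [mul_comm]
      refine le_trans (Finset.sum_le_sum_of_subset_of_nonneg ?_ ?_) this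
      · intro p hp
        simp only [Finset.mem_filter, Finset.mem_Icc, Nat.floor_natCast]
        exact ⟨⟨Nat.zero_le _, (hmem p hp).2⟩, (hmem p hp).1⟩
      · intro p hp _
        positivity
    have h3 : ∑ p ∈ s, (n / p - 1 : ℝ) * Real.log p = n * (∑ p ∈ s, Real.log p / p) - ∑ p ∈ s, Real.log p := by
      rw [Finset.mul_sum, ← Finset.sum_sub_distrib]
      apply Finset.sum_congr rfl
      intro p hp
      ring
    linarith
  set A := ∑ p ∈ s, Real.log p / p
  have hlog4 : 0 ≤ Real.log 4 := by positivity
  rw [abs_le]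
  constructor
  · have : (n : ℝ) * (Real.log n - 1 - C) ≤ n * A := by linarith
    have := le_of_mul_le_mul_left this (by linarith)
    linarith
  · have : (n : ℝ) * A ≤ n * (Real.log n + Real.log 4) := by linarith
    have := le_of_mul_le_mul_left this (by linarith)
    linarith

/-- Mertens' second theorem, by discrete partial summation from `mertens1`. -/
lemma mertens2 : ∃ C : ℝ, 0 ≤ C ∧ ∀ n : ℕ, 2 ≤ n →
    |∑ k ∈ Finset.range (n + 1), aP k - Real.log (Real.log n)| ≤ C := by
  obtain ⟨C, hC, h⟩ := mertens1
  set e : ℕ → ℝ := fun n => ∑ k ∈ Finset.range (n + 1), aL k - Real.log n with he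
  set U : ℕ → ℝ := fun n => ∑ k ∈ Finset.range (n + 1), aP k with hU
  have key : ∀ n : ℕ, 2 ≤ n →
      U n ≤ U 2 + (Real.log (Real.log n) - Real.log (Real.log 2)) + e n / Real.log n
        - e 2 / Real.log 2 + C * (1 / Real.log 2 - 1 / Real.log n) ∧
      U 2 + (Real.log (Real.log n) - Real.log (Real.log 2)) + e n / Real.log n
        - e 2 / Real.log 2 - (C + 1) * (1 / Real.log 2 - 1 / Real.log n) ≤ U n := by
    intro n hn
    induction n, hn using Nat.le_induction with
    | base => constructor <;> simp
    | succ n hn ih =>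
      have hn' : (2 : ℝ) ≤ n := by exact_mod_cast hn
      set u := Real.log n with hu
      set v := Real.log ((n + 1 : ℕ) : ℝ) with hv
      have hu0 : 0 < u := Real.log_pos (by linarith)
      have huv : u ≤ v := Real.log_le_log (by linarith) (by push_cast; linarith)
      have hv0 : 0 < v := by linarith
      have huv1 : v - u ≤ 1 := by
        have : Real.log ((n + 1 : ℝ) / n) ≤ (n + 1 : ℝ) / n - 1 :=
          Real.log_le_sub_one_of_pos (by positivity)
        rw [Real.log_div (by positivity) (by positivity)] at this
        have h2 : ((n : ℝ) + 1) / n - 1 = 1 / n := by field_simp; ring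
        have h3 : (1 : ℝ) / n ≤ 1 := by rw [div_le_one (by linarith)]; linarith
        rw [hv, hu]; push_cast; linarith
      have hstep : U (n + 1) = U n + ((e (n + 1) - e n) + (v - u)) / v := by
        have h1 : U (n + 1) = U n + aP (n + 1) := by
          simp only [hU]; rw [Finset.sum_range_succ _ (n + 1)]
        have h2 : e (n + 1) - e n = aL (n + 1) - (v - u) := by
          simp only [he]; rw [Finset.sum_range_succ _ (n + 1)]; ring
        rw [h1, h2]
        have : aP (n + 1) = aL (n + 1) / v := by
          unfold aP aL
          split_ifs
          · rw [← hv]; field_simp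
          · simp
        rw [this]; ring
      have hen := abs_le.1 (h n (by omega))
      have hE1 : -C ≤ e n := hen.1
      have hE2 : e n ≤ C := hen.2
      have hinv : 0 ≤ 1 / u - 1 / v := by
        rw [sub_nonneg]; exact one_div_le_one_div_of_le hu0 huv
      have hdecomp : ((e (n + 1) - e n) + (v - u)) / v =
          e (n + 1) / v - e n / u + e n * (1 / u - 1 / v) + (1 - u / v) := by
        field_simp; ring
      have hl1 : 1 - u / v ≤ Real.log v - Real.log u := by
        rw [← Real.log_div hv0.ne' hu0.ne']
        have := Real.one_sub_inv_le_log_of_pos (show 0 < v / u by positivity)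
        rwa [inv_div] at this
      have hl2 : Real.log v - Real.log u ≤ (1 - u / v) + (1 / u - 1 / v) := by
        rw [← Real.log_div hv0.ne' hu0.ne']
        have h1 := Real.log_le_sub_one_of_pos (show 0 < v / u by positivity)
        have h2 : v / u - 1 = (1 - u / v) + (v - u) * (1 / u - 1 / v) := by field_simp; ring
        have h3 : (v - u) * (1 / u - 1 / v) ≤ 1 * (1 / u - 1 / v) := by gcongr
        linarith
      have hb1 : e n * (1 / u - 1 / v) ≤ C * (1 / u - 1 / v) := by gcongr
      have hb2 : -C * (1 / u - 1 / v) ≤ e n * (1 / u - 1 / v) := by gcongr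
      rw [hstep, hdecomp]
      constructor
      · linarith [ih.1]
      · linarith [ih.2]
  have hl2 : 0 < Real.log 2 := Real.log_pos (by norm_num)
  have hl22 : (1 : ℝ) / 2 < Real.log 2 := by linarith [Real.log_two_gt_d9]
  refine ⟨|U 2| + |Real.log (Real.log 2)| + 2 * C + |e 2 / Real.log 2| + (C + 1) * 2, by positivity, ?_⟩
  intro n hn
  obtain ⟨h1, h2⟩ := key n hn
  have hn' : (2 : ℝ) ≤ n := by exact_mod_cast hn
  have hln : Real.log 2 ≤ Real.log n := Real.log_le_log (by norm_num) hn'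
  have hi0 : 0 < 1 / Real.log n := one_div_pos.2 (by linarith)
  have hi1 : 1 / Real.log n ≤ 1 / Real.log 2 := one_div_le_one_div_of_le hl2 hln
  have hi2 : 1 / Real.log 2 ≤ 2 := by rw [div_le_iff₀ hl2]; linarith
  have hen : |e n / Real.log n| ≤ 2 * C := by
    rw [abs_div, abs_of_pos (show 0 < Real.log n by linarith), div_eq_mul_one_div]
    calc |e n| * (1 / Real.log n) ≤ C * 2 := by
          gcongr
          · exact h n (by omega)
          · linarith
      _ = _ := by ring
  have hC1 : C * (1 / Real.log 2 - 1 / Real.log n) ≤ C * 2 := by gcongr; linarith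
  have hC2 : (C + 1) * (1 / Real.log 2 - 1 / Real.log n) ≤ (C + 1) * 2 := by gcongr; linarith
  have a1 := abs_le.1 hen
  have a2 := neg_abs_le (U 2)
  have a3 := le_abs_self (U 2)
  have a4 := neg_abs_le (Real.log (Real.log 2))
  have a5 := le_abs_self (Real.log (Real.log 2))
  have a6 := neg_abs_le (e 2 / Real.log 2)
  have a7 := le_abs_self (e 2 / Real.log 2)
  change |U n - _| ≤ _
  rw [abs_le]; constructor <;> linarith

/-- The primes `p` with `a < log p ≤ b`. -/
noncomputable def pr (a b : ℝ) : Finset ℕ :=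
  (Finset.range (⌊Real.exp b⌋₊ + 1)).filter
    (fun p => p.Prime ∧ a < Real.log p ∧ Real.log p ≤ b)

lemma mem_pr {a b : ℝ} {p : ℕ} : p ∈ pr a b ↔ p.Prime ∧ a < Real.log p ∧ Real.log p ≤ b := by
  unfold pr
  simp only [Finset.mem_filter, Finset.mem_range, and_iff_right_iff_imp]
  rintro ⟨hp, _, h⟩
  rw [Nat.lt_succ_iff]
  apply Nat.le_floor
  rwa [← Real.log_le_iff_le_exp (by exact_mod_cast hp.pos)]

lemma mertens_pr0 : ∃ C : ℝ, 0 ≤ C ∧ ∀ t : ℝ, 1 ≤ t →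
    |∑ p ∈ pr 0 t, 1 / (p : ℝ) - Real.log t| ≤ C := by
  obtain ⟨C, hC, h⟩ := mertens2
  refine ⟨C + Real.log 4, by positivity, fun t ht => ?_⟩
  set b := ⌊Real.exp t⌋₊ with hb
  have he : 2 ≤ Real.exp t := by linarith [Real.add_one_le_exp t]
  have hb2 : 2 ≤ b := Nat.le_floor (by exact_mod_cast he)
  have hb2' : (2 : ℝ) ≤ b := by exact_mod_cast hb2
  have hsum : ∑ p ∈ pr 0 t, 1 / (p : ℝ) = ∑ k ∈ Finset.range (b + 1), aP k := by
    unfold aP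
    rw [← Finset.sum_filter]
    apply Finset.sum_congr _ (fun _ _ => rfl)
    ext p
    rw [mem_pr]
    simp only [Finset.mem_filter, Finset.mem_range, Nat.lt_succ_iff]
    constructor
    · rintro ⟨hp, _, h⟩
      exact ⟨Nat.le_floor (by rwa [← Real.log_le_iff_le_exp (by exact_mod_cast hp.pos)]), hp⟩
    · rintro ⟨h, hp⟩
      refine ⟨hp, Real.log_pos (by exact_mod_cast hp.one_lt), ?_⟩
      rw [Real.log_le_iff_le_exp (by exact_mod_cast hp.pos)]
      exact (Nat.le_floor_iff (by positivity)).1 h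
  have hub : Real.log b ≤ t := by
    rw [Real.log_le_iff_le_exp (by linarith)]; exact Nat.floor_le (by positivity)
  have hlb : t / 4 ≤ Real.log b := by
    rw [Real.le_log_iff_exp_le (by linarith)]
    have h1 : Real.exp t < b + 1 := Nat.lt_floor_add_one _
    have h2 : Real.exp t ≤ 2 * b := by linarith
    have h3 : 2 ≤ Real.exp (3 * t / 4) := by
      have h5 : Real.exp (Real.log 2) ≤ Real.exp (3 * t / 4) :=
        Real.exp_le_exp.2 (by linarith [Real.log_two_lt_d9])
      rwa [Real.exp_log (by norm_num)] at h5
    have h4 : Real.exp t = Real.exp (3 * t / 4) * Real.exp (t / 4) := by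
      rw [← Real.exp_add]; ring_nf
    have h5 : 2 * Real.exp (t / 4) ≤ Real.exp (3 * t / 4) * Real.exp (t / 4) := by gcongr
    linarith
  have hb0 : 0 < Real.log b := by linarith
  have l1 : Real.log (Real.log b) ≤ Real.log t := Real.log_le_log hb0 hub
  have l2 : Real.log t - Real.log 4 ≤ Real.log (Real.log b) := by
    rw [← Real.log_div (by linarith) (by norm_num)]
    exact Real.log_le_log (by linarith) hlb
  have := abs_le.1 (h b hb2)
  rw [hsum, abs_le]
  have hl4 : 0 ≤ Real.log 4 := by positivity
  constructor <;> linarith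

lemma pr_union {a b c : ℝ} (h1 : a ≤ b) (h2 : b ≤ c) : pr a b ∪ pr b c = pr a c := by
  ext p
  simp only [Finset.mem_union, mem_pr]
  constructor
  · rintro (⟨x, y, z⟩ | ⟨x, y, z⟩)
    · exact ⟨x, y, z.trans h2⟩
    · exact ⟨x, h1.trans_lt y, z⟩
  · rintro ⟨x, y, z⟩
    rcases le_or_gt (Real.log p) b with h | h
    · exact Or.inl ⟨x, y, h⟩
    · exact Or.inr ⟨x, h, z⟩

lemma pr_disjoint {a b c d : ℝ} (h : b ≤ c) : Disjoint (pr a b) (pr c d) := by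
  rw [Finset.disjoint_left]
  intro p hp hq
  rw [mem_pr] at hp hq
  linarith [hp.2.2, hq.2.1]

lemma mertens_pr : ∃ C : ℝ, 0 ≤ C ∧ ∀ s t : ℝ, 1 ≤ s → s ≤ t →
    |∑ p ∈ pr s t, 1 / (p : ℝ) - Real.log (t / s)| ≤ C := by
  obtain ⟨C, hC, h⟩ := mertens_pr0
  refine ⟨2 * C, by positivity, fun s t hs hst => ?_⟩
  have h1 := abs_le.1 (h s hs)
  have h2 := abs_le.1 (h t (hs.trans hst))
  rw [← pr_union (show (0:ℝ) ≤ s by linarith) hst, Finset.sum_union (pr_disjoint le_rfl)] at h2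
  rw [Real.log_div (by linarith) (by linarith), abs_le]
  constructor <;> linarith

/-! ### Primes in short logarithmic windows -/

lemma sum_log_le (s : Finset ℕ) (y : ℝ) (hy : 0 ≤ y)
    (hs : ∀ p ∈ s, p.Prime ∧ (p : ℝ) ≤ y) : ∑ p ∈ s, Real.log p ≤ Real.log 4 * y := by
  have := Chebyshev.theta_le_log4_mul_x hy
  rw [Chebyshev.theta_eq_sum_Icc] at this
  refine le_trans (Finset.sum_le_sum_of_subset_of_nonneg ?_ ?_) this
  · intro p hp
    simp only [Finset.mem_filter, Finset.mem_Icc]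
    exact ⟨⟨Nat.zero_le _, Nat.le_floor (hs p hp).2⟩, (hs p hp).1⟩
  · intro p hp _
    positivity

/-- Chebyshev's upper bound in short logarithmic windows. -/
lemma window_upper (s : Finset ℕ) (T a δ : ℝ) (hT : 0 < T)
    (hs : ∀ p ∈ s, p.Prime ∧ T < Real.log p ∧ |Real.log p - a| < δ) :
    ∑ p ∈ s, 1 / (p : ℝ) ≤ Real.log 4 * Real.exp (2 * δ) / T := by
  have h1 : ∑ p ∈ s, Real.log p ≤ Real.log 4 * Real.exp (a + δ) := by
    apply sum_log_le _ _ (by positivity)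
    intro p hp
    obtain ⟨hp, h1, h2⟩ := hs p hp
    refine ⟨hp, ?_⟩
    rw [← Real.log_le_iff_le_exp (by exact_mod_cast hp.pos)]
    linarith [(abs_lt.1 h2).2]
  have h2 : ∀ p ∈ s, 1 / (p : ℝ) ≤ Real.log p * (Real.exp (δ - a) / T) := by
    intro p hp
    obtain ⟨hp, h1, h2⟩ := hs p hp
    have hp0 : (0 : ℝ) < p := by exact_mod_cast hp.pos
    have h3 : 1 / (p : ℝ) ≤ Real.exp (δ - a) := by
      rw [show (p : ℝ) = Real.exp (Real.log p) by rw [Real.exp_log hp0], one_div, ← Real.exp_neg]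
      apply Real.exp_le_exp.2
      linarith [(abs_lt.1 h2).1]
    calc 1 / (p : ℝ) ≤ Real.exp (δ - a) := h3
      _ = T * (Real.exp (δ - a) / T) := by field_simp
      _ ≤ _ := by gcongr
  calc ∑ p ∈ s, 1 / (p : ℝ) ≤ ∑ p ∈ s, Real.log p * (Real.exp (δ - a) / T) := Finset.sum_le_sum h2
    _ = (∑ p ∈ s, Real.log p) * (Real.exp (δ - a) / T) := by rw [Finset.sum_mul]
    _ ≤ Real.log 4 * Real.exp (a + δ) * (Real.exp (δ - a) / T) := by gcongr
    _ = Real.log 4 * (Real.exp (a + δ) * Real.exp (δ - a)) / T := by ring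
    _ = _ := by rw [← Real.exp_add]; ring_nf

/-- Chebyshev's lower bound for `θ`, with the constant `log 2`. -/
lemma theta_lower (η : ℝ) (hη : 0 < η) :
    ∀ᶠ z : ℝ in atTop, (Real.log 2 - η) * z ≤ Chebyshev.theta z := by
  have h := (isLittleO_log_rpow_atTop (show (0 : ℝ) < 1 / 2 by norm_num)).bound
    (show (0 : ℝ) < η / 6 by positivity)
  filter_upwards [h, eventually_ge_atTop 3] with z hz h3
  have hl : 1 ≤ Real.log z := by
    rw [Real.le_log_iff_exp_le (by linarith)]
    linarith [Real.exp_one_lt_d9]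
  rw [Real.norm_of_nonneg (by linarith), Real.norm_of_nonneg (by positivity), ← Real.sqrt_eq_rpow] at hz
  have hsq : 1 ≤ √z := by rw [Real.one_le_sqrt]; linarith
  have hmul : √z * √z = z := Real.mul_self_sqrt (by linarith)
  have h4 : √z * Real.log z ≤ η / 6 * z := by
    calc √z * Real.log z ≤ √z * (η / 6 * √z) := by gcongr
      _ = η / 6 * (√z * √z) := by ring
      _ = _ := by rw [hmul]
  have h5 : Real.log z ≤ √z * Real.log z := by nlinarith
  have h6 : Real.log (z + 2) ≤ 2 * Real.log z := by
    have e2 : 2 * Real.log z = Real.log (z ^ 2) := by rw [Real.log_pow]; norm_num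
    rw [e2]
    exact Real.log_le_log (by linarith) (by nlinarith)
  have h7 := Chebyshev.theta_ge' (x := z) (by linarith)
  have h8 : Real.log 2 ≤ Real.log z := Real.log_le_log (by norm_num) (by linarith)
  nlinarith

/-- Chebyshev's lower bound in the logarithmic window of half-width `log 2`. -/
lemma window_lower : ∃ c a₀ : ℝ, 0 < c ∧ 1 ≤ a₀ ∧ ∀ a : ℝ, a₀ ≤ a → ∀ s : Finset ℕ,
    (∀ p : ℕ, p.Prime → |Real.log p - a| < Real.log 2 → p ∈ s) →
    c / a ≤ ∑ p ∈ s, 1 / (p : ℝ) := by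
  have h1 := theta_lower (1/10) (by norm_num)
  obtain ⟨z₀, hz⟩ := (eventually_atTop.1 h1)
  refine ⟨1 / 80, max 1 (Real.log (max z₀ 1)), by norm_num, le_max_left _ _, ?_⟩
  intro a ha s hs
  have ha1 : 1 ≤ a := (le_max_left _ _).trans ha
  have hza : z₀ ≤ Real.exp a := by
    refine (le_max_left z₀ 1).trans ?_
    rw [← Real.log_le_iff_le_exp (by positivity)]
    exact (le_max_right _ _).trans ha
  set y := Real.exp a with hy
  have hy0 : 0 < y := Real.exp_pos a
  -- The window is `(y / 2, 1.9 * y]`: here `(log 2 - 1 / 10) * 1.9 > (log 4) / 2`, so the lower bound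
  -- for `θ` beats the upper bound for the primes up to `y / 2`.
  have h2 := hz (1.9 * y) (by linarith)
  have hl2 := Real.log_two_gt_d9
  have hl2' := Real.log_two_lt_d9
  have hl4 : Real.log 4 = 2 * Real.log 2 := by
    rw [show (4 : ℝ) = 2 ^ 2 by norm_num, Real.log_pow]; norm_num
  rw [Chebyshev.theta_eq_sum_Icc] at h2
  set P := (Finset.Icc 0 ⌊1.9 * y⌋₊).filter Nat.Prime with hP
  have hPm : ∀ p ∈ P, p.Prime ∧ (p : ℝ) ≤ 1.9 * y := by
    intro p hp
    simp only [hP, Finset.mem_filter, Finset.mem_Icc] at hp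
    exact ⟨hp.2, (Nat.le_floor_iff (by positivity)).1 hp.1.2⟩
  have h3 : ∑ p ∈ P.filter (fun p : ℕ => (p : ℝ) ≤ y / 2), Real.log p ≤ Real.log 4 * (y / 2) := by
    apply sum_log_le _ _ (by positivity)
    intro p hp
    rw [Finset.mem_filter] at hp
    exact ⟨(hPm p hp.1).1, hp.2⟩
  have h4 := Finset.sum_filter_add_sum_filter_not P (fun p : ℕ => (p : ℝ) ≤ y / 2)
    (fun p => Real.log p)
  set Q := P.filter (fun p : ℕ => ¬ (p : ℝ) ≤ y / 2) with hQ
  have h5 : y / 10 ≤ ∑ p ∈ Q, Real.log p := by nlinarith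
  have hQs : Q ⊆ s := by
    intro p hp
    rw [hQ, Finset.mem_filter] at hp
    obtain ⟨hpp, hple⟩ := hPm p hp.1
    have hp0 : (0 : ℝ) < p := by exact_mod_cast hpp.pos
    apply hs p hpp
    have e1 : Real.log y = a := Real.log_exp a
    rw [abs_lt]
    constructor
    · have : Real.log (y / 2) < Real.log p := Real.log_lt_log (by positivity) (not_le.1 hp.2)
      rw [Real.log_div (by positivity) (by norm_num), e1] at this
      linarith
    · have : Real.log p < Real.log (2 * y) := Real.log_lt_log hp0 (by linarith)
      rw [Real.log_mul (by norm_num) (by positivity), e1] at this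
      linarith
  have h6 : ∀ p ∈ Q, Real.log p * (1 / (1.9 * y * (2 * a))) ≤ 1 / (p : ℝ) := by
    intro p hp
    rw [hQ, Finset.mem_filter] at hp
    obtain ⟨hpp, hple⟩ := hPm p hp.1
    have hp0 : (0 : ℝ) < p := by exact_mod_cast hpp.pos
    have h7 : Real.log p ≤ 2 * a := by
      have : Real.log p ≤ Real.log (2 * y) := Real.log_le_log hp0 (by linarith)
      rw [Real.log_mul (by norm_num) (by positivity), hy, Real.log_exp] at this
      linarith
    rw [mul_one_div, div_le_div_iff₀ (by positivity) hp0]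
    have hlp : 0 ≤ Real.log p := Real.log_nonneg (by exact_mod_cast hpp.one_le)
    calc Real.log p * p ≤ 2 * a * (1.9 * y) := by gcongr
      _ = _ := by ring
  calc 1 / 80 / a ≤ y / 10 * (1 / (1.9 * y * (2 * a))) := by
        rw [div_le_iff₀ (by linarith)]
        have : y / 10 * (1 / (1.9 * y * (2 * a))) * a = 1 / 38 := by field_simp; norm_num
        rw [this]; norm_num
    _ ≤ (∑ p ∈ Q, Real.log p) * (1 / (1.9 * y * (2 * a))) := by gcongr
    _ = ∑ p ∈ Q, Real.log p * (1 / (1.9 * y * (2 * a))) := by rw [Finset.sum_mul]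
    _ ≤ ∑ p ∈ Q, 1 / (p : ℝ) := Finset.sum_le_sum h6
    _ ≤ _ := Finset.sum_le_sum_of_subset_of_nonneg hQs (fun _ _ _ => by positivity)

/-! ### Weighted sums over finite sets of primes -/

/-- The weight `1 / ∏ S` of a finite set of primes. -/
noncomputable def wt (S : Finset ℕ) : ℝ := ∏ p ∈ S, 1 / (p : ℝ)

/-- The sum of `f` over all subsets `S` of `P`, weighted by `wt S`. Divided by `Zf P` this is the
expectation of `f` over the random set containing each `p ∈ P` independently with probability
`1 / (p + 1)`. -/
noncomputable def W (P : Finset ℕ) (f : Finset ℕ → ℝ) : ℝ := ∑ S ∈ P.powerset, wt S * f S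

/-- The total mass `∏ (1 + 1 / p)` of the weight `wt` on the subsets of `P`. -/
noncomputable def Zf (P : Finset ℕ) : ℝ := ∏ p ∈ P, (1 + 1 / (p : ℝ))

lemma wt_nonneg (S : Finset ℕ) : 0 ≤ wt S := Finset.prod_nonneg (fun _ _ => by positivity)

lemma Zf_ge_one (P : Finset ℕ) : 1 ≤ Zf P := by
  unfold Zf
  calc (1 : ℝ) = ∏ p ∈ P, 1 := by simp
    _ ≤ _ := Finset.prod_le_prod (fun _ _ => zero_le_one)
      (fun p _ => le_add_of_nonneg_right (by positivity))

lemma Zf_pos (P : Finset ℕ) : 0 < Zf P := by linarith [Zf_ge_one P]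

lemma wt_insert {S : Finset ℕ} {p : ℕ} (h : p ∉ S) : wt (insert p S) = 1 / (p : ℝ) * wt S := by
  unfold wt; rw [Finset.prod_insert h]

lemma W_mono {P : Finset ℕ} {f g : Finset ℕ → ℝ} (h : ∀ S, S ⊆ P → f S ≤ g S) : W P f ≤ W P g := by
  unfold W
  apply Finset.sum_le_sum
  intro S hS
  exact mul_le_mul_of_nonneg_left (h S (Finset.mem_powerset.1 hS)) (wt_nonneg S)

lemma W_congr {P : Finset ℕ} {f g : Finset ℕ → ℝ} (h : ∀ S, S ⊆ P → f S = g S) : W P f = W P g :=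
  le_antisymm (W_mono (fun S hS => (h S hS).le)) (W_mono (fun S hS => (h S hS).ge))

lemma W_nonneg {P : Finset ℕ} {f : Finset ℕ → ℝ} (h : ∀ S, S ⊆ P → 0 ≤ f S) : 0 ≤ W P f := by
  unfold W
  apply Finset.sum_nonneg
  intro S hS
  exact mul_nonneg (wt_nonneg S) (h S (Finset.mem_powerset.1 hS))

lemma W_add (P : Finset ℕ) (f g : Finset ℕ → ℝ) : W P (fun S => f S + g S) = W P f + W P g := by
  unfold W; rw [← Finset.sum_add_distrib]; exact Finset.sum_congr rfl (fun _ _ => by ring)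

lemma W_sub (P : Finset ℕ) (f g : Finset ℕ → ℝ) : W P (fun S => f S - g S) = W P f - W P g := by
  unfold W; rw [← Finset.sum_sub_distrib]; exact Finset.sum_congr rfl (fun _ _ => by ring)

lemma W_mul (P : Finset ℕ) (c : ℝ) (f : Finset ℕ → ℝ) : W P (fun S => c * f S) = c * W P f := by
  unfold W; rw [Finset.mul_sum]; exact Finset.sum_congr rfl (fun _ _ => by ring)

lemma W_insert {P : Finset ℕ} {p : ℕ} (h : p ∉ P) (f : Finset ℕ → ℝ) :
    W (insert p P) f = W P f + 1 / (p : ℝ) * W P (fun S => f (insert p S)) := by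
  unfold W
  rw [Finset.sum_powerset_insert h, Finset.mul_sum]
  congr 1
  apply Finset.sum_congr rfl
  intro S hS
  rw [wt_insert (fun hp => h (Finset.mem_powerset.1 hS hp))]; ring

lemma W_empty (f : Finset ℕ → ℝ) : W ∅ f = f ∅ := by simp [W, wt]

lemma W_union {A B : Finset ℕ} (h : Disjoint A B) (f : Finset ℕ → ℝ) :
    W (A ∪ B) f = W A (fun S => W B (fun T => f (S ∪ T))) := by
  induction B using Finset.induction_on generalizing f with
  | empty => simp [W_empty]
  | insert b B hb ih =>
    rw [Finset.disjoint_insert_right] at h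
    rw [Finset.union_insert, W_insert (by simp [h.1, hb]), ih h.2, ih h.2, ← W_mul, ← W_add]
    apply W_congr
    intro S _
    rw [W_insert hb]
    simp only [Finset.union_insert]

lemma W_prod (P : Finset ℕ) (g : ℕ → ℝ) :
    W P (fun S => ∏ p ∈ S, g p) = ∏ p ∈ P, (1 + g p / p) := by
  rw [Finset.prod_one_add, W]
  apply Finset.sum_congr rfl
  intro S _
  rw [wt, ← Finset.prod_mul_distrib]
  exact Finset.prod_congr rfl (fun _ _ => by ring)

lemma W_one (P : Finset ℕ) : W P (fun _ => 1) = Zf P := by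
  have := W_prod P (fun _ => 1)
  simpa [Zf] using this

lemma W_const (P : Finset ℕ) (c : ℝ) : W P (fun _ => c) = c * Zf P := by
  rw [← W_one, ← W_mul]; simp

/-- Palm identity: summing over a set together with one of its elements is summing over a set
together with one outside element. -/
lemma W_palm (P : Finset ℕ) (f : Finset ℕ → ℕ → ℝ) :
    W P (fun S => ∑ p ∈ S, f (S.erase p) p) = W P (fun S => ∑ p ∈ P \ S, 1 / (p : ℝ) * f S p) := by
  unfold W
  simp only [Finset.mul_sum]
  rw [Finset.sum_sigma', Finset.sum_sigma']
  refine Finset.sum_nbij' (fun x => ⟨x.1.erase x.2, x.2⟩) (fun x => ⟨insert x.2 x.1, x.2⟩) ?_ ?_ ?_ ?_ ?_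
  · rintro ⟨S, p⟩ h
    simp only [Finset.mem_sigma, Finset.mem_powerset, Finset.mem_sdiff] at h ⊢
    exact ⟨(Finset.erase_subset _ _).trans h.1, h.1 h.2, Finset.notMem_erase _ _⟩
  · rintro ⟨S, p⟩ h
    simp only [Finset.mem_sigma, Finset.mem_powerset, Finset.mem_sdiff] at h ⊢
    exact ⟨Finset.insert_subset h.2.1 h.1, Finset.mem_insert_self _ _⟩
  · rintro ⟨S, p⟩ h
    simp only [Finset.mem_sigma] at h
    simp [Finset.insert_erase h.2]
  · rintro ⟨S, p⟩ h
    simp only [Finset.mem_sigma, Finset.mem_sdiff] at h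
    simp [Finset.erase_insert h.2.2]
  · rintro ⟨S, p⟩ h
    simp only [Finset.mem_sigma] at h ⊢
    have : wt S = 1 / (p : ℝ) * wt (S.erase p) := by
      rw [← wt_insert (Finset.notMem_erase p S), Finset.insert_erase h.2]
    rw [this]; ring

lemma Zf_union {A B : Finset ℕ} (h : Disjoint A B) : Zf (A ∪ B) = Zf A * Zf B := by
  unfold Zf; rw [Finset.prod_union h]

lemma Zf_le_exp (P : Finset ℕ) : Zf P ≤ Real.exp (∑ p ∈ P, 1 / (p : ℝ)) :=
  Real.prod_one_add_le_exp_sum _ (fun _ => by positivity)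

lemma Zf_mono {P Q : Finset ℕ} (h : P ⊆ Q) : Zf P ≤ Zf Q := by
  rw [← Finset.union_sdiff_of_subset h, Zf_union Finset.disjoint_sdiff]
  exact le_mul_of_one_le_right (Zf_pos P).le (Zf_ge_one _)

/-! ### Reduction of the counting function to squarefree integers -/

/-- `n` has no divisor in `E`. -/
def RR (n : ℕ) : Prop := ¬ ∃ e ∈ Eset, e ∣ n

lemma RR_of_dvd {m n : ℕ} (h : m ∣ n) (hn : RR n) : RR m :=
  fun ⟨e, he, hem⟩ => hn ⟨e, he, hem.trans h⟩

/-- The indicator function of the sets of primes whose product has no divisor in `E`. -/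
noncomputable def I (S : Finset ℕ) : ℝ := if RR (∏ p ∈ S, p) then 1 else 0

lemma I_nonneg (S : Finset ℕ) : 0 ≤ I S := by unfold I; split_ifs <;> norm_num

lemma I_le_one (S : Finset ℕ) : I S ≤ 1 := by unfold I; split_ifs <;> norm_num

lemma I_anti {S T : Finset ℕ} (h : S ⊆ T) : I T ≤ I S := by
  unfold I
  by_cases hT : RR (∏ p ∈ T, p)
  · rw [if_pos hT, if_pos (RR_of_dvd (Finset.prod_dvd_prod_of_subset _ _ _ h) hT)]
  · rw [if_neg hT]; split_ifs <;> norm_num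

/-- The integers `1 ≤ n ≤ x` without divisor in `E`. -/
noncomputable def Rs (x : ℕ) : Finset ℕ := (Finset.Icc 1 x).filter RR

lemma mem_Rs {x n : ℕ} : n ∈ Rs x ↔ (1 ≤ n ∧ n ≤ x) ∧ RR n := by simp [Rs]

lemma Rcount_eq (x : ℕ) : Rcount x = (Rs x).card := by
  unfold Rcount Rs RR; congr

/-- The set of `n` without divisor in `E` is closed under taking divisors, so that `log = Λ * 1` and
Chebyshev's bound for `ψ` convert the sum of `log n` into a sum of reciprocals. -/
lemma sum_log_Rs (x : ℕ) :
    ∑ n ∈ Rs x, Real.log n ≤ (Real.log 4 + 4) * x * ∑ m ∈ Rs x, 1 / (m : ℝ) := by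
  have h1 : ∀ n ∈ Rs x, Real.log n = ∑ m ∈ Rs x, if m ∣ n then ArithmeticFunction.vonMangoldt (n / m) else 0 := by
    intro n hn
    rw [mem_Rs] at hn
    rw [← ArithmeticFunction.vonMangoldt_sum, ← Nat.sum_div_divisors, ← Finset.sum_filter]
    apply Finset.sum_congr _ (fun _ _ => rfl)
    ext m
    simp only [Nat.mem_divisors, Finset.mem_filter, mem_Rs]
    constructor
    · rintro ⟨h, hn0⟩
      exact ⟨⟨⟨Nat.pos_of_dvd_of_pos h (by omega), (Nat.le_of_dvd (by omega) h).trans hn.1.2⟩,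
        RR_of_dvd h hn.2⟩, h⟩
    · rintro ⟨_, h⟩
      exact ⟨h, by omega⟩
  rw [Finset.sum_congr rfl h1, Finset.sum_comm, Finset.mul_sum]
  apply Finset.sum_le_sum
  intro m hm
  rw [mem_Rs] at hm
  rw [← Finset.sum_filter]
  have hm0 : 0 < m := by omega
  have h2 : ∑ n ∈ (Rs x).filter (fun n => m ∣ n), ArithmeticFunction.vonMangoldt (n / m) =
      ∑ k ∈ ((Rs x).filter (fun n => m ∣ n)).image (fun n => n / m), ArithmeticFunction.vonMangoldt k := by
    rw [Finset.sum_image]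
    intro a ha b hb hab
    rw [Finset.mem_coe, Finset.mem_filter] at ha hb
    exact (Nat.div_left_inj ha.2 hb.2).1 hab
  rw [h2]
  have h3 := Chebyshev.psi_le_const_mul_self (x := (x : ℝ) / m) (by positivity)
  calc _ ≤ Chebyshev.psi ((x : ℝ) / m) := by
        unfold Chebyshev.psi
        apply Finset.sum_le_sum_of_subset_of_nonneg
        · intro k hk
          simp only [Finset.mem_image, Finset.mem_filter, mem_Rs] at hk
          obtain ⟨n, ⟨hn, hmn⟩, rfl⟩ := hk
          rw [Finset.mem_Ioc]
          refine ⟨Nat.div_pos (Nat.le_of_dvd (by omega) hmn) hm0, ?_⟩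
          rw [Nat.floor_div_natCast, Nat.floor_natCast]
          exact Nat.div_le_div_right hn.1.2
        · intro _ _ _
          exact ArithmeticFunction.vonMangoldt_nonneg
    _ ≤ _ := h3
    _ = _ := by ring

/-- Writing `m = b ^ 2 * a` with `a` squarefree, the squares contribute only a constant factor. -/
lemma sum_inv_Rs (x : ℕ) :
    ∑ m ∈ Rs x, 1 / (m : ℝ) ≤ (∑' n : ℕ, 1 / (n : ℝ) ^ 2) * W (pr 0 (Real.log x)) I := by
  have hex : ∀ m : ℕ, ∃ a b : ℕ, 0 < m → (0 < a ∧ 0 < b ∧ b ^ 2 * a = m ∧ Squarefree a) := by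
    intro m
    by_cases hm : 0 < m
    · obtain ⟨a, b, h⟩ := Nat.sq_mul_squarefree_of_pos hm
      exact ⟨a, b, fun _ => h⟩
    · exact ⟨0, 0, fun h => absurd h hm⟩
  choose a b hab using hex
  have hsum : Summable (fun n : ℕ => 1 / (n : ℝ) ^ 2) := Real.summable_one_div_nat_pow.2 (by norm_num)
  have hpa : ∀ m, 0 < m → ∏ p ∈ (a m).primeFactors, p = a m := fun m hm =>
    Nat.prod_primeFactors_of_squarefree (hab m hm).2.2.2
  set F : ℕ × Finset ℕ → ℝ := fun y => 1 / (y.1 : ℝ) ^ 2 * (wt y.2 * I y.2) with hF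
  set φ : ℕ → ℕ × Finset ℕ := fun m => (b m, (a m).primeFactors) with hφ
  have h1 : ∀ m ∈ Rs x, 1 / (m : ℝ) = F (φ m) := by
    intro m hm
    rw [mem_Rs] at hm
    have hm0 : 0 < m := by omega
    obtain ⟨ha, hb, hm', hsq⟩ := hab m hm0
    have hI : I (a m).primeFactors = 1 := by
      unfold I
      rw [hpa m hm0, if_pos]
      exact RR_of_dvd (Dvd.intro_left _ hm') hm.2
    have hw : wt (a m).primeFactors = 1 / (a m : ℝ) := by
      unfold wt
      rw [Finset.prod_div_distrib]
      simp only [Finset.prod_const_one]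
      rw [← Nat.cast_prod, hpa m hm0]
    simp only [hF, hφ]
    rw [hI, hw, mul_one, one_div_mul_one_div]
    congr 1
    exact_mod_cast hm'.symm
  have hinj : Set.InjOn φ (Rs x) := by
    intro m hm n hn h
    rw [Finset.mem_coe, mem_Rs] at hm hn
    simp only [hφ, Prod.mk.injEq] at h
    have e1 : a m = a n := by rw [← hpa m (by omega), ← hpa n (by omega), h.2]
    rw [← (hab m (by omega)).2.2.1, ← (hab n (by omega)).2.2.1, e1, h.1]
  rw [Finset.sum_congr rfl h1, ← Finset.sum_image hinj]
  have hsub : (Rs x).image φ ⊆ (Finset.Icc 1 x) ×ˢ (pr 0 (Real.log x)).powerset := by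
    intro y hy
    simp only [Finset.mem_image] at hy
    obtain ⟨m, hm, rfl⟩ := hy
    rw [mem_Rs] at hm
    have hm0 : 0 < m := by omega
    obtain ⟨ha, hb, hm', hsq⟩ := hab m hm0
    simp only [hφ, Finset.mem_product, Finset.mem_Icc, Finset.mem_powerset]
    refine ⟨⟨hb, ?_⟩, ?_⟩
    · have : b m ≤ m := by
        calc b m ≤ b m ^ 2 * a m := by nlinarith
          _ = m := hm'
      omega
    · intro p hp
      rw [Nat.mem_primeFactors] at hp
      have hpm : p ∣ m := hp.2.1.trans (Dvd.intro_left _ hm')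
      have hle : p ≤ x := (Nat.le_of_dvd hm0 hpm).trans hm.1.2
      rw [mem_pr]
      refine ⟨hp.1, Real.log_pos (by exact_mod_cast hp.1.one_lt), ?_⟩
      exact Real.log_le_log (by exact_mod_cast hp.1.pos) (by exact_mod_cast hle)
  refine (Finset.sum_le_sum_of_subset_of_nonneg hsub ?_).trans ?_
  · intro y _ _
    exact mul_nonneg (by positivity) (mul_nonneg (wt_nonneg _) (I_nonneg _))
  · rw [Finset.sum_product]
    simp only [hF]
    have : ∀ n ∈ Finset.Icc 1 x, ∑ S ∈ (pr 0 (Real.log x)).powerset, 1 / (n : ℝ) ^ 2 * (wt S * I S)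
        = 1 / (n : ℝ) ^ 2 * W (pr 0 (Real.log x)) I := by
      intro n _
      rw [W, Finset.mul_sum]
    rw [Finset.sum_congr rfl this, ← Finset.sum_mul]
    apply mul_le_mul_of_nonneg_right _ (W_nonneg (fun S _ => I_nonneg S))
    exact hsum.sum_le_tsum _ (fun _ _ => by positivity)

/-- Dropping the constraints coming from the primes of `A`. -/
lemma W_I_union {A B : Finset ℕ} (h : Disjoint A B) : W (A ∪ B) I ≤ Zf A * W B I := by
  rw [W_union h, mul_comm, ← W_const]
  apply W_mono
  intro S _
  apply W_mono
  intro T _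
  exact I_anti Finset.subset_union_right

/-- For any set `B` of primes at most `x`, the count is controlled by the proportion, in weight, of
the subsets of `B` whose product has no divisor in `E`. -/
lemma Rcount_le : ∃ C : ℝ, 0 ≤ C ∧ ∀ x : ℕ, 3 ≤ x → ∀ B : Finset ℕ, B ⊆ pr 0 (Real.log x) →
    (Rcount x : ℝ) ≤ √x + C * x * (W B I / Zf B) := by
  obtain ⟨C, hC, hmer⟩ := mertens_pr0
  set ζ := ∑' n : ℕ, 1 / (n : ℝ) ^ 2 with hζ
  have hζ0 : 0 ≤ ζ := tsum_nonneg (fun _ => by positivity)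
  refine ⟨2 * ((Real.log 4 + 4) * ζ * Real.exp C), by positivity, ?_⟩
  intro x hx B hB
  have hx3 : (3 : ℝ) ≤ x := by exact_mod_cast hx
  have hl : 1 ≤ Real.log x := by
    rw [Real.le_log_iff_exp_le (by linarith)]
    linarith [Real.exp_one_lt_d9]
  set P := pr 0 (Real.log x) with hP
  have hZP : Zf P ≤ Real.exp C * Real.log x := by
    refine (Zf_le_exp P).trans ?_
    have := (abs_le.1 (hmer (Real.log x) hl)).2
    calc _ ≤ Real.exp (C + Real.log (Real.log x)) := Real.exp_le_exp.2 (by linarith)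
      _ = _ := by rw [Real.exp_add, Real.exp_log (by linarith)]
  have hWB0 : 0 ≤ W B I := W_nonneg (fun S _ => I_nonneg S)
  have hWP : W P I ≤ Zf P * (W B I / Zf B) := by
    rw [← Finset.sdiff_union_of_subset hB]
    refine (W_I_union Finset.sdiff_disjoint).trans ?_
    rw [Zf_union Finset.sdiff_disjoint]
    have := Zf_pos B
    rw [mul_assoc, mul_div_cancel₀ _ this.ne']
  have h1 : ∑ n ∈ Rs x, Real.log n ≤
      (Real.log 4 + 4) * x * (ζ * (Real.exp C * Real.log x * (W B I / Zf B))) := by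
    refine (sum_log_Rs x).trans ?_
    have := Zf_pos B
    have h4 : 0 ≤ Real.log 4 := by positivity
    gcongr
    refine (sum_inv_Rs x).trans ?_
    gcongr
    refine hWP.trans ?_
    gcongr
  -- The `n ≤ √x` are counted trivially; the others satisfy `log n ≥ (log x) / 2`.
  have h2 := Finset.card_filter_add_card_filter_not (s := Rs x) (fun n : ℕ => (n : ℝ) ≤ √x)
  have h3 : (((Rs x).filter (fun n : ℕ => (n : ℝ) ≤ √x)).card : ℝ) ≤ √x := by
    have : (Rs x).filter (fun n : ℕ => (n : ℝ) ≤ √x) ⊆ Finset.Icc 1 ⌊√x⌋₊ := by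
      intro n hn
      rw [Finset.mem_filter, mem_Rs] at hn
      rw [Finset.mem_Icc]
      exact ⟨hn.1.1.1, Nat.le_floor hn.2⟩
    have := Finset.card_le_card this
    rw [Nat.card_Icc, Nat.add_sub_cancel] at this
    exact (Nat.cast_le.2 this).trans (Nat.floor_le (by positivity))
  set Q := (Rs x).filter (fun n : ℕ => ¬ (n : ℝ) ≤ √x) with hQ
  have h4 : (Q.card : ℝ) * (Real.log x / 2) ≤ ∑ n ∈ Rs x, Real.log n := by
    calc (Q.card : ℝ) * (Real.log x / 2) = ∑ n ∈ Q, Real.log x / 2 := by simp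
      _ ≤ ∑ n ∈ Q, Real.log n := by
        apply Finset.sum_le_sum
        intro n hn
        rw [hQ, Finset.mem_filter, not_le] at hn
        rw [← Real.log_sqrt (by linarith)]
        exact Real.log_le_log (by positivity) hn.2.le
      _ ≤ _ := by
        apply Finset.sum_le_sum_of_subset_of_nonneg (Finset.filter_subset _ _)
        intro n hn _
        rw [mem_Rs] at hn
        exact Real.log_nonneg (by exact_mod_cast hn.1.1)
  have h5 : (Q.card : ℝ) ≤ 2 * ((Real.log 4 + 4) * ζ * Real.exp C) * x * (W B I / Zf B) := by
    have h6 := h4.trans h1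
    have h7 : (Q.card : ℝ) * (Real.log x / 2) ≤
        (2 * ((Real.log 4 + 4) * ζ * Real.exp C) * x * (W B I / Zf B)) * (Real.log x / 2) := by
      refine h6.trans (le_of_eq ?_)
      ring
    exact le_of_mul_le_mul_right h7 (by linarith)
  rw [Rcount_eq, ← h2]
  push_cast
  linarith

/-! ### Divisors in `E` as near-coincidences of prime products -/

lemma log_prod_primes (A : Finset ℕ) (hA : ∀ p ∈ A, p.Prime) :
    Real.log ((∏ p ∈ A, p : ℕ) : ℝ) = ∑ p ∈ A, Real.log p := by
  push_cast
  rw [Real.log_prod]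
  intro p hp
  exact_mod_cast (hA p hp).ne_zero

lemma primeFactors_prod_primes (A : Finset ℕ) (hA : ∀ p ∈ A, p.Prime) :
    (∏ p ∈ A, p).primeFactors = A := Nat.primeFactors_prod hA

/-- Two disjoint sets of primes in `S` whose products are within a factor `2` yield a divisor of
`∏ S` in `E`: the two products differ by unique factorization. -/
lemma not_RR_of {S A D : Finset ℕ} (hS : ∀ p ∈ S, p.Prime) (hA : A ⊆ S) (hD : D ⊆ S)
    (hAD : Disjoint A D) (hne : (A ∪ D).Nonempty)
    (h : |∑ p ∈ A, Real.log p - ∑ p ∈ D, Real.log p| < Real.log 2) : ¬ RR (∏ p ∈ S, p) := by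
  wlog hle : ∏ p ∈ A, p ≤ ∏ p ∈ D, p generalizing A D
  · exact this hD hA hAD.symm (by rwa [Finset.union_comm]) (by rwa [abs_sub_comm]) (by omega)
  have hA' : ∀ p ∈ A, p.Prime := fun p hp => hS p (hA hp)
  have hD' : ∀ p ∈ D, p.Prime := fun p hp => hS p (hD hp)
  have hA0 : 0 < ∏ p ∈ A, p := Finset.prod_pos (fun p hp => (hA' p hp).pos)
  have hD0 : 0 < ∏ p ∈ D, p := Finset.prod_pos (fun p hp => (hD' p hp).pos)
  have hneq : ∏ p ∈ A, p ≠ ∏ p ∈ D, p := by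
    intro he
    have : A = D := by
      rw [← primeFactors_prod_primes A hA', he, primeFactors_prod_primes D hD']
    subst this
    rw [disjoint_self] at hAD
    simp only [Finset.bot_eq_empty] at hAD
    subst hAD
    simp at hne
  intro hR
  apply hR
  refine ⟨(∏ p ∈ A, p) * ∏ p ∈ D, p, ⟨_, _, hA0, lt_of_le_of_ne hle hneq, ?_, rfl⟩, ?_⟩
  · rw [← log_prod_primes A hA', ← log_prod_primes D hD'] at h
    have h1 := (abs_lt.1 h).1
    have hA0' : (0 : ℝ) < ((∏ p ∈ A, p : ℕ) : ℝ) := by exact_mod_cast hA0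
    have hD0' : (0 : ℝ) < ((∏ p ∈ D, p : ℕ) : ℝ) := by exact_mod_cast hD0
    have h2 : Real.log ((∏ p ∈ D, p : ℕ) : ℝ) < Real.log (2 * ((∏ p ∈ A, p : ℕ) : ℝ)) := by
      rw [Real.log_mul (by norm_num) hA0'.ne']; linarith
    have := (Real.log_lt_log_iff hD0' (by positivity)).1 h2
    exact_mod_cast this
  · rw [← Finset.prod_union hAD]
    exact Finset.prod_dvd_prod_of_subset _ _ _ (Finset.union_subset hA hD)

/-- Converse of `not_RR_of`: dividing `d` and `d'` by their gcd makes the two sets of primes disjoint. -/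
lemma exists_of_not_RR {S : Finset ℕ} (hS : ∀ p ∈ S, p.Prime) (h : ¬ RR (∏ p ∈ S, p)) :
    ∃ A D : Finset ℕ, A ⊆ S ∧ D ⊆ S ∧ Disjoint A D ∧ (A ∪ D).Nonempty ∧
      |∑ p ∈ A, Real.log p - ∑ p ∈ D, Real.log p| < Real.log 2 := by
  unfold RR at h
  rw [not_not] at h
  obtain ⟨e, ⟨d, d', hd0, hdd', hd2, rfl⟩, hdvd⟩ := h
  have hsq : Squarefree (∏ p ∈ S, p) :=
    Finset.squarefree_prod_of_pairwise_isCoprime (fun p hp q hq hpq => by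
      have := (Nat.coprime_primes (hS p hp) (hS q hq)).2 hpq
      exact Nat.coprime_iff_isRelPrime.1 this) (fun p hp => (hS p hp).prime.squarefree)
  have hn0 : ∏ p ∈ S, p ≠ 0 := (Finset.prod_pos (fun p hp => (hS p hp).pos)).ne'
  have hsq' : Squarefree (d * d') := hsq.squarefree_of_dvd hdvd
  have hcop : Nat.Coprime d d' := (Nat.squarefree_mul_iff.1 hsq').1
  have hsd := (Nat.squarefree_mul_iff.1 hsq').2.1
  have hsd' := (Nat.squarefree_mul_iff.1 hsq').2.2
  have hsub : ∀ m, m ∣ ∏ p ∈ S, p → m.primeFactors ⊆ S := by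
    intro m hm
    have := Nat.primeFactors_mono hm hn0
    rwa [primeFactors_prod_primes S hS] at this
  have hlog : ∀ m : ℕ, Squarefree m → ∑ p ∈ m.primeFactors, Real.log p = Real.log m := by
    intro m hm
    rw [← log_prod_primes _ (fun p hp => Nat.prime_of_mem_primeFactors hp),
      Nat.prod_primeFactors_of_squarefree hm]
  refine ⟨d.primeFactors, d'.primeFactors, hsub _ ((dvd_mul_right _ _).trans hdvd),
    hsub _ ((dvd_mul_left _ _).trans hdvd), hcop.disjoint_primeFactors, ?_, ?_⟩
  · obtain ⟨p, hp, hpd⟩ := Nat.exists_prime_and_dvd (show d' ≠ 1 by omega)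
    exact ⟨p, Finset.mem_union_right _ (Nat.mem_primeFactors.2 ⟨hp, hpd, by omega⟩)⟩
  · rw [hlog d hsd, hlog d' hsd']
    have h0 : (0 : ℝ) < d := by exact_mod_cast hd0
    have h1 : (d : ℝ) < d' := by exact_mod_cast hdd'
    have h2 : (d' : ℝ) < 2 * d := by exact_mod_cast hd2
    have h3 := Real.log_lt_log h0 h1
    have h4 := Real.log_lt_log (by linarith) h2
    rw [Real.log_mul (by norm_num) h0.ne'] at h4
    rw [abs_lt]; constructor <;> linarith [Real.log_pos (show (1 : ℝ) < 2 by norm_num)]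

/-! ### Sign vectors and collision probabilities -/

/-- The sign `0`, `1`, `-1` attached to the residues `0`, `1`, `2` modulo `3`. -/
def sgn3 (a : ZMod 3) : ℝ := if a = 0 then 0 else if a = 1 then 1 else -1

/-- Sign vectors, one coordinate for each integer at most `N`. A fixed finite cube serves for all
sets of primes at most `N`; the coordinates outside the set are dummies. -/
abbrev Om (N : ℕ) : Type := Fin (N + 1) → ZMod 3

/-- The sign attached to `p` by `ε` (meaningful for `p ≤ N`). -/
def cc {N : ℕ} (ε : Om N) (p : ℕ) : ℝ := sgn3 (ε (Fin.ofNat (N + 1) p))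

/-- The signed sum of logarithms `log (d / d')` for the pair of divisors of `∏ S` encoded by
`ε`. -/
noncomputable def zz {N : ℕ} (S : Finset ℕ) (ε : Om N) : ℝ := ∑ p ∈ S, cc ε p * Real.log p

lemma sgn3_cases (a : ZMod 3) : (a = 0 ∧ sgn3 a = 0) ∨ (a = 1 ∧ sgn3 a = 1) ∨ (a = 2 ∧ sgn3 a = -1) := by
  have h10 : (1 : ZMod 3) ≠ 0 := by decide
  have h20 : (2 : ZMod 3) ≠ 0 := by decide
  have h21 : (2 : ZMod 3) ≠ 1 := by decide
  have : a = 0 ∨ a = 1 ∨ a = 2 := by revert a; decide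
  unfold sgn3
  rcases this with rfl | rfl | rfl <;> simp [h10, h20, h21]

lemma sgn3_sub (a b : ZMod 3) (h : a ≠ b) : sgn3 a - sgn3 b = 1 ∨ sgn3 a - sgn3 b = -1 ∨
    sgn3 a - sgn3 b = 2 ∨ sgn3 a - sgn3 b = -2 := by
  rcases sgn3_cases a with ⟨ha, ha'⟩ | ⟨ha, ha'⟩ | ⟨ha, ha'⟩ <;>
  rcases sgn3_cases b with ⟨hb, hb'⟩ | ⟨hb, hb'⟩ | ⟨hb, hb'⟩ <;>
  rw [ha', hb'] <;> first | (exfalso; exact h (ha.trans hb.symm)) | norm_num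

lemma zz_eq {N : ℕ} (S : Finset ℕ) (ε : Om N) : zz S ε =
    ∑ p ∈ S.filter (fun p => cc ε p = 1), Real.log p
      - ∑ p ∈ S.filter (fun p => cc ε p = -1), Real.log p := by
  unfold zz
  rw [Finset.sum_filter, Finset.sum_filter, ← Finset.sum_sub_distrib]
  apply Finset.sum_congr rfl
  intro p _
  rcases sgn3_cases (ε (Fin.ofNat (N + 1) p)) with ⟨_, h⟩ | ⟨_, h⟩ | ⟨_, h⟩ <;>
  · have h' : cc ε p = _ := h
    rw [h']; norm_num

/-- Two new primes `p`, `q` whose ratio is within a factor `2` of a ratio of coprime divisors of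
`∏ S` create a divisor in `E`. -/
lemma I_pair_eq_zero {N : ℕ} {S : Finset ℕ} (hS : ∀ p ∈ S, p.Prime) {p q : ℕ} (hp : p.Prime)
    (hq : q.Prime) (hpq : p ≠ q) (hpS : p ∉ S) (hqS : q ∉ S) (ε : Om N)
    (h : |Real.log p - Real.log q - zz S ε| < Real.log 2) : I (S ∪ {p, q}) = 0 := by
  unfold I
  rw [if_neg]
  set A := S.filter (fun p => cc ε p = 1)
  set D := S.filter (fun p => cc ε p = -1)
  have hAS : A ⊆ S := Finset.filter_subset _ _
  have hDS : D ⊆ S := Finset.filter_subset _ _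
  have hqA : q ∉ A := fun hh => hqS (hAS hh)
  have hpD : p ∉ D := fun hh => hpS (hDS hh)
  have hAD : Disjoint A D := by
    rw [Finset.disjoint_filter]
    intro x _ h1 h2
    rw [h1] at h2; norm_num at h2
  apply not_RR_of (A := insert p D) (D := insert q A)
  · intro r hr
    simp only [Finset.mem_union, Finset.mem_insert, Finset.mem_singleton] at hr
    rcases hr with hr | rfl | rfl
    · exact hS r hr
    · exact hp
    · exact hq
  · intro r hr
    rw [Finset.mem_insert] at hr
    simp only [Finset.mem_union, Finset.mem_insert, Finset.mem_singleton]
    rcases hr with rfl | hr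
    · simp
    · exact Or.inl (hDS hr)
  · intro r hr
    rw [Finset.mem_insert] at hr
    simp only [Finset.mem_union, Finset.mem_insert, Finset.mem_singleton]
    rcases hr with rfl | hr
    · simp
    · exact Or.inl (hAS hr)
  · rw [Finset.disjoint_insert_left, Finset.disjoint_insert_right, Finset.mem_insert]
    refine ⟨?_, fun hh => hqS (hDS hh), hAD.symm⟩
    rintro (rfl | hh)
    · exact hpq rfl
    · exact hpS (hAS hh)
  · exact ⟨p, by simp⟩
  · rw [Finset.sum_insert hpD, Finset.sum_insert hqA]
    rw [zz_eq] at h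
    convert h using 2
    ring

lemma zz_union {N : ℕ} {A B : Finset ℕ} (h : Disjoint A B) (ε : Om N) :
    zz (A ∪ B) ε = zz A ε + zz B ε := by
  unfold zz; rw [Finset.sum_union h]

/-- The width of the collision window. -/
noncomputable def dl : ℝ := 2 * Real.log 2

/-- The probability that two independent uniform sign vectors have signed sums over `S` within
`dl` of each other. -/
noncomputable def aa (N : ℕ) (S : Finset ℕ) : ℝ :=
  ((Finset.univ.filter (fun x : Om N × Om N => |zz S x.1 - zz S x.2| < dl)).card : ℝ)
    / 9 ^ (N + 1)

lemma card_Om (N : ℕ) : Fintype.card (Om N) = 3 ^ (N + 1) := by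
  simp [Om, ZMod.card]

lemma dl_pos : 0 < dl := by unfold dl; linarith [Real.log_two_gt_d9]

lemma aa_nonneg (N : ℕ) (S : Finset ℕ) : 0 ≤ aa N S := by unfold aa; positivity

lemma card_pairs_le (N : ℕ) (s : Finset (Om N × Om N)) : (s.card : ℝ) ≤ 9 ^ (N + 1) := by
  have := Finset.card_le_univ s
  rw [Fintype.card_prod, card_Om] at this
  have h2 : (3 : ℕ) ^ (N + 1) * 3 ^ (N + 1) = 9 ^ (N + 1) := by
    rw [← mul_pow]; norm_num
  rw [h2] at this
  exact_mod_cast this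

lemma aa_empty (N : ℕ) : aa N ∅ ≤ 1 := by
  unfold aa
  rw [div_le_one (by positivity)]
  exact card_pairs_le _ _

lemma aa_pos (N : ℕ) (S : Finset ℕ) : 0 < aa N S := by
  unfold aa
  apply div_pos _ (by positivity)
  have : ((0 : Om N), (0 : Om N)) ∈
      (Finset.univ.filter (fun x : Om N × Om N => |zz S x.1 - zz S x.2| < dl)) := by
    simp [dl_pos]
  exact_mod_cast Finset.card_pos.2 ⟨_, this⟩

lemma ofNat_inj {N p q : ℕ} (hp : p ≤ N) (hq : q ≤ N) (h : Fin.ofNat (N + 1) p = Fin.ofNat (N + 1) q) :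
    p = q := by
  have := congrArg Fin.val h
  simp only [Fin.ofNat] at this
  rwa [Nat.mod_eq_of_lt (by omega), Nat.mod_eq_of_lt (by omega)] at this

lemma three_mul_card {α : Type*} (Y : Finset α) :
    3 * Y.card = ((Finset.univ : Finset (ZMod 3)) ×ˢ Y).card := by
  rw [Finset.card_product]; simp [ZMod.card]

/-- Independence of the coordinates outside `S`: agreement of the two vectors on `B` costs a factor
`3 ^ |B|`. -/
lemma card_agree (N : ℕ) (S B : Finset ℕ) (hS : ∀ p ∈ S, p ≤ N) (hB : ∀ p ∈ B, p ≤ N)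
    (hSB : Disjoint S B) :
    3 ^ B.card * (Finset.univ.filter (fun x : Om N × Om N =>
      (∀ p ∈ B, x.1 (Fin.ofNat (N + 1) p) = x.2 (Fin.ofNat (N + 1) p)) ∧
        |zz S x.1 - zz S x.2| < dl)).card
    ≤ (Finset.univ.filter (fun x : Om N × Om N => |zz S x.1 - zz S x.2| < dl)).card := by
  induction B using Finset.induction_on with
  | empty => simp
  | insert b B hb ih =>
    rw [Finset.disjoint_insert_right] at hSB
    refine le_trans ?_ (ih (fun p hp => hB p (Finset.mem_insert_of_mem hp)) hSB.2)
    rw [Finset.card_insert_of_notMem hb, pow_succ, mul_assoc]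
    apply Nat.mul_le_mul_left
    have hbN : b ≤ N := hB b (Finset.mem_insert_self _ _)
    rw [three_mul_card]
    -- Rotating coordinate `b` of the second vector by the three residues is injective on pairs that
    -- agree at `b`, and does not change the signed sums over `S`.
    have hoff : ∀ (ε : Om N) (s : ZMod 3) (p : ℕ), p ≤ N → p ≠ b →
        (ε + Pi.single (Fin.ofNat (N + 1) b) s : Om N) (Fin.ofNat (N + 1) p) = ε (Fin.ofNat (N + 1) p) := by
      intro ε s p hp hpb
      rw [Pi.add_apply, Pi.single_eq_of_ne (fun h => hpb (ofNat_inj hp hbN h)), add_zero]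
    refine Finset.card_le_card_of_injOn
      (fun y : ZMod 3 × (Om N × Om N) => (y.2.1, y.2.2 + Pi.single (Fin.ofNat (N + 1) b) y.1)) ?_ ?_
    · rintro ⟨s, ε, ε'⟩ hy
      simp only [Finset.coe_product, Set.mem_prod, Finset.mem_coe, Finset.mem_filter,
        Finset.mem_univ, true_and] at hy ⊢
      refine ⟨fun p hp => ?_, ?_⟩
      · rw [hoff _ _ _ (hB p (Finset.mem_insert_of_mem hp)) (fun h => hb (h ▸ hp))]
        exact hy.1 p (Finset.mem_insert_of_mem hp)
      · have : zz S (ε' + Pi.single (Fin.ofNat (N + 1) b) s) = zz S ε' := by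
          unfold zz cc
          apply Finset.sum_congr rfl
          intro p hp
          rw [hoff _ _ _ (hS p hp) (fun h => hSB.1 (h ▸ hp))]
        rw [this]; exact hy.2
    · rintro ⟨s, ε, ε'⟩ hy ⟨s', η, η'⟩ hy' he
      simp only [Finset.coe_product, Set.mem_prod, Finset.mem_coe, Finset.mem_filter,
        Finset.mem_univ, true_and] at hy hy'
      simp only [Prod.mk.injEq] at he
      have e1 := hy.1 b (Finset.mem_insert_self _ _)
      have e2 := hy'.1 b (Finset.mem_insert_self _ _)
      have e3 := congrFun he.2 (Fin.ofNat (N + 1) b)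
      rw [Pi.add_apply, Pi.add_apply, Pi.single_eq_same, Pi.single_eq_same, ← e1, ← e2, he.1] at e3
      have e4 := add_left_cancel e3
      subst e4
      have e5 := add_right_cancel he.2
      rw [he.1, e5]

/-- The probability that the signed sums over `S` of two independent sign vectors collide after a
shift by `c * log p`. -/
noncomputable def DD (N : ℕ) (c : ℝ) (S : Finset ℕ) (p : ℕ) : ℝ :=
  ((Finset.univ.filter (fun x : Om N × Om N =>
    |c * Real.log p + (zz S x.1 - zz S x.2)| < dl)).card : ℝ) / 9 ^ (N + 1)

/-- The sum of `DD` over the nonzero differences `±1`, `±2` of two signs. -/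
noncomputable def DDs (N : ℕ) (S : Finset ℕ) (p : ℕ) : ℝ :=
  DD N 1 S p + DD N (-1) S p + DD N 2 S p + DD N (-2) S p

/-- Two sign vectors colliding on `S ∪ B` either agree on all of `B`, or differ at some `p ∈ B`, in
which case `log p` is confined to a short window. -/
lemma aa_union_le (N : ℕ) (S B : Finset ℕ) (hS : ∀ p ∈ S, p ≤ N) (hB : ∀ p ∈ B, p ≤ N)
    (hSB : Disjoint S B) :
    aa N (S ∪ B) ≤ (1 / 3) ^ B.card * aa N S + ∑ p ∈ B, DDs N (S ∪ B.erase p) p := by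
  have h1 : (Finset.univ.filter (fun x : Om N × Om N => |zz (S ∪ B) x.1 - zz (S ∪ B) x.2| < dl)) ⊆
      (Finset.univ.filter (fun x : Om N × Om N =>
      (∀ p ∈ B, x.1 (Fin.ofNat (N + 1) p) = x.2 (Fin.ofNat (N + 1) p)) ∧
        |zz S x.1 - zz S x.2| < dl)) ∪ B.biUnion (fun p =>
        ((Finset.univ.filter (fun x : Om N × Om N =>
            |1 * Real.log p + (zz (S ∪ B.erase p) x.1 - zz (S ∪ B.erase p) x.2)| < dl)) ∪
        (Finset.univ.filter (fun x : Om N × Om N =>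
            |(-1) * Real.log p + (zz (S ∪ B.erase p) x.1 - zz (S ∪ B.erase p) x.2)| < dl))) ∪
        (Finset.univ.filter (fun x : Om N × Om N =>
            |2 * Real.log p + (zz (S ∪ B.erase p) x.1 - zz (S ∪ B.erase p) x.2)| < dl)) ∪
        (Finset.univ.filter (fun x : Om N × Om N =>
            |(-2) * Real.log p + (zz (S ∪ B.erase p) x.1 - zz (S ∪ B.erase p) x.2)| < dl))) := by
    rintro ⟨ε, ε'⟩ hx
    simp only [Finset.mem_filter, Finset.mem_univ, true_and, Finset.mem_union,
      Finset.mem_biUnion] at hx ⊢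
    -- Either full agreement on `B`, or a nonzero difference of signs in `±1, ±2` at some `p`.
    by_cases hall : ∀ p ∈ B, ε (Fin.ofNat (N + 1) p) = ε' (Fin.ofNat (N + 1) p)
    · left
      refine ⟨hall, ?_⟩
      have : zz B ε = zz B ε' := by
        unfold zz cc
        exact Finset.sum_congr rfl (fun p hp => by rw [hall p hp])
      rw [zz_union hSB, zz_union hSB, this] at hx
      convert hx using 2; ring
    · right
      push Not at hall
      obtain ⟨p, hp, hne⟩ := hall
      refine ⟨p, hp, ?_⟩
      have hpS : p ∉ S := fun h => Finset.disjoint_left.1 hSB h hp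
      have hins : S ∪ B = insert p (S ∪ B.erase p) := by
        rw [← Finset.union_insert, Finset.insert_erase hp]
      have hz : ∀ η : Om N, zz (S ∪ B) η = cc η p * Real.log p + zz (S ∪ B.erase p) η := by
        intro η
        rw [hins]; unfold zz
        rw [Finset.sum_insert (by simp [hpS])]
      rw [hz, hz] at hx
      have hx' : |(cc ε p - cc ε' p) * Real.log p +
          (zz (S ∪ B.erase p) ε - zz (S ∪ B.erase p) ε')| < dl := by
        convert hx using 2; ring
      rcases sgn3_sub _ _ hne with h | h | h | h
      · left; left; left
        rwa [show cc ε p - cc ε' p = 1 from h] at hx'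
      · left; left; right
        rwa [show cc ε p - cc ε' p = -1 from h] at hx'
      · left; right
        rwa [show cc ε p - cc ε' p = 2 from h] at hx'
      · right
        rwa [show cc ε p - cc ε' p = -2 from h] at hx'
  have h2 := (Finset.card_le_card h1).trans ((Finset.card_union_le _ _).trans
    (Nat.add_le_add_left Finset.card_biUnion_le _))
  have h3 := card_agree N S B hS hB hSB
  have h3' : ((Finset.univ.filter (fun x : Om N × Om N =>
      (∀ p ∈ B, x.1 (Fin.ofNat (N + 1) p) = x.2 (Fin.ofNat (N + 1) p)) ∧
        |zz S x.1 - zz S x.2| < dl)).card : ℝ) / 9 ^ (N + 1) ≤ (1 / 3) ^ B.card * aa N S := by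
    unfold aa
    rw [← mul_div_assoc]
    gcongr
    rw [one_div, inv_pow, ← div_eq_inv_mul, le_div_iff₀ (by positivity), mul_comm]
    exact_mod_cast h3
  calc aa N (S ∪ B) ≤ _ := div_le_div_of_nonneg_right (Nat.cast_le.2 h2) (by positivity)
    _ ≤ _ := by
      push_cast
      rw [add_div, Finset.sum_div]
      apply add_le_add h3'
      apply Finset.sum_le_sum
      intro p _
      unfold DDs DD
      rw [← add_div, ← add_div, ← add_div]
      apply div_le_div_of_nonneg_right _ (by positivity)
      refine (Nat.cast_le.2 ((Finset.card_union_le _ _).trans (Nat.add_le_add_right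
        ((Finset.card_union_le _ _).trans (Nat.add_le_add_right
        (Finset.card_union_le _ _) _)) _))).trans ?_
      push_cast
      exact le_rfl

/-- A collision with shift `c * log p` confines `log p` to a short window, which carries little of
the sum of `1 / p`. -/
lemma sum_DD_le (N : ℕ) (c : ℝ) (hc : 1 ≤ |c|) (S P : Finset ℕ) (T : ℝ) (hT : 0 < T)
    (hP : ∀ p ∈ P, p.Prime ∧ T < Real.log p) :
    ∑ p ∈ P, 1 / (p : ℝ) * DD N c S p ≤ Real.log 4 * Real.exp (2 * dl) / T := by
  unfold DD
  have hc0 : c ≠ 0 := by rintro rfl; norm_num at hc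
  have h1 : ∑ p ∈ P, 1 / (p : ℝ) * (((Finset.univ.filter (fun x : Om N × Om N =>
      |c * Real.log p + (zz S x.1 - zz S x.2)| < dl)).card : ℝ) / 9 ^ (N + 1)) =
      (∑ x : Om N × Om N, ∑ p ∈ P.filter (fun p : ℕ => |c * Real.log p + (zz S x.1 - zz S x.2)| < dl),
        1 / (p : ℝ)) / 9 ^ (N + 1) := by
    rw [Finset.sum_div]
    simp only [Finset.sum_filter, Finset.card_filter]
    push_cast
    rw [← Finset.sum_div, Finset.sum_comm, Finset.sum_div]
    apply Finset.sum_congr rfl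
    intro p _
    rw [← mul_div_assoc, Finset.mul_sum]
    congr 1
    apply Finset.sum_congr rfl
    intro x _
    split_ifs <;> simp
  rw [h1, div_le_iff₀ (by positivity)]
  have h2 : ∀ x ∈ (Finset.univ : Finset (Om N × Om N)),
      ∑ p ∈ P.filter (fun p : ℕ => |c * Real.log p + (zz S x.1 - zz S x.2)| < dl),
        1 / (p : ℝ) ≤ Real.log 4 * Real.exp (2 * dl) / T := by
    intro x _
    apply window_upper _ T (-(zz S x.1 - zz S x.2) / c) dl hT
    intro p hp
    rw [Finset.mem_filter] at hp
    refine ⟨(hP p hp.1).1, (hP p hp.1).2, ?_⟩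
    have e : c * Real.log p + (zz S x.1 - zz S x.2) =
        c * (Real.log p - -(zz S x.1 - zz S x.2) / c) := by field_simp; ring
    have h3 := hp.2
    rw [e, abs_mul] at h3
    exact lt_of_le_of_lt (le_mul_of_one_le_left (abs_nonneg _) hc) h3
  refine (Finset.sum_le_card_nsmul _ _ _ h2).trans ?_
  rw [nsmul_eq_mul, mul_comm]
  have : 0 ≤ Real.log 4 * Real.exp (2 * dl) / T := by positivity
  exact mul_le_mul_of_nonneg_left (card_pairs_le N _) this

/-- The average effect of a block of large primes on the collision probability. -/
lemma W_DDs_le (N : ℕ) (S P : Finset ℕ) (T : ℝ) (hT : 0 < T)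
    (hP : ∀ p ∈ P, p.Prime ∧ T < Real.log p) :
    W P (fun B => ∑ p ∈ B, DDs N (S ∪ B.erase p) p) ≤
      (4 * (Real.log 4 * Real.exp (2 * dl)) / T) * Zf P := by
  rw [W_palm P (fun B p => DDs N (S ∪ B) p), ← W_const]
  apply W_mono
  intro B _
  have hDD0 : ∀ c p, 0 ≤ DD N c (S ∪ B) p := fun c p => by unfold DD; positivity
  calc ∑ p ∈ P \ B, 1 / (p : ℝ) * DDs N (S ∪ B) p ≤ ∑ p ∈ P, 1 / (p : ℝ) * DDs N (S ∪ B) p := by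
        apply Finset.sum_le_sum_of_subset_of_nonneg Finset.sdiff_subset
        intro p _ _
        unfold DDs
        have h1 := hDD0 1 p
        have h2 := hDD0 (-1) p
        have h3 := hDD0 2 p
        have h4 := hDD0 (-2) p
        positivity
    _ = ∑ p ∈ P, 1 / (p : ℝ) * DD N 1 (S ∪ B) p + ∑ p ∈ P, 1 / (p : ℝ) * DD N (-1) (S ∪ B) p
        + ∑ p ∈ P, 1 / (p : ℝ) * DD N 2 (S ∪ B) p + ∑ p ∈ P, 1 / (p : ℝ) * DD N (-2) (S ∪ B) p := by
        rw [← Finset.sum_add_distrib, ← Finset.sum_add_distrib, ← Finset.sum_add_distrib]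
        exact Finset.sum_congr rfl (fun _ _ => by unfold DDs; ring)
    _ ≤ _ := by
        have h1 := sum_DD_le N 1 (by norm_num) (S ∪ B) P T hT hP
        have h2 := sum_DD_le N (-1) (by norm_num) (S ∪ B) P T hT hP
        have h3 := sum_DD_le N 2 (by norm_num) (S ∪ B) P T hT hP
        have h4 := sum_DD_le N (-2) (by norm_num) (S ∪ B) P T hT hP
        have e : 4 * (Real.log 4 * Real.exp (2 * dl)) / T =
          4 * (Real.log 4 * Real.exp (2 * dl) / T) := by ring
        rw [e]; linarith

/-! ### Lyapunov drift of the collision probability -/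

lemma sum_log_div_pr : ∃ C : ℝ, 0 ≤ C ∧ ∀ t : ℝ, 1 ≤ t →
    ∑ p ∈ pr 0 t, Real.log p / (p : ℝ) ≤ t + C := by
  obtain ⟨C, hC, h⟩ := mertens1
  refine ⟨C, hC, fun t ht => ?_⟩
  set b := ⌊Real.exp t⌋₊ with hb
  have he : 1 ≤ Real.exp t := by linarith [Real.add_one_le_exp t]
  have hb1 : 1 ≤ b := Nat.le_floor (by exact_mod_cast he)
  have h1 := (abs_le.1 (h b hb1)).2
  rw [sum_aL_eq] at h1
  have hub : Real.log b ≤ t := by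
    rw [Real.log_le_iff_le_exp (by exact_mod_cast hb1)]; exact Nat.floor_le (by positivity)
  have hsub : pr 0 t ⊆ (Finset.range (b + 1)).filter Nat.Prime := by
    intro p hp
    unfold pr at hp
    rw [Finset.mem_filter] at hp ⊢
    exact ⟨hp.1, hp.2.1⟩
  have := Finset.sum_le_sum_of_subset_of_nonneg hsub (f := fun p : ℕ => Real.log p / (p : ℝ))
    (fun p _ _ => by positivity)
  linarith

/-- The exponent of the Lyapunov function, any small `κ > 0` with `1 - 3 ^ (-κ) > κ`. -/
noncomputable def kap : ℝ := 1 / 10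

/-- `3 ^ (-kap)`. -/
noncomputable def qq : ℝ := (1 / 3 : ℝ) ^ kap

lemma qq_pos : 0 < qq := by unfold qq; positivity

lemma qq_lt : qq < 9 / 10 := by
  have h : qq ^ 10 = 1 / 3 := by
    unfold qq kap
    rw [← Real.rpow_natCast, ← Real.rpow_mul (by norm_num)]; norm_num
  by_contra hc
  push Not at hc
  have : (9 / 10 : ℝ) ^ 10 ≤ qq ^ 10 := by gcongr
  rw [h] at this
  norm_num at this

/-- The drift factor is at most `1 / 2` on long blocks: this is where `1 - 3 ^ (-kap) > kap` is
used. -/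
lemma rho_le : ∃ M₀ : ℝ, 1 ≤ M₀ ∧ ∀ M : ℝ, M₀ ≤ M → ∀ T : ℝ, 1 ≤ T →
    M ^ kap * ∏ p ∈ pr T (M * T), (1 + qq / (p : ℝ)) ≤ 1 / 2 * Zf (pr T (M * T)) := by
  obtain ⟨C, hC, hmer⟩ := mertens_pr
  set ζ := ∑' n : ℕ, 1 / (n : ℝ) ^ 2 with hζ
  have hsum : Summable (fun n : ℕ => 1 / (n : ℝ) ^ 2) := Real.summable_one_div_nat_pow.2 (by norm_num)
  have hζ0 : 0 ≤ ζ := tsum_nonneg (fun _ => by positivity)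
  have hq1 := qq_lt
  have hq0 := qq_pos
  set γ := 9 / 10 - qq with hγ
  have hγ0 : 0 < γ := by linarith
  refine ⟨Real.exp ((C + ζ + 1) / γ), Real.one_le_exp (by positivity), ?_⟩
  intro M hM T hT
  have hM0 : 0 < M := lt_of_lt_of_le (Real.exp_pos _) hM
  have hM1 : 1 ≤ M := le_trans (Real.one_le_exp (by positivity)) hM
  have hlM : (C + ζ + 1) / γ ≤ Real.log M := by rwa [Real.le_log_iff_exp_le hM0]
  rw [div_le_iff₀ hγ0] at hlM
  set P := pr T (M * T) with hP
  have h1 := (abs_le.1 (hmer T (M * T) hT (by nlinarith))).1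
  rw [mul_div_cancel_right₀ _ (by linarith : T ≠ 0)] at h1
  have hfac : ∀ p ∈ P, (1 + qq / (p : ℝ)) ≤
      Real.exp (-((1 - qq) * (1 / (p : ℝ) - 1 / (p : ℝ) ^ 2))) * (1 + 1 / (p : ℝ)) := by
    intro p hp
    rw [hP, mem_pr] at hp
    have hp0 : (0 : ℝ) < p := by exact_mod_cast hp.1.pos
    set u := 1 / (p : ℝ) with hu
    have hu0 : 0 < u := by positivity
    have e1 : qq / (p : ℝ) = qq * u := by rw [hu]; ring
    have e2 : 1 / (p : ℝ) ^ 2 = u ^ 2 := by rw [hu]; simp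
    rw [e1, e2]
    have h2 := Real.add_one_le_exp (-((1 - qq) * (u - u ^ 2)))
    have h3 : 1 + qq * u ≤ (-((1 - qq) * (u - u ^ 2)) + 1) * (1 + u) := by
      have : (-((1 - qq) * (u - u ^ 2)) + 1) * (1 + u) = 1 + qq * u + (1 - qq) * u ^ 3 := by ring
      rw [this]
      have : 0 ≤ (1 - qq) * u ^ 3 := mul_nonneg (by linarith) (by positivity)
      linarith
    exact h3.trans (by gcongr)
  have h2 : ∏ p ∈ P, (1 + qq / (p : ℝ)) ≤
      Real.exp (-((1 - qq) * (Real.log M - C - ζ))) * Zf P := by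
    calc ∏ p ∈ P, (1 + qq / (p : ℝ)) ≤ ∏ p ∈ P,
        (Real.exp (-((1 - qq) * (1 / (p : ℝ) - 1 / (p : ℝ) ^ 2))) * (1 + 1 / (p : ℝ))) :=
          Finset.prod_le_prod (fun p _ => by positivity) hfac
      _ = Real.exp (∑ p ∈ P, -((1 - qq) * (1 / (p : ℝ) - 1 / (p : ℝ) ^ 2))) * Zf P := by
          rw [Finset.prod_mul_distrib, Real.exp_sum, Zf]
      _ ≤ _ := by
          have := (Zf_pos P).le
          gcongr
          rw [Finset.sum_neg_distrib, ← Finset.mul_sum, Finset.sum_sub_distrib]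
          have h4 : ∑ p ∈ P, 1 / (p : ℝ) ^ 2 ≤ ζ := hsum.sum_le_tsum _ (fun _ _ => by positivity)
          have : (1 - qq) * (Real.log M - C - ζ) ≤
              (1 - qq) * (∑ p ∈ P, 1 / (p : ℝ) - ∑ p ∈ P, 1 / (p : ℝ) ^ 2) :=
            mul_le_mul_of_nonneg_left (by linarith) (by linarith)
          linarith
  have h5 : M ^ kap * Real.exp (-((1 - qq) * (Real.log M - C - ζ))) ≤ 1 / 2 := by
    rw [Real.rpow_def_of_pos hM0, ← Real.exp_add]
    calc _ ≤ Real.exp (-1) := by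
          apply Real.exp_le_exp.2
          unfold kap
          have : Real.log M * (1 / 10) + -((1 - qq) * (Real.log M - C - ζ)) =
            - (γ * Real.log M) + (1 - qq) * (C + ζ) := by rw [hγ]; ring
          rw [this]
          have : (1 - qq) * (C + ζ) ≤ 1 * (C + ζ) := by gcongr; linarith
          linarith
      _ ≤ 1 / 2 := by
          rw [Real.exp_neg, one_div]
          apply inv_anti₀ (by norm_num)
          linarith [Real.exp_one_gt_d9]
  calc M ^ kap * ∏ p ∈ P, (1 + qq / (p : ℝ))
      ≤ M ^ kap * (Real.exp (-((1 - qq) * (Real.log M - C - ζ))) * Zf P) := by gcongr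
    _ = (M ^ kap * Real.exp (-((1 - qq) * (Real.log M - C - ζ)))) * Zf P := by ring
    _ ≤ _ := mul_le_mul_of_nonneg_right h5 (Zf_pos P).le

lemma rpow_kap_add {x y : ℝ} (hx : 0 ≤ x) (hy : 0 ≤ y) : (x + y) ^ kap ≤ x ^ kap + y ^ kap :=
  Real.rpow_add_le_add_rpow hx hy (by unfold kap; norm_num) (by unfold kap; norm_num)

lemma rpow_kap_le {y : ℝ} (hy : 0 ≤ y) : y ^ kap ≤ 1 + y := by
  rcases le_total y 1 with h | h
  · have := Real.rpow_le_one hy h (show 0 ≤ kap by unfold kap; norm_num)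
    linarith
  · have := Real.rpow_le_rpow_of_exponent_le h (show kap ≤ 1 by unfold kap; norm_num)
    rw [Real.rpow_one] at this
    linarith

/-- The absolute constant in the drift estimate for the collision probability. -/
noncomputable def Cd : ℝ := 4 * (Real.log 4 * Real.exp (2 * dl))

lemma Cd_pos : 0 < Cd := by
  unfold Cd
  have : 0 < Real.log 4 := Real.log_pos (by norm_num)
  positivity

/-- One-block drift of the renormalized collision probability `T * aa N S`. -/
lemma drift_aa : ∃ M₀ : ℝ, 1 ≤ M₀ ∧ ∀ M : ℝ, M₀ ≤ M → ∀ T : ℝ, 1 ≤ T → ∀ (N : ℕ) (S : Finset ℕ),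
    (∀ p ∈ S, p ≤ N ∧ Real.log p ≤ T) → (∀ p ∈ pr T (M * T), p ≤ N) →
    W (pr T (M * T)) (fun B => (M * T * aa N (S ∪ B)) ^ kap) ≤
      (1 / 2 * (T * aa N S) ^ kap + 1 + Cd * M) * Zf (pr T (M * T)) := by
  obtain ⟨M₀, hM₀, hrho⟩ := rho_le
  refine ⟨M₀, hM₀, ?_⟩
  intro M hM T hT N S hS hPN
  have hM1 : 1 ≤ M := hM₀.trans hM
  have hr := hrho M hM T hT
  set P := pr T (M * T) with hP
  have ha := aa_nonneg N S
  have hDDs : ∀ S' p, 0 ≤ DDs N S' p := fun S' p => by unfold DDs DD; positivity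
  have hpt : ∀ B, B ⊆ P → (M * T * aa N (S ∪ B)) ^ kap ≤
      (M ^ kap * (T * aa N S) ^ kap) * (∏ p ∈ B, qq) + (1 + (M * T) * ∑ p ∈ B, DDs N (S ∪ B.erase p) p) := by
    intro B hB
    have hSB : Disjoint S B := by
      rw [Finset.disjoint_left]
      intro p hp hp'
      have := (mem_pr.1 (hB hp')).2.1
      linarith [(hS p hp).2]
    have h1 := aa_union_le N S B (fun p hp => (hS p hp).1) (fun p hp => hPN p (hB hp)) hSB
    have hX : 0 ≤ ∑ p ∈ B, DDs N (S ∪ B.erase p) p := Finset.sum_nonneg (fun p _ => hDDs _ _)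
    calc (M * T * aa N (S ∪ B)) ^ kap
        ≤ (M * T * ((1 / 3) ^ B.card * aa N S + ∑ p ∈ B, DDs N (S ∪ B.erase p) p)) ^ kap := by
          have := aa_nonneg N (S ∪ B)
          apply Real.rpow_le_rpow (by positivity) _ (by unfold kap; norm_num)
          gcongr
      _ = (M * (T * aa N S) * (1 / 3) ^ B.card + M * T * ∑ p ∈ B, DDs N (S ∪ B.erase p) p) ^ kap := by
          congr 1; ring
      _ ≤ (M * (T * aa N S) * (1 / 3) ^ B.card) ^ kap + (M * T * ∑ p ∈ B, DDs N (S ∪ B.erase p) p) ^ kap :=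
          rpow_kap_add (by positivity) (by positivity)
      _ ≤ _ := by
          apply add_le_add
          · rw [Real.mul_rpow (by positivity) (by positivity), Real.mul_rpow (by positivity) (by positivity)]
            rw [Finset.prod_const]
            apply le_of_eq
            congr 1
            unfold qq
            rw [← Real.rpow_natCast, ← Real.rpow_natCast, ← Real.rpow_mul (by norm_num),
              ← Real.rpow_mul (by norm_num), mul_comm]
          · exact rpow_kap_le (by positivity)
  refine (W_mono hpt).trans ?_
  rw [W_add, W_add, W_mul, W_mul, W_one, W_prod P (fun _ => qq)]
  have h2 := W_DDs_le N S P T (by linarith) (fun p hp => ⟨(mem_pr.1 hp).1, (mem_pr.1 hp).2.1⟩)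
  have h3 : M * T * W P (fun B => ∑ p ∈ B, DDs N (S ∪ B.erase p) p) ≤ Cd * M * Zf P := by
    calc _ ≤ M * T * ((4 * (Real.log 4 * Real.exp (2 * dl)) / T) * Zf P) := by gcongr
      _ = _ := by unfold Cd; field_simp
  have h4 : M ^ kap * (T * aa N S) ^ kap * ∏ p ∈ P, (1 + qq / (p : ℝ)) ≤
      1 / 2 * (T * aa N S) ^ kap * Zf P := by
    calc _ = (T * aa N S) ^ kap * (M ^ kap * ∏ p ∈ P, (1 + qq / (p : ℝ))) := by ring
      _ ≤ (T * aa N S) ^ kap * (1 / 2 * Zf P) := by gcongr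
      _ = _ := by ring
  linarith

lemma W_sum_log (P : Finset ℕ) : W P (fun B => ∑ p ∈ B, Real.log p) ≤
    (∑ p ∈ P, Real.log p / (p : ℝ)) * Zf P := by
  rw [W_palm P (fun _ p => Real.log p), ← W_const]
  apply W_mono
  intro B _
  calc _ ≤ ∑ p ∈ P, 1 / (p : ℝ) * Real.log p :=
        Finset.sum_le_sum_of_subset_of_nonneg Finset.sdiff_subset (fun p _ _ => by positivity)
    _ = _ := Finset.sum_congr rfl (fun p _ => by ring)

/-- The Lyapunov function: the renormalized collision probability and the renormalized size. -/
noncomputable def VV (M : ℝ) (N : ℕ) (T : ℝ) (S : Finset ℕ) : ℝ :=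
  1 / (1 + Cd * M) * (T * aa N S) ^ kap + (∑ p ∈ S, Real.log p) / T

/-- One-block drift inequality for the Lyapunov function, with an additive constant that does not
depend on the block length `M`. -/
lemma drift_V : ∃ M₀ C₂ : ℝ, 1 ≤ M₀ ∧ 0 < C₂ ∧ ∀ M : ℝ, M₀ ≤ M → ∀ T : ℝ, 1 ≤ T →
    ∀ (N : ℕ) (S : Finset ℕ), (∀ p ∈ S, p ≤ N ∧ Real.log p ≤ T) → (∀ p ∈ pr T (M * T), p ≤ N) →
    W (pr T (M * T)) (fun B => VV M N (M * T) (S ∪ B)) ≤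
      (1 / 2 * VV M N T S + C₂) * Zf (pr T (M * T)) := by
  obtain ⟨M₀, hM₀, hd⟩ := drift_aa
  obtain ⟨C, hC, hlog⟩ := sum_log_div_pr
  refine ⟨max M₀ 2, 2 + C, hM₀.trans (le_max_left _ _), by positivity, ?_⟩
  intro M hM T hT N S hS hPN
  have h1 := hd M ((le_max_left _ _).trans hM) T hT N S hS hPN
  have hM2 : 2 ≤ M := (le_max_right _ _).trans hM
  have hCd := Cd_pos
  have hMT : 1 ≤ M * T := by nlinarith
  have h2 := hlog (M * T) hMT
  set P := pr T (M * T) with hP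
  have hZ := Zf_pos P
  have h3 : ∑ p ∈ P, Real.log p / (p : ℝ) ≤ M * T + C := by
    refine le_trans (Finset.sum_le_sum_of_subset_of_nonneg ?_ (fun p _ _ => by positivity)) h2
    intro p hp
    rw [hP, mem_pr] at hp
    rw [mem_pr]
    exact ⟨hp.1, by linarith, hp.2.2⟩
  have h4 : W P (fun B => VV M N (M * T) (S ∪ B)) =
      W P (fun B => 1 / (1 + Cd * M) * (M * T * aa N (S ∪ B)) ^ kap +
        (1 / (M * T) * (∑ p ∈ S, Real.log p) + 1 / (M * T) * ∑ p ∈ B, Real.log p)) := by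
    apply W_congr
    intro B hB
    have hSB : Disjoint S B := by
      rw [Finset.disjoint_left]
      intro p hp hp'
      have := (mem_pr.1 (hB hp')).2.1
      linarith [(hS p hp).2]
    unfold VV
    rw [Finset.sum_union hSB]
    ring
  rw [h4, W_add, W_add, W_mul, W_const, W_mul]
  have h5 : 1 / (1 + Cd * M) * W P (fun B => (M * T * aa N (S ∪ B)) ^ kap) ≤
      (1 / 2 * (1 / (1 + Cd * M) * (T * aa N S) ^ kap) + 1) * Zf P := by
    calc _ ≤ 1 / (1 + Cd * M) * ((1 / 2 * (T * aa N S) ^ kap + 1 + Cd * M) * Zf P) := by gcongr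
      _ = _ := by field_simp; ring
  have hL0 : 0 ≤ ∑ p ∈ S, Real.log p := Finset.sum_nonneg (fun p _ => by positivity)
  have h6 : 1 / (M * T) * (∑ p ∈ S, Real.log p) ≤ 1 / 2 * ((∑ p ∈ S, Real.log p) / T) := by
    have e : 1 / (M * T) * (∑ p ∈ S, Real.log p) = 1 / M * ((∑ p ∈ S, Real.log p) / T) := by
      field_simp
    rw [e]
    gcongr
  have h7 : 1 / (M * T) * W P (fun B => ∑ p ∈ B, Real.log p) ≤ (1 + C) * Zf P := by
    calc _ ≤ 1 / (M * T) * ((M * T + C) * Zf P) := by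
          gcongr
          exact (W_sum_log P).trans (by gcongr)
      _ = (1 + C / (M * T)) * Zf P := by field_simp
      _ ≤ _ := by
          gcongr
          exact div_le_self hC hMT
  have h8 := mul_le_mul_of_nonneg_right h6 hZ.le
  unfold VV
  linarith

/-! ### First and second moments over pairs of new primes -/

lemma Zf_block_le {C : ℝ} (h : ∀ s t : ℝ, 1 ≤ s → s ≤ t →
    |∑ p ∈ pr s t, 1 / (p : ℝ) - Real.log (t / s)| ≤ C) (M T : ℝ) (hM : 1 ≤ M) (hT : 1 ≤ T) :
    Zf (pr T (M * T)) ≤ M * Real.exp C := by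
  have h1 := (abs_le.1 (h T (M * T) hT (by nlinarith))).2
  rw [mul_div_cancel_right₀ _ (by linarith : T ≠ 0)] at h1
  calc _ ≤ _ := Zf_le_exp _
    _ ≤ Real.exp (Real.log M + C) := Real.exp_le_exp.2 (by linarith)
    _ = _ := by rw [Real.exp_add, Real.exp_log (by linarith)]

lemma zz_abs_le {N : ℕ} (S : Finset ℕ) (ε : Om N) : |zz S ε| ≤ ∑ p ∈ S, Real.log p := by
  unfold zz
  refine (Finset.abs_sum_le_sum_abs _ _).trans (Finset.sum_le_sum ?_)
  intro p _
  rw [abs_mul, abs_of_nonneg (show 0 ≤ Real.log (p : ℝ) by positivity)]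
  have : |cc ε p| ≤ 1 := by
    unfold cc
    rcases sgn3_cases (ε (Fin.ofNat (N + 1) p)) with ⟨_, h⟩ | ⟨_, h⟩ | ⟨_, h⟩ <;> rw [h] <;> norm_num
  exact mul_le_of_le_one_left (by positivity) this

/-- The sign vectors on `S` that the pair `(p', p)` completes to a divisor in `E`. -/
noncomputable def hits (N : ℕ) (S : Finset ℕ) (x : ℕ × ℕ) : Finset (Om N) :=
  Finset.univ.filter (fun ε => |Real.log x.2 - Real.log x.1 - zz S ε| < Real.log 2)

/-- The pairs of distinct primes from a set and a larger set. -/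
noncomputable def Qp (V P : Finset ℕ) : Finset (ℕ × ℕ) :=
  (V ×ˢ P).filter (fun x => x.1 ≠ x.2)

/-- The weight of a pair. -/
noncomputable def w2 (x : ℕ × ℕ) : ℝ := 1 / (x.1 : ℝ) * (1 / (x.2 : ℝ))

lemma w2_nonneg (x : ℕ × ℕ) : 0 ≤ w2 x := by unfold w2; positivity

/-- First moment of the number of hits. -/
lemma hits_first (N : ℕ) (S V P : Finset ℕ) (β : ℝ)
    (h : ∀ q ∈ V, ∀ ε : Om N, β ≤ ∑ p ∈ P.filter (fun p : ℕ => q ≠ p ∧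
      |Real.log p - Real.log q - zz S ε| < Real.log 2), 1 / (p : ℝ)) :
    (∑ q ∈ V, 1 / (q : ℝ)) * (3 ^ (N + 1) * β) ≤ ∑ x ∈ Qp V P, w2 x * (hits N S x).card := by
  have e : ∑ x ∈ Qp V P, w2 x * (hits N S x).card = ∑ q ∈ V, 1 / (q : ℝ) * ∑ ε : Om N,
      ∑ p ∈ P.filter (fun p : ℕ => q ≠ p ∧
      |Real.log p - Real.log q - zz S ε| < Real.log 2), 1 / (p : ℝ) := by
    unfold Qp
    rw [Finset.sum_filter, Finset.sum_product]
    apply Finset.sum_congr rfl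
    intro q _
    simp only [Finset.sum_filter]
    rw [Finset.sum_comm, Finset.mul_sum]
    apply Finset.sum_congr rfl
    intro p _
    unfold hits w2
    rw [Finset.card_filter]
    push_cast
    by_cases hqp : q ≠ p
    · rw [if_pos hqp, mul_assoc, Finset.mul_sum]
      congr 1
      apply Finset.sum_congr rfl
      intro ε _
      simp only [hqp, ne_eq, not_false_eq_true, true_and]
      split_ifs <;> simp
    · simp [hqp]
  rw [e, Finset.sum_mul]
  apply Finset.sum_le_sum
  intro q hq
  gcongr
  have := Finset.card_nsmul_le_sum (Finset.univ : Finset (Om N)) _ β (fun ε _ => h q hq ε)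
  rw [nsmul_eq_mul, Finset.card_univ, card_Om] at this
  push_cast at this
  exact this

/-- Second moment of the number of hits. -/
lemma hits_second (N : ℕ) (S V P : Finset ℕ) (T : ℝ) (hT : 0 < T)
    (hP : ∀ p ∈ P, p.Prime ∧ T < Real.log p) :
    ∑ x ∈ Qp V P, w2 x * ((hits N S x).card : ℝ) ^ 2 ≤
      (∑ q ∈ V, 1 / (q : ℝ)) * (9 ^ (N + 1) * aa N S * (Cd / T)) := by
  have hw : ∀ (q : ℕ) (x : Om N × Om N), ∑ p ∈ P.filter (fun p : ℕ =>
      |Real.log p - Real.log q - zz S x.1| < Real.log 2 ∧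
      |Real.log p - Real.log q - zz S x.2| < Real.log 2), 1 / (p : ℝ) ≤
      if |zz S x.1 - zz S x.2| < dl then Cd / T else 0 := by
    intro q x
    split_ifs with hx
    · refine (window_upper _ T (Real.log q + zz S x.1) dl hT ?_).trans ?_
      · intro p hp
        rw [Finset.mem_filter] at hp
        refine ⟨(hP p hp.1).1, (hP p hp.1).2, ?_⟩
        have h1 := hp.2.1
        have : Real.log 2 ≤ dl := by unfold dl; linarith [Real.log_two_gt_d9]
        rw [← sub_sub]
        linarith
      · unfold Cd
        have : 0 ≤ Real.log 4 * Real.exp (2 * dl) := by positivity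
        exact div_le_div_of_nonneg_right (by linarith) hT.le
    · rw [Finset.filter_false_of_mem, Finset.sum_empty]
      rintro p _ ⟨h1, h2⟩
      apply hx
      unfold dl
      rw [abs_lt] at h1 h2 ⊢
      constructor <;> linarith [h1.1, h1.2, h2.1, h2.2]
  have e : ∀ q p : ℕ, w2 (q, p) * ((hits N S (q, p)).card : ℝ) ^ 2 =
      1 / (q : ℝ) * ∑ x : Om N × Om N, if |Real.log p - Real.log q - zz S x.1| < Real.log 2 ∧
      |Real.log p - Real.log q - zz S x.2| < Real.log 2 then 1 / (p : ℝ) else 0 := by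
    intro q p
    have : ((hits N S (q, p)).card : ℝ) ^ 2 = ∑ x : Om N × Om N,
        if |Real.log p - Real.log q - zz S x.1| < Real.log 2 ∧
        |Real.log p - Real.log q - zz S x.2| < Real.log 2 then (1 : ℝ) else 0 := by
      unfold hits
      rw [Finset.card_filter, sq]
      push_cast
      rw [Finset.sum_mul_sum, Fintype.sum_prod_type]
      apply Finset.sum_congr rfl
      intro ε _
      apply Finset.sum_congr rfl
      intro ε' _
      by_cases h1 : |Real.log p - Real.log q - zz S ε| < Real.log 2 <;>
      by_cases h2 : |Real.log p - Real.log q - zz S ε'| < Real.log 2 <;> simp [h1, h2]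
    rw [this, w2, mul_assoc, Finset.mul_sum]
    congr 1
    apply Finset.sum_congr rfl
    intro x _
    split_ifs <;> simp
  calc ∑ x ∈ Qp V P, w2 x * ((hits N S x).card : ℝ) ^ 2
      ≤ ∑ x ∈ V ×ˢ P, w2 x * ((hits N S x).card : ℝ) ^ 2 :=
        Finset.sum_le_sum_of_subset_of_nonneg (Finset.filter_subset _ _)
          (fun x _ _ => mul_nonneg (w2_nonneg x) (by positivity))
    _ = ∑ q ∈ V, 1 / (q : ℝ) * ∑ x : Om N × Om N, ∑ p ∈ P.filter (fun p : ℕ =>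
      |Real.log p - Real.log q - zz S x.1| < Real.log 2 ∧
      |Real.log p - Real.log q - zz S x.2| < Real.log 2), 1 / (p : ℝ) := by
        rw [Finset.sum_product]
        apply Finset.sum_congr rfl
        intro q _
        simp only [e, Finset.sum_filter]
        rw [← Finset.mul_sum, Finset.sum_comm]
    _ ≤ ∑ q ∈ V, 1 / (q : ℝ) * ∑ x : Om N × Om N, (if |zz S x.1 - zz S x.2| < dl then Cd / T else 0) := by
        apply Finset.sum_le_sum
        intro q _
        gcongr with x _
        exact hw q x
    _ = _ := by
        rw [Finset.sum_mul]
        apply Finset.sum_congr rfl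
        intro q _
        congr 1
        unfold aa
        rw [← Finset.sum_filter, Finset.sum_const, nsmul_eq_mul]
        field_simp

/-- Pairs with at least one hit are charged at most twice by the two-element sets they form. -/
lemma W_I_le_of_pairs (N : ℕ) (S V P : Finset ℕ) (hS : ∀ p ∈ S, p.Prime) (hP : ∀ p ∈ P, p.Prime)
    (hSP : Disjoint S P) (hVP : V ⊆ P) :
    W P (fun B => I (S ∪ B)) ≤
      Zf P - 1 / 2 * ∑ x ∈ (Qp V P).filter (fun x => (hits N S x).Nonempty), w2 x := by
  set Q' := (Qp V P).filter (fun x => (hits N S x).Nonempty) with hQ'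
  set φ : ℕ × ℕ → Finset ℕ := fun x => {x.1, x.2} with hφ
  have hm : ∀ x ∈ Q', x.1 ∈ P ∧ x.2 ∈ P ∧ x.1 ≠ x.2 ∧ (hits N S x).Nonempty := by
    intro x hx
    rw [hQ', Finset.mem_filter, Qp, Finset.mem_filter, Finset.mem_product] at hx
    exact ⟨hVP hx.1.1.1, hx.1.1.2, hx.1.2, hx.2⟩
  have hwt : ∀ x ∈ Q', w2 x = wt (φ x) := by
    intro x hx
    unfold w2 wt
    rw [Finset.prod_pair (hm x hx).2.2.1]
  have hI : ∀ x ∈ Q', I (S ∪ φ x) = 0 := by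
    intro x hx
    obtain ⟨h1, h2, h3, ε, hε⟩ := hm x hx
    rw [hits, Finset.mem_filter] at hε
    have := I_pair_eq_zero hS (hP _ h2) (hP _ h1) h3.symm
      (fun h => Finset.disjoint_left.1 hSP h h2) (fun h => Finset.disjoint_left.1 hSP h h1) ε hε.2
    simp only [hφ]
    rwa [Finset.pair_comm] at this
  have h1 : ∑ x ∈ Q', w2 x ≤ 2 * ∑ B ∈ Q'.image φ, wt B := by
    rw [Finset.sum_congr rfl hwt, ← Finset.sum_fiberwise_of_maps_to (g := φ) (t := Q'.image φ)
      (fun x hx => Finset.mem_image_of_mem _ hx), Finset.mul_sum]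
    apply Finset.sum_le_sum
    intro B hB
    obtain ⟨x₀, hx₀, rfl⟩ := Finset.mem_image.1 hB
    -- A two-element set arises from at most two ordered pairs.
    have hsub : Q'.filter (fun x => φ x = φ x₀) ⊆ {x₀, (x₀.2, x₀.1)} := by
      rintro ⟨a, b⟩ hx
      have h2 := (Finset.mem_filter.1 hx).2
      have hab := (hm _ (Finset.mem_filter.1 hx).1).2.2.1
      obtain ⟨a', b'⟩ := x₀
      simp only [hφ] at h2 hab
      have ha : a ∈ ({a', b'} : Finset ℕ) := by rw [← h2]; simp
      have hb : b ∈ ({a', b'} : Finset ℕ) := by rw [← h2]; simp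
      simp only [Finset.mem_insert, Finset.mem_singleton, Prod.mk.injEq] at ha hb ⊢
      omega
    have hcard : ((Q'.filter (fun x => φ x = φ x₀)).card : ℝ) ≤ 2 := by
      exact_mod_cast (Finset.card_le_card hsub).trans Finset.card_le_two
    calc ∑ x ∈ Q'.filter (fun x => φ x = φ x₀), wt (φ x)
        = ∑ x ∈ Q'.filter (fun x => φ x = φ x₀), wt (φ x₀) :=
          Finset.sum_congr rfl (fun x hx => by rw [(Finset.mem_filter.1 hx).2])
      _ = ((Q'.filter (fun x => φ x = φ x₀)).card : ℝ) * wt (φ x₀) := by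
          rw [Finset.sum_const, nsmul_eq_mul]
      _ ≤ _ := mul_le_mul_of_nonneg_right hcard (wt_nonneg _)
  have h2 : ∑ B ∈ Q'.image φ, wt B ≤ W P (fun B => 1 - I (S ∪ B)) := by
    have : ∀ B ∈ Q'.image φ, wt B = wt B * (1 - I (S ∪ B)) := by
      intro B hB
      obtain ⟨x₀, hx₀, rfl⟩ := Finset.mem_image.1 hB
      rw [hI x₀ hx₀]; ring
    rw [Finset.sum_congr rfl this]
    apply Finset.sum_le_sum_of_subset_of_nonneg
    · intro B hB
      obtain ⟨x₀, hx₀, rfl⟩ := Finset.mem_image.1 hB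
      rw [Finset.mem_powerset]
      intro p hp
      simp only [hφ, Finset.mem_insert, Finset.mem_singleton] at hp
      rcases hp with rfl | rfl
      · exact (hm x₀ hx₀).1
      · exact (hm x₀ hx₀).2.1
    · intro B _ _
      exact mul_nonneg (wt_nonneg _) (by linarith [I_le_one (S ∪ B)])
  rw [W_sub P (fun _ => 1) (fun B => I (S ∪ B)), W_one] at h2
  linarith

/-- Cauchy–Schwarz: the weight of the pairs with at least one hit, from the two moments. -/
lemma cauchy_hits (N : ℕ) (S V P : Finset ℕ) :
    (∑ x ∈ Qp V P, w2 x * (hits N S x).card) ^ 2 ≤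
      (∑ x ∈ (Qp V P).filter (fun x => (hits N S x).Nonempty), w2 x) *
      ∑ x ∈ Qp V P, w2 x * ((hits N S x).card : ℝ) ^ 2 := by
  set Q' := (Qp V P).filter (fun x => (hits N S x).Nonempty) with hQ'
  have e : ∑ x ∈ Qp V P, w2 x * (hits N S x).card = ∑ x ∈ Q', √(w2 x) * (√(w2 x) * (hits N S x).card) := by
    rw [hQ', Finset.sum_filter]
    apply Finset.sum_congr rfl
    intro x _
    split_ifs with h
    · rw [← mul_assoc, Real.mul_self_sqrt (w2_nonneg x)]
    · rw [Finset.not_nonempty_iff_eq_empty] at h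
      rw [h]; simp
  rw [e]
  refine (Finset.sum_mul_sq_le_sq_mul_sq _ _ _).trans ?_
  have e1 : ∑ x ∈ Q', √(w2 x) ^ 2 = ∑ x ∈ Q', w2 x :=
    Finset.sum_congr rfl (fun x _ => Real.sq_sqrt (w2_nonneg x))
  have e2 : ∑ x ∈ Q', (√(w2 x) * (hits N S x).card) ^ 2 = ∑ x ∈ Q', w2 x * ((hits N S x).card : ℝ) ^ 2 :=
    Finset.sum_congr rfl (fun x _ => by rw [mul_pow, Real.sq_sqrt (w2_nonneg x)])
  rw [e1, e2]
  apply mul_le_mul_of_nonneg_left _ (Finset.sum_nonneg (fun x _ => w2_nonneg x))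
  exact Finset.sum_le_sum_of_subset_of_nonneg (Finset.filter_subset _ _)
    (fun x _ _ => mul_nonneg (w2_nonneg x) (by positivity))

set_option maxHeartbeats 800000 in
/-- One block of primes destroys a fixed proportion of the integers without divisor in `E`, as
long as the current set is not too large and its signed sums are spread out. The pairs `(q, p)` of
new primes completing some signed sum of `S` to a near-coincidence are counted by the second moment
method. -/
lemma attempt : ∀ C₁ : ℝ, 0 < C₁ → ∃ M₀ : ℝ, 1 ≤ M₀ ∧ ∀ M : ℝ, M₀ ≤ M → ∀ B₀ : ℝ, 0 < B₀ →
    ∃ c : ℝ, 0 < c ∧ c ≤ 1 ∧ ∃ T₀ : ℝ, 1 ≤ T₀ ∧ ∀ T : ℝ, T₀ ≤ T → ∀ (N : ℕ) (S : Finset ℕ),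
      (∀ p ∈ S, p.Prime ∧ Real.log p ≤ T) → ∑ p ∈ S, Real.log p ≤ C₁ * T → T * aa N S ≤ B₀ →
      W (pr T (M * T)) (fun B => I (S ∪ B)) ≤ (1 - c) * Zf (pr T (M * T)) := by
  intro C₁ hC₁
  obtain ⟨C₀, hC₀, hpr⟩ := mertens_pr
  obtain ⟨cw, a₀, hcw, ha₀, hwin⟩ := window_lower
  set K := Real.exp (C₀ + 1) with hK
  have hK1 : 1 ≤ K := Real.one_le_exp (by linarith)
  have hlK : Real.log K = C₀ + 1 := Real.log_exp _
  -- `M` is large enough for the block to contain both the window `V` for the first prime and all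
  -- the windows for the second one.
  refine ⟨(K + 1) * (C₁ + 2), by nlinarith, ?_⟩
  intro M hM B₀ hB₀
  have hM1 : 1 ≤ M := by nlinarith
  have hMe : 0 < M * Real.exp C₀ := by positivity
  -- Each window carries mass at least `2 * c₃ / T`; the factor `2` absorbs the excluded case `p = q`.
  set c₃ := cw / (2 * M) with hc₃
  have hc₃0 : 0 < c₃ := by positivity
  set c₄ := c₃ ^ 2 / (B₀ * Cd) with hc₄
  have hCd := Cd_pos
  have hc₄0 : 0 < c₄ := by positivity
  have hT₁ : ∃ T₁ : ℝ, ∀ T : ℝ, T₁ ≤ T → T * Real.exp (-T) ≤ c₃ := by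
    have := (Real.tendsto_pow_mul_exp_neg_atTop_nhds_zero 1).eventually (gt_mem_nhds hc₃0)
    obtain ⟨T₁, h⟩ := eventually_atTop.1 this
    exact ⟨T₁, fun T hT => by simpa using (h T hT).le⟩
  obtain ⟨T₁, hT₁⟩ := hT₁
  refine ⟨min 1 (c₄ / (2 * (M * Real.exp C₀))), lt_min one_pos (by positivity), min_le_left _ _,
    max T₁ (max a₀ 1), (le_max_right _ _).trans (le_max_right _ _), ?_⟩
  intro T hT N S hS hlog haa
  have hTT₁ : T₁ ≤ T := (le_max_left _ _).trans hT
  have hTa : a₀ ≤ T := ((le_max_left _ _).trans (le_max_right _ _)).trans hT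
  have hT1 : 1 ≤ T := ((le_max_right _ _).trans (le_max_right _ _)).trans hT
  have hT0 : 0 < T := by linarith
  set P := pr T (M * T) with hP
  -- The first prime `q` is so large that `log q + zz S ε` stays inside the block for every `ε`.
  set V := pr ((C₁ + 2) * T) (K * ((C₁ + 2) * T)) with hV
  have hlog2 : Real.log 2 < 1 := by linarith [Real.log_two_lt_d9]
  have hlog2' : 0 < Real.log 2 := by linarith [Real.log_two_gt_d9]
  have hMT : (K + 1) * (C₁ + 2) * T ≤ M * T := by gcongr
  have hKc : 0 < K * C₁ := by positivity
  have hVP : V ⊆ P := by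
    intro q hq
    rw [hV, mem_pr] at hq
    rw [hP, mem_pr]
    refine ⟨hq.1, by nlinarith [hq.2.1], hq.2.2.trans ?_⟩
    nlinarith
  have hPp : ∀ p ∈ P, p.Prime := fun p hp => (mem_pr.1 hp).1
  have hSP : Disjoint S P := by
    rw [Finset.disjoint_left]
    intro p hp hp'
    have h1 := (hS p hp).2
    have h2 := (mem_pr.1 hp').2.1
    linarith
  set v := ∑ q ∈ V, 1 / (q : ℝ) with hv
  have hv1 : 1 ≤ v := by
    have h1 : 1 ≤ (C₁ + 2) * T := by nlinarith
    have h := (abs_le.1 (hpr ((C₁ + 2) * T) (K * ((C₁ + 2) * T)) h1 (by nlinarith))).1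
    rw [mul_div_cancel_right₀ _ (by linarith), hlK] at h
    linarith
  have hfirst := hits_first N S V P (c₃ / T) (by
    intro q hq ε
    rw [hV, mem_pr] at hq
    have hz := abs_le.1 ((zz_abs_le S ε).trans hlog)
    set s := P.filter (fun p : ℕ => q ≠ p ∧
      |Real.log p - Real.log q - zz S ε| < Real.log 2) with hs
    have ha1 : 2 * T ≤ Real.log q + zz S ε := by nlinarith [hq.2.1, hz.1]
    have ha2 : Real.log q + zz S ε ≤ (K * (C₁ + 2) + C₁) * T := by nlinarith [hq.2.2, hz.2]
    have ha3 : Real.log q + zz S ε + 1 ≤ M * T := by nlinarith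
    have h1 := hwin (Real.log q + zz S ε) (by linarith) (insert q s) (by
      intro p hp hpa
      rw [Finset.mem_insert]
      by_cases hqp : p = q
      · exact Or.inl hqp
      · right
        rw [hs, Finset.mem_filter, hP, mem_pr]
        have := abs_lt.1 hpa
        refine ⟨⟨hp, by linarith [this.1], by linarith [this.2]⟩, fun h => hqp h.symm, ?_⟩
        rwa [sub_sub])
    have hqs : q ∉ s := by rw [hs, Finset.mem_filter]; tauto
    rw [Finset.sum_insert hqs] at h1
    have hq0 : (0 : ℝ) < q := by exact_mod_cast hq.1.pos
    have hqe : 1 / (q : ℝ) ≤ c₃ / T := by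
      have h2 := hT₁ T hTT₁
      have h3 : 1 / (q : ℝ) ≤ Real.exp (-T) := by
        rw [Real.exp_neg, one_div]
        apply inv_anti₀ (Real.exp_pos _)
        rw [← Real.le_log_iff_exp_le hq0]
        linarith [hq.2.1, mul_pos hC₁ hT0]
      rw [le_div_iff₀ hT0]
      linarith [mul_le_mul_of_nonneg_right h3 hT0.le, mul_comm T (Real.exp (-T))]
    have h4 : 2 * (c₃ / T) ≤ cw / (Real.log q + zz S ε) := by
      have : 2 * (c₃ / T) = cw / (M * T) := by rw [hc₃]; field_simp
      rw [this]
      apply div_le_div_of_nonneg_left hcw.le (by linarith) (by linarith)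
    linarith)
  have hsecond := hits_second N S V P T hT0 (fun p hp => ⟨hPp p hp, (mem_pr.1 hp).2.1⟩)
  have hc := cauchy_hits N S V P
  have hW := W_I_le_of_pairs N S V P (fun p hp => (hS p hp).1) hPp hSP hVP
  set Wt := ∑ x ∈ (Qp V P).filter (fun x => (hits N S x).Nonempty), w2 x with hWt
  have hWt0 : 0 ≤ Wt := Finset.sum_nonneg (fun x _ => w2_nonneg x)
  have hkey : c₄ ≤ Wt := by
    have h9 : (9 : ℝ) ^ (N + 1) = 3 ^ (N + 1) * 3 ^ (N + 1) := by rw [← mul_pow]; norm_num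
    have h3 : (0 : ℝ) < 3 ^ (N + 1) := by positivity
    have h5 : (v * (3 ^ (N + 1) * (c₃ / T))) ^ 2 ≤ Wt * (v * (9 ^ (N + 1) * aa N S * (Cd / T))) :=
      (pow_le_pow_left₀ (by positivity) hfirst 2).trans
        (hc.trans (mul_le_mul_of_nonneg_left hsecond hWt0))
    have e1 : (v * (3 ^ (N + 1) * (c₃ / T))) ^ 2 =
        (v * (3 ^ (N + 1) * 3 ^ (N + 1)) / T ^ 2) * (v * c₃ ^ 2) := by ring
    have e2 : Wt * (v * (9 ^ (N + 1) * aa N S * (Cd / T))) =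
        (v * (3 ^ (N + 1) * 3 ^ (N + 1)) / T ^ 2) * (Wt * (T * aa N S) * Cd) := by
      rw [h9]; field_simp
    rw [e1, e2] at h5
    have h6 := le_of_mul_le_mul_left h5 (by positivity)
    rw [hc₄, div_le_iff₀ (by positivity)]
    calc c₃ ^ 2 ≤ v * c₃ ^ 2 := by nlinarith [sq_nonneg c₃]
      _ ≤ _ := h6
      _ ≤ Wt * B₀ * Cd := by gcongr
      _ = _ := by ring
  have hZ := Zf_block_le hpr M T hM1 hT1
  have hZ0 : 0 < Zf P := Zf_pos _
  have : min 1 (c₄ / (2 * (M * Real.exp C₀))) * Zf P ≤ 1 / 2 * Wt := by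
    calc min 1 (c₄ / (2 * (M * Real.exp C₀))) * Zf P
        ≤ (c₄ / (2 * (M * Real.exp C₀))) * (M * Real.exp C₀) := by
          gcongr
          exact min_le_right _ _
      _ = 1 / 2 * c₄ := by field_simp
      _ ≤ _ := by linarith
  linarith

/-! ### The upper bound -/

lemma VV_nonneg {M T : ℝ} (hM : 0 ≤ M) (hT : 0 ≤ T) (N : ℕ) (S : Finset ℕ) : 0 ≤ VV M N T S := by
  have := Cd_pos
  have := aa_nonneg N S
  unfold VV
  positivity

/-- The weighted survival functional contracts over each block: either the Lyapunov function is
large and decreases, or it is bounded and the block kills a fixed proportion. -/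
lemma contract : ∃ M c η T₀ : ℝ, 2 ≤ M ∧ 0 < c ∧ c < 1 ∧ 0 < η ∧ 1 ≤ T₀ ∧ ∀ T : ℝ, T₀ ≤ T →
    ∀ (N : ℕ) (S : Finset ℕ), (∀ p ∈ S, p.Prime ∧ p ≤ N ∧ Real.log p ≤ T) →
    (∀ p ∈ pr T (M * T), p ≤ N) →
    W (pr T (M * T)) (fun B => I (S ∪ B) * (1 + η * VV M N (M * T) (S ∪ B))) ≤
      (1 - c) * Zf (pr T (M * T)) * (I S * (1 + η * VV M N T S)) := by
  obtain ⟨M₀, C₂, hM₀, hC₂, hdrift⟩ := drift_V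
  obtain ⟨M₁, hM₁, hatt⟩ := attempt (4 * C₂) (by positivity)
  set M := max 2 (max M₀ M₁) with hM
  have hM2 : 2 ≤ M := le_max_left _ _
  have hMM₀ : M₀ ≤ M := (le_max_left _ _).trans (le_max_right _ _)
  have hMM₁ : M₁ ≤ M := (le_max_right _ _).trans (le_max_right _ _)
  have hCd := Cd_pos
  have hD : 0 < 1 + Cd * M := by positivity
  obtain ⟨c, hc0, hc1, T₀, hT₀, hatt⟩ := hatt M hMM₁ ((4 * C₂ * (1 + Cd * M)) ^ 10) (by positivity)
  refine ⟨M, c / 8, c / (2 * C₂), T₀, hM2, by positivity, by linarith, by positivity, hT₀, ?_⟩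
  intro T hT N S hS hPN
  have hT1 : 1 ≤ T := hT₀.trans hT
  have hT0 : 0 < T := by linarith
  set η := c / (2 * C₂) with hη
  have hη0 : 0 < η := by positivity
  have hηC : η * C₂ = c / 2 := by rw [hη]; field_simp
  set P := pr T (M * T) with hP
  have hZ := Zf_pos P
  set V := VV M N T S with hV
  have hV0 : 0 ≤ V := VV_nonneg (by linarith) hT0.le N S
  have hV'0 : ∀ B, 0 ≤ VV M N (M * T) (S ∪ B) := fun B => VV_nonneg (by linarith) (by positivity) N _
  -- Once a divisor in `E` has appeared both sides vanish.
  by_cases hI : RR (∏ p ∈ S, p)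
  swap
  · have h0 : I S = 0 := if_neg hI
    have h1 : ∀ B, I (S ∪ B) = 0 := fun B =>
      le_antisymm (h0 ▸ I_anti Finset.subset_union_left) (I_nonneg _)
    simp only [h1, h0, zero_mul, mul_zero]
    rw [W_const, zero_mul]
  have h1 : I S = 1 := if_pos hI
  have hd := hdrift M hMM₀ T hT1 N S (fun p hp => ⟨(hS p hp).2.1, (hS p hp).2.2⟩) hPN
  have hsplit : W P (fun B => I (S ∪ B) * (1 + η * VV M N (M * T) (S ∪ B))) ≤
      W P (fun B => I (S ∪ B)) + η * ((1 / 2 * V + C₂) * Zf P) := by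
    calc _ ≤ W P (fun B => I (S ∪ B) + η * VV M N (M * T) (S ∪ B)) := by
          apply W_mono
          intro B _
          have := I_le_one (S ∪ B)
          nlinarith [mul_nonneg hη0.le (hV'0 B)]
      _ = W P (fun B => I (S ∪ B)) + η * W P (fun B => VV M N (M * T) (S ∪ B)) := by
          rw [W_add P (fun B => I (S ∪ B)), W_mul P η]
      _ ≤ _ := by gcongr
  refine hsplit.trans ?_
  rw [h1, one_mul]
  have e : η * ((1 / 2 * V + C₂) * Zf P) = (η * V / 2 + c / 2) * Zf P := by rw [← hηC]; ring
  rw [e]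
  have hηV : 0 ≤ η * V := by positivity
  -- If `V ≤ 4 * C₂` the block kills a proportion `c`, which outweighs the additive term
  -- `η * C₂ = c / 2` of the drift; otherwise the drift itself makes `η * V` decrease.
  by_cases hVC : V ≤ 4 * C₂
  · have haa := aa_nonneg N S
    have hs0 : 0 ≤ (∑ p ∈ S, Real.log p) / T := by positivity
    have ht0 : 0 ≤ 1 / (1 + Cd * M) * (T * aa N S) ^ kap := by positivity
    have hVd : V = 1 / (1 + Cd * M) * (T * aa N S) ^ kap + (∑ p ∈ S, Real.log p) / T := rfl
    have hs : ∑ p ∈ S, Real.log p ≤ 4 * C₂ * T := by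
      rw [← div_le_iff₀ hT0]; linarith
    have ht : T * aa N S ≤ (4 * C₂ * (1 + Cd * M)) ^ 10 := by
      have h2 : (T * aa N S) ^ kap ≤ 4 * C₂ * (1 + Cd * M) := by
        rw [← div_le_iff₀ hD, div_eq_inv_mul, ← one_div]
        linarith
      have h3 : ((T * aa N S) ^ kap) ^ 10 = T * aa N S := by
        rw [← Real.rpow_natCast, ← Real.rpow_mul (by positivity)]
        norm_num [kap]
      rw [← h3]
      exact pow_le_pow_left₀ (by positivity) h2 10
    have h4 := hatt T hT N S (fun p hp => ⟨(hS p hp).1, (hS p hp).2.2⟩) hs ht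
    have h5 : (1 - c + η * V / 2 + c / 2) ≤ (1 - c / 8) * (1 + η * V) := by nlinarith
    nlinarith [mul_le_mul_of_nonneg_right h5 hZ.le]
  · have h4 : W P (fun B => I (S ∪ B)) ≤ Zf P := by
      rw [← W_one]; exact W_mono (fun B _ => I_le_one _)
    have h6 : 2 * c ≤ η * V := by
      have : η * (4 * C₂) ≤ η * V := mul_le_mul_of_nonneg_left (not_le.1 hVC).le hη0.le
      linarith
    have h5 : (1 + η * V / 2 + c / 2) ≤ (1 - c / 8) * (1 + η * V) := by nlinarith
    nlinarith [mul_le_mul_of_nonneg_right h5 hZ.le]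

/-- Iterating `contract` over consecutive blocks: the weight of the sets without divisor in `E`
decays geometrically in the number of blocks. -/
lemma iterate : ∃ M c K : ℝ, ∃ i₀ : ℕ, 2 ≤ M ∧ 0 < c ∧ c < 1 ∧ 0 ≤ K ∧ ∀ k : ℕ,
    W (pr (M ^ i₀) (M ^ (i₀ + k))) I ≤
      (1 - c) ^ k * K * Zf (pr (M ^ i₀) (M ^ (i₀ + k))) := by
  obtain ⟨M, c, η, T₀, hM, hc0, hc1, hη, hT₀, h⟩ := contract
  obtain ⟨i₀, hi₀⟩ := pow_unbounded_of_one_lt T₀ (show 1 < M by linarith)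
  have hT : ∀ k, T₀ ≤ M ^ (i₀ + k) := fun k => hi₀.le.trans
    (pow_le_pow_right₀ (by linarith) (by omega))
  refine ⟨M, c, 1 + η * (1 + M ^ i₀), i₀, hM, hc0, hc1, by positivity, ?_⟩
  intro k
  -- One cube of sign vectors large enough for all the blocks up to `k`.
  obtain ⟨N, hN⟩ : ∃ N : ℕ, Real.exp (M ^ (i₀ + k)) ≤ N := exists_nat_ge _
  have hPN : ∀ j ≤ k, ∀ p, ∀ s, p ∈ pr s (M ^ (i₀ + j)) → p ≤ N := by
    intro j hj p s hp
    rw [mem_pr] at hp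
    have hp0 : (0 : ℝ) < p := by exact_mod_cast hp.1.pos
    have h1 := (Real.log_le_iff_le_exp hp0).1 hp.2.2
    have h2 : M ^ (i₀ + j) ≤ M ^ (i₀ + k) := pow_le_pow_right₀ (by linarith) (by omega)
    exact_mod_cast h1.trans ((Real.exp_le_exp.2 h2).trans hN)
  have key : ∀ j ≤ k, W (pr (M ^ i₀) (M ^ (i₀ + j)))
      (fun S => I S * (1 + η * VV M N (M ^ (i₀ + j)) S)) ≤
      (1 - c) ^ j * (1 + η * (1 + M ^ i₀)) * Zf (pr (M ^ i₀) (M ^ (i₀ + j))) := by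
    intro j
    induction j with
    | zero =>
      intro _
      have e : pr (M ^ i₀) (M ^ (i₀ + 0)) = ∅ := by
        ext p; rw [mem_pr]; simp only [add_zero, Finset.notMem_empty, iff_false]
        rintro ⟨_, h1, h2⟩; linarith
      rw [e, W_empty]
      have h0 : VV M N (M ^ i₀) ∅ ≤ 1 + M ^ i₀ := by
        unfold VV
        have hCd := Cd_pos
        have h1 := aa_nonneg N ∅
        have h2 := rpow_kap_le (show 0 ≤ M ^ i₀ * aa N ∅ by positivity)
        have h3 : M ^ i₀ * aa N ∅ ≤ M ^ i₀ * 1 :=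
          mul_le_mul_of_nonneg_left (aa_empty N) (by positivity)
        have h4 : 1 / (1 + Cd * M) ≤ 1 := by
          rw [div_le_one (by positivity)]; nlinarith
        have h5 : 0 ≤ (M ^ i₀ * aa N ∅) ^ kap := by positivity
        rw [Finset.sum_empty, zero_div]
        nlinarith
      have h0' : 0 ≤ VV M N (M ^ i₀) ∅ := VV_nonneg (by linarith) (by positivity) _ _
      have hI := I_le_one ∅
      have hI' := I_nonneg ∅
      have hz : Zf ∅ = 1 := by simp [Zf]
      rw [hz, pow_zero, one_mul, mul_one, add_zero]
      have h6 : η * VV M N (M ^ i₀) ∅ ≤ η * (1 + M ^ i₀) := by gcongr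
      have h7 : 0 ≤ η * VV M N (M ^ i₀) ∅ := by positivity
      nlinarith
    | succ j ih =>
      intro hj
      have ih := ih (by omega)
      have hle : M ^ i₀ ≤ M ^ (i₀ + j) := pow_le_pow_right₀ (by linarith) (by omega)
      have e : M ^ (i₀ + (j + 1)) = M * M ^ (i₀ + j) := by ring
      have hle' : M ^ (i₀ + j) ≤ M * M ^ (i₀ + j) := by
        have : 0 < M ^ (i₀ + j) := by positivity
        nlinarith
      have hPN' := hPN (j + 1) hj
      rw [e] at hPN' ⊢
      rw [← pr_union hle hle', W_union (pr_disjoint le_rfl), Zf_union (pr_disjoint le_rfl)]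
      set Z := Zf (pr (M ^ (i₀ + j)) (M * M ^ (i₀ + j))) with hZd
      have hZ : 0 < Z := Zf_pos _
      calc _ ≤ W (pr (M ^ i₀) (M ^ (i₀ + j)))
            (fun S => (1 - c) * Z * (I S * (1 + η * VV M N (M ^ (i₀ + j)) S))) := by
            apply W_mono
            intro S hS
            apply h _ (hT j) N S
            · intro p hp
              exact ⟨(mem_pr.1 (hS hp)).1, hPN j (by omega) p _ (hS hp), (mem_pr.1 (hS hp)).2.2⟩
            · intro p hp
              exact hPN' p _ hp
        _ = (1 - c) * Z * W (pr (M ^ i₀) (M ^ (i₀ + j)))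
            (fun S => I S * (1 + η * VV M N (M ^ (i₀ + j)) S)) := W_mul _ _ _
        _ ≤ (1 - c) * Z * ((1 - c) ^ j * (1 + η * (1 + M ^ i₀)) *
              Zf (pr (M ^ i₀) (M ^ (i₀ + j)))) := by
            apply mul_le_mul_of_nonneg_left ih
            have : 0 < 1 - c := by linarith
            positivity
        _ = _ := by ring
  refine le_trans (W_mono ?_) (key k le_rfl)
  intro S _
  have h1 := I_nonneg S
  have h2 : 0 ≤ η * VV M N (M ^ (i₀ + k)) S :=
    mul_nonneg hη.le (VV_nonneg (by linarith) (by positivity) _ _)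
  nlinarith

/-- The upper bound holds in the stronger form of a power saving in `log x`. -/
lemma Rcount_upper_pow : ∃ c K : ℝ, 0 < c ∧ 0 ≤ K ∧ ∀ᶠ x : ℕ in atTop,
    (Rcount x : ℝ) ≤ √x + K * x * Real.exp (-c * Real.log (Real.log x)) := by
  obtain ⟨M, c, K, i₀, hM, hc0, hc1, hK, h⟩ := iterate
  obtain ⟨C, hC, hR⟩ := Rcount_le
  have hM1 : 1 < M := by linarith
  have hlM : 0 < Real.log M := Real.log_pos hM1
  refine ⟨c / Real.log M, C * (Real.exp (c * (i₀ + 1)) * K), by positivity, by positivity, ?_⟩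
  have hL : Tendsto (fun x : ℕ => Real.log x) atTop atTop :=
    Real.tendsto_log_atTop.comp tendsto_natCast_atTop_atTop
  filter_upwards [eventually_ge_atTop 3, hL.eventually_ge_atTop (M ^ i₀)] with x hx hxL
  set L := Real.log x with hLd
  have hL1 : 1 ≤ L := (one_le_pow₀ hM1.le).trans hxL
  have hL0 : 0 < L := by linarith
  set J := ⌊Real.log L / Real.log M⌋₊ with hJ
  have hJ0 : 0 ≤ Real.log L / Real.log M := div_nonneg (Real.log_nonneg hL1) hlM.le
  have hi₀J : i₀ ≤ J := by
    apply Nat.le_floor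
    rw [le_div_iff₀ hlM, ← Real.log_pow]
    exact Real.log_le_log (by positivity) hxL
  have hJL : M ^ J ≤ L := by
    rw [← Real.log_le_log_iff (by positivity) hL0, Real.log_pow, ← le_div_iff₀ hlM]
    exact Nat.floor_le hJ0
  have hJ1 : Real.log L / Real.log M < J + 1 := Nat.lt_floor_add_one _
  obtain ⟨k, hk⟩ := Nat.exists_eq_add_of_le hi₀J
  have hh := h k
  rw [← hk] at hh
  set B := pr (M ^ i₀) (M ^ J) with hB
  have hBsub : B ⊆ pr 0 L := by
    intro p hp
    rw [hB, mem_pr] at hp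
    rw [mem_pr]
    exact ⟨hp.1, lt_trans (by positivity) hp.2.1, hp.2.2.trans hJL⟩
  have h1 := hR x hx B hBsub
  have h2 : W B I / Zf B ≤ (1 - c) ^ k * K := by
    rw [div_le_iff₀ (Zf_pos B)]; exact hh
  have h3 : (1 - c) ^ k ≤ Real.exp (c * (i₀ + 1)) * Real.exp (-(c / Real.log M) * Real.log L) := by
    calc (1 - c) ^ k ≤ (Real.exp (-c)) ^ k :=
          pow_le_pow_left₀ (by linarith) (by linarith [Real.add_one_le_exp (-c)]) k
      _ = Real.exp (-(c * k)) := by rw [← Real.exp_nat_mul]; ring_nf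
      _ ≤ _ := by
        rw [← Real.exp_add]
        apply Real.exp_le_exp.2
        have hkk : (J : ℝ) = i₀ + k := by exact_mod_cast hk
        have e : -(c / Real.log M) * Real.log L = -(c * (Real.log L / Real.log M)) := by ring
        rw [e]
        nlinarith
  calc (Rcount x : ℝ) ≤ √x + C * x * (W B I / Zf B) := h1
    _ ≤ √x + C * x * ((Real.exp (c * (i₀ + 1)) * Real.exp (-(c / Real.log M) * Real.log L)) * K) := by
        have := h2.trans (mul_le_mul_of_nonneg_right h3 hK)
        gcongr
    _ = _ := by ring

lemma Rcount_upper : ∃ c : ℝ, 0 < c ∧ ∀ᶠ x : ℕ in atTop,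
    (Rcount x : ℝ) ≤ (x : ℝ) * Real.exp (-c * Real.sqrt (Real.log (Real.log x))) := by
  obtain ⟨c, K, hc, hK, h⟩ := Rcount_upper_pow
  refine ⟨c / 2, by positivity, ?_⟩
  have hL : Tendsto (fun x : ℕ => Real.log x) atTop atTop :=
    Real.tendsto_log_atTop.comp tendsto_natCast_atTop_atTop
  have hLL : Tendsto (fun x : ℕ => Real.log (Real.log x)) atTop atTop :=
    Real.tendsto_log_atTop.comp hL
  have hlim : Tendsto (fun u : ℝ => c / 2 * u) atTop atTop :=
    tendsto_id.const_mul_atTop (by positivity)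
  filter_upwards [h, eventually_ge_atTop 3, hL.eventually_ge_atTop 1, hLL.eventually_ge_atTop 1,
    hLL.eventually_ge_atTop (4 * (c / 2 + 1)),
    (hlim.comp hLL).eventually_ge_atTop (2 * K)] with x hx hx3 hL1 hu1 hu2 hu3
  set u := Real.log (Real.log x) with hu
  have hx0 : (0 : ℝ) < x := by positivity
  have hLu : Real.log x = Real.exp u := by rw [hu, Real.exp_log (by linarith)]
  have hsq : √(x : ℝ) = x * Real.exp (-(Real.exp u / 2)) := by
    have h1 : √(x : ℝ) = Real.exp (Real.log x / 2) := by
      rw [Real.sqrt_eq_rpow, Real.rpow_def_of_pos hx0]; ring_nf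
    rw [h1, ← hLu]
    nth_rewrite 2 [← Real.exp_log hx0]
    rw [← Real.exp_add]; ring_nf
  have hquad := Real.quadratic_le_exp_of_nonneg (show 0 ≤ u by linarith)
  have hsu : √u ≤ u := by
    rw [Real.sqrt_le_left (by linarith)]; nlinarith
  have hhalf : Real.exp (-u) ≤ 1 / 2 := by
    rw [Real.exp_neg, inv_le_comm₀ (Real.exp_pos _) (by norm_num)]
    linarith [Real.add_one_le_exp u]
  have h1 : Real.exp (-(Real.exp u / 2)) ≤ 1 / 2 * Real.exp (-(c / 2) * u) := by
    calc Real.exp (-(Real.exp u / 2)) ≤ Real.exp (-u + -(c / 2) * u) := by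
          apply Real.exp_le_exp.2; nlinarith
      _ = Real.exp (-u) * Real.exp (-(c / 2) * u) := Real.exp_add _ _
      _ ≤ _ := by gcongr
  have h2 : K * Real.exp (-c * u) ≤ 1 / 2 * Real.exp (-(c / 2) * u) := by
    have e : Real.exp (-c * u) = Real.exp (-(c / 2) * u) * Real.exp (-(c / 2 * u)) := by
      rw [← Real.exp_add]; ring_nf
    rw [e]
    have h3 : K * Real.exp (-(c / 2 * u)) ≤ 1 / 2 := by
      rw [Real.exp_neg, ← div_eq_mul_inv, div_le_iff₀ (Real.exp_pos _)]
      have := Real.add_one_le_exp (c / 2 * u)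
      simp only [Function.comp] at hu3
      linarith
    nlinarith [Real.exp_pos (-(c / 2) * u)]
  calc (Rcount x : ℝ) ≤ √x + K * x * Real.exp (-c * u) := hx
    _ = x * (Real.exp (-(Real.exp u / 2)) + K * Real.exp (-c * u)) := by rw [hsq]; ring
    _ ≤ x * Real.exp (-(c / 2) * u) := by
        apply mul_le_mul_of_nonneg_left _ hx0.le; linarith
    _ ≤ _ := by
        apply mul_le_mul_of_nonneg_left _ hx0.le
        apply Real.exp_le_exp.2
        nlinarith

/-! ### Weight of the sets with a prescribed number of primes per block -/

lemma factorial_le (n : ℕ) (hn : 1 ≤ n) :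
    ((n.factorial : ℕ) : ℝ) ≤ Real.exp ((n + 1) * Real.log n + 1 - n) := by
  induction n, hn using Nat.le_induction with
  | base => simp
  | succ n hn ih =>
    have hn0 : (0 : ℝ) < n := by exact_mod_cast hn
    rw [Nat.factorial_succ]
    push_cast
    have h1 : Real.log n - Real.log (n + 1) ≤ -1 / (n + 1) := by
      rw [← Real.log_div (by positivity) (by positivity)]
      refine (Real.log_le_sub_one_of_pos (by positivity)).trans (le_of_eq ?_)
      field_simp; ring
    have h2 : (n + 1) * (Real.log n - Real.log (n + 1)) ≤ -1 := by
      have := mul_le_mul_of_nonneg_left h1 (show (0 : ℝ) ≤ n + 1 by positivity)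
      rwa [mul_div_cancel₀ _ (by positivity)] at this
    calc ((n : ℝ) + 1) * n.factorial
        ≤ Real.exp (Real.log (n + 1)) * Real.exp ((n + 1) * Real.log n + 1 - n) := by
          rw [Real.exp_log (by positivity)]; gcongr
      _ = Real.exp (Real.log (n + 1) + ((n + 1) * Real.log n + 1 - n)) := (Real.exp_add _ _).symm
      _ ≤ _ := by apply Real.exp_le_exp.2; linarith

/-- The choice of the number `g` of primes per block of ratio `M`. Since `3 ^ g < M`, the number of
pairs of disjoint subsets grows more slowly than the scale of the blocks; since `log M / g` is close
to `log 3`, the weight `(log M) ^ g / g!` of a block is almost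
`M ^ ((1 + log (log 3)) / log 3)` by Stirling. -/
lemma choose_gM (C a : ℝ) (ha : a < (1 + Real.log (Real.log 3)) / Real.log 3) :
    ∃ (g : ℕ) (M : ℝ), 1 ≤ g ∧ 2 ≤ M ∧ (3 : ℝ) ^ g < M ∧ C < Real.log M ∧
      M ^ a ≤ (Real.log M - C) ^ g / g.factorial := by
  have hl3 : 0 < Real.log 3 := Real.log_pos (by norm_num)
  -- `lam` plays the role of `log M / g`, slightly larger than `log 3`.
  obtain ⟨lam, hlam, hlam3⟩ : ∃ lam : ℝ, a < (1 + Real.log lam) / lam ∧ Real.log 3 < lam := by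
    have hc : ContinuousAt (fun lam : ℝ => (1 + Real.log lam) / lam) (Real.log 3) :=
      (continuousAt_const.add (Real.continuousAt_log hl3.ne')).div continuousAt_id hl3.ne'
    have h1 : ∀ᶠ lam in 𝓝[>] (Real.log 3), a < (1 + Real.log lam) / lam :=
      (hc.eventually (lt_mem_nhds ha)).filter_mono nhdsWithin_le_nhds
    exact (h1.and self_mem_nhdsWithin).exists
  have hlam0 : 0 < lam := hl3.trans hlam3
  have hnat : Tendsto (fun g : ℕ => (g : ℝ)) atTop atTop := tendsto_natCast_atTop_atTop
  have hinv : Tendsto (fun g : ℕ => C / (g : ℝ)) atTop (𝓝 0) := hnat.const_div_atTop C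
  have hinv1 : Tendsto (fun g : ℕ => 1 / (g : ℝ)) atTop (𝓝 0) := hnat.const_div_atTop 1
  have hlog : Tendsto (fun g : ℕ => Real.log g / (g : ℝ)) atTop (𝓝 0) :=
    (Real.isLittleO_log_id_atTop.tendsto_div_nhds_zero).comp hnat
  have hlim : Tendsto (fun g : ℕ => Real.log (lam - C / g) + 1 - (Real.log g / (g : ℝ) + 1 / (g : ℝ)))
      atTop (𝓝 (Real.log (lam - 0) + 1 - (0 + 0))) :=
    (((tendsto_const_nhds.sub hinv).log (by linarith)).add tendsto_const_nhds).sub (hlog.add hinv1)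
  have hlt : lam * a < Real.log (lam - 0) + 1 - (0 + 0) := by
    rw [lt_div_iff₀ hlam0] at hlam
    simp only [sub_zero, add_zero]
    linarith
  obtain ⟨g, hg, hgC, hg1⟩ := ((hlim.eventually (lt_mem_nhds hlt)).and
    ((hinv.eventually (gt_mem_nhds hlam0)).and (eventually_ge_atTop 1))).exists
  have hg0 : (0 : ℝ) < g := by exact_mod_cast hg1
  have hlt3 : (3 : ℝ) ^ g < Real.exp (lam * g) := by
    rw [← Real.exp_log (show (0 : ℝ) < 3 ^ g by positivity), Real.log_pow]
    apply Real.exp_lt_exp.2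
    nlinarith
  have hge3 : (3 : ℝ) ≤ 3 ^ g := le_self_pow₀ (by norm_num) (by omega)
  rw [div_lt_iff₀ hg0] at hgC
  refine ⟨g, Real.exp (lam * g), hg1, by linarith, hlt3, by rwa [Real.log_exp], ?_⟩
  rw [Real.log_exp, le_div_iff₀ (by positivity), ← Real.exp_mul]
  have hs : 0 < lam * g - C := by linarith
  have e1 : lam * g - C = (lam - C / g) * g := by field_simp
  have hs' : 0 < lam - C / g := by
    rw [e1] at hs; exact pos_of_mul_pos_left hs hg0.le
  have e2 : Real.log (lam * g - C) = Real.log (lam - C / g) + Real.log g := by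
    rw [e1, Real.log_mul hs'.ne' hg0.ne']
  calc Real.exp (lam * g * a) * g.factorial
      ≤ Real.exp (lam * g * a) * Real.exp ((g + 1) * Real.log g + 1 - g) := by
        gcongr; exact factorial_le g hg1
    _ = Real.exp (lam * g * a + ((g + 1) * Real.log g + 1 - g)) := (Real.exp_add _ _).symm
    _ ≤ Real.exp (g * Real.log (lam * g - C)) := by
        apply Real.exp_le_exp.2
        rw [e2]
        have h1 := mul_lt_mul_of_pos_left hg hg0
        have h2 : (g : ℝ) * (Real.log (lam - C / g) + 1 - (Real.log g / (g : ℝ) + 1 / (g : ℝ))) =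
            g * Real.log (lam - C / g) + g - Real.log g - 1 := by field_simp; ring
        rw [h2] at h1
        linarith
    _ = _ := by rw [Real.exp_nat_mul, Real.exp_log hs]

/-- The elementary symmetric function of the reciprocals of the elements of `P`. -/
noncomputable def es (P : Finset ℕ) (n : ℕ) : ℝ := W P (fun B => if B.card = n then 1 else 0)

lemma es_nonneg (P : Finset ℕ) (n : ℕ) : 0 ≤ es P n :=
  W_nonneg (fun S _ => by split_ifs <;> norm_num)

lemma es_zero (P : Finset ℕ) : es P 0 = 1 := by
  unfold es W
  rw [Finset.sum_eq_single ∅]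
  · simp [wt]
  · intro B _ hB
    simp [Finset.card_eq_zero, hB]
  · intro h; exact absurd (Finset.empty_mem_powerset _) h

/-- Newton-type recursion from `W_palm`: each set with `n` elements extends by the remaining ones. -/
lemma es_succ (P : Finset ℕ) (n : ℕ) (s : ℝ)
    (h : ∀ B ⊆ P, B.card = n → s ≤ ∑ p ∈ P \ B, 1 / (p : ℝ)) :
    s * es P n ≤ (n + 1) * es P (n + 1) := by
  have h1 := W_palm P (fun B _ => if B.card = n then (1 : ℝ) else 0)
  have h2 : W P (fun S => ∑ p ∈ S, if (S.erase p).card = n then (1 : ℝ) else 0) =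
      (n + 1) * es P (n + 1) := by
    unfold es
    rw [← W_mul]
    apply W_congr
    intro S _
    have : ∀ p ∈ S, (if (S.erase p).card = n then (1 : ℝ) else 0) = if S.card = n + 1 then 1 else 0 := by
      intro p hp
      have := Finset.card_erase_add_one hp
      apply if_congr _ rfl rfl
      omega
    rw [Finset.sum_congr rfl this, Finset.sum_const, nsmul_eq_mul]
    split_ifs with hc
    · rw [hc]; push_cast; ring
    · ring
  rw [h2] at h1
  rw [h1]
  unfold es
  rw [← W_mul]
  apply W_mono
  intro B hB
  rw [← Finset.sum_mul]
  split_ifs with hc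
  · linarith [h B hB hc]
  · simp

/-- The weight of one block with `g` primes, and its ratio to the weight with `g - 1` primes. -/
lemma es_block {C : ℝ} (h : ∀ s t : ℝ, 1 ≤ s → s ≤ t →
    |∑ p ∈ pr s t, 1 / (p : ℝ) - Real.log (t / s)| ≤ C) (M : ℝ) (hM : 1 ≤ M) (g : ℕ) (T : ℝ)
    (hT : 1 ≤ T) (hgT : g + 1 ≤ T) (hs : 0 < Real.log M - C - 1) :
    (∀ n ≤ g + 1, (Real.log M - C - 1) ^ n / n.factorial ≤ es (pr T (M * T)) n) ∧
    (Real.log M - C - 1) * es (pr T (M * T)) g ≤ (g + 1) * es (pr T (M * T)) (g + 1) := by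
  set P := pr T (M * T) with hP
  have h1 := (abs_le.1 (h T (M * T) hT (by nlinarith))).1
  rw [mul_div_cancel_right₀ _ (by linarith : T ≠ 0)] at h1
  have key : ∀ n ≤ g, (Real.log M - C - 1) * es P n ≤ (n + 1) * es P (n + 1) := by
    intro n hn
    apply es_succ
    intro B hB hc
    have h2 : ∑ p ∈ P \ B, 1 / (p : ℝ) + ∑ p ∈ B, 1 / (p : ℝ) = ∑ p ∈ P, 1 / (p : ℝ) :=
      Finset.sum_sdiff hB
    have h3 : ∑ p ∈ B, 1 / (p : ℝ) ≤ 1 := by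
      calc ∑ p ∈ B, 1 / (p : ℝ) ≤ ∑ p ∈ B, 1 / T := by
            apply Finset.sum_le_sum
            intro p hp
            have hp' := mem_pr.1 (hB hp)
            have hp0 : (0 : ℝ) < p := by exact_mod_cast hp'.1.pos
            apply one_div_le_one_div_of_le (by linarith)
            linarith [Real.log_le_sub_one_of_pos hp0]
        _ = n / T := by rw [Finset.sum_const, nsmul_eq_mul, hc]; ring
        _ ≤ 1 := by
            rw [div_le_one (by linarith)]
            have : (n : ℝ) ≤ g := by exact_mod_cast hn
            linarith
    linarith
  refine ⟨?_, key g le_rfl⟩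
  intro n
  induction n with
  | zero => intro _; simp [es_zero]
  | succ n ih =>
    intro hn
    have ih := ih (by omega)
    have hk := key n (by omega)
    rw [Nat.factorial_succ, pow_succ]
    push_cast
    have hn0 : (0 : ℝ) < n + 1 := by positivity
    rw [div_le_iff₀ (by positivity)] at ih ⊢
    have hf : (0 : ℝ) < n.factorial := by positivity
    calc _ ≤ (es P n * n.factorial) * (Real.log M - C - 1) := by gcongr
      _ = ((Real.log M - C - 1) * es P n) * n.factorial := by ring
      _ ≤ ((n + 1) * es P (n + 1)) * n.factorial := by gcongr
      _ = _ := by ring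

/-! ### Failure weight of a block and admissible sets -/

/-- The number of pairs of disjoint subsets of `S` which, once `p` is added to the first one, give
a divisor in `E`. -/
noncomputable def cnt (S : Finset ℕ) (p : ℕ) : ℝ :=
  ∑ A ∈ S.powerset, ∑ D ∈ (S \ A).powerset,
    if |Real.log p + ∑ q ∈ A, Real.log q - ∑ q ∈ D, Real.log q| < Real.log 2 then 1 else 0

lemma cnt_nonneg (S : Finset ℕ) (p : ℕ) : 0 ≤ cnt S p :=
  Finset.sum_nonneg (fun _ _ => Finset.sum_nonneg (fun _ _ => by split_ifs <;> norm_num))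

lemma one_le_cnt {S A D : Finset ℕ} {p : ℕ} (hA : A ⊆ S) (hD : D ⊆ S) (hAD : Disjoint A D)
    (h : |Real.log p + ∑ q ∈ A, Real.log q - ∑ q ∈ D, Real.log q| < Real.log 2) :
    1 ≤ cnt S p := by
  have h0 : ∀ A D : Finset ℕ, (0 : ℝ) ≤
      if |Real.log p + ∑ q ∈ A, Real.log q - ∑ q ∈ D, Real.log q| < Real.log 2 then 1 else 0 :=
    fun _ _ => by split_ifs <;> norm_num
  have hD' : D ∈ (S \ A).powerset := by
    rw [Finset.mem_powerset, Finset.subset_sdiff]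
    exact ⟨hD, hAD.symm⟩
  have h1 := Finset.single_le_sum (fun D _ => h0 A D) hD'
  have h2 := Finset.single_le_sum
    (f := fun A => ∑ D ∈ (S \ A).powerset,
      if |Real.log p + ∑ q ∈ A, Real.log q - ∑ q ∈ D, Real.log q| < Real.log 2 then (1 : ℝ) else 0)
    (fun A _ => Finset.sum_nonneg (fun D _ => h0 A D)) (Finset.mem_powerset.2 hA)
  rw [if_pos h] at h1
  exact h1.trans h2

/-- A new divisor in `E` uses one of the new primes. -/
lemma fail_le {S B : Finset ℕ} (hS : ∀ p ∈ S, p.Prime) (hB : ∀ p ∈ B, p.Prime) :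
    1 - I (S ∪ B) ≤ (1 - I S) + ∑ p ∈ B, cnt (S ∪ B.erase p) p := by
  have h0 : 0 ≤ ∑ p ∈ B, cnt (S ∪ B.erase p) p := Finset.sum_nonneg (fun p _ => cnt_nonneg _ _)
  by_cases hI : RR (∏ p ∈ S ∪ B, p)
  · have : I (S ∪ B) = 1 := if_pos hI
    linarith [I_le_one S]
  by_cases hI' : RR (∏ p ∈ S, p)
  swap
  · have : I S = 0 := if_neg hI'
    linarith [I_nonneg (S ∪ B)]
  have hU : ∀ p ∈ S ∪ B, p.Prime := by
    intro p hp
    rcases Finset.mem_union.1 hp with h | h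
    · exact hS p h
    · exact hB p h
  obtain ⟨A, D, hA, hD, hAD, hne, hlt⟩ := exists_of_not_RR hU hI
  have hex : ∃ p ∈ B, p ∈ A ∪ D := by
    by_contra! hcon
    apply not_RR_of hS (A := A) (D := D) _ _ hAD hne hlt hI'
    · intro p hp
      rcases Finset.mem_union.1 (hA hp) with h | h
      · exact h
      · exact absurd (Finset.mem_union_left _ hp) (hcon p h)
    · intro p hp
      rcases Finset.mem_union.1 (hD hp) with h | h
      · exact h
      · exact absurd (Finset.mem_union_right _ hp) (hcon p h)
  obtain ⟨p, hpB, hpAD⟩ := hex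
  have hsub : ∀ X ⊆ S ∪ B, p ∉ X → X ⊆ S ∪ B.erase p := by
    intro X hX hpX q hq
    have hqp : q ≠ p := fun h => hpX (h ▸ hq)
    rcases Finset.mem_union.1 (hX hq) with h | h
    · exact Finset.mem_union_left _ h
    · exact Finset.mem_union_right _ (Finset.mem_erase.2 ⟨hqp, h⟩)
  have h1 : 1 ≤ cnt (S ∪ B.erase p) p := by
    rcases Finset.mem_union.1 hpAD with hp | hp
    · have hpD : p ∉ D := Finset.disjoint_left.1 hAD hp
      refine one_le_cnt (A := A.erase p) (D := D)
        (hsub _ ((Finset.erase_subset _ _).trans hA) (Finset.notMem_erase _ _)) (hsub _ hD hpD)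
        (hAD.mono_left (Finset.erase_subset _ _)) ?_
      rwa [Finset.add_sum_erase A (fun q : ℕ => Real.log q) hp]
    · have hpA : p ∉ A := Finset.disjoint_right.1 hAD hp
      refine one_le_cnt (A := D.erase p) (D := A)
        (hsub _ ((Finset.erase_subset _ _).trans hD) (Finset.notMem_erase _ _)) (hsub _ hA hpA)
        (hAD.symm.mono_left (Finset.erase_subset _ _)) ?_
      rw [Finset.add_sum_erase D (fun q : ℕ => Real.log q) hp, abs_sub_comm]
      exact hlt
  have h2 := Finset.single_le_sum (f := fun p => cnt (S ∪ B.erase p) p)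
    (fun p _ => cnt_nonneg _ _) hpB
  have hI1 : I S = 1 := if_pos hI'
  have hI0 : I (S ∪ B) = 0 := if_neg hI
  linarith

/-- There are `3 ^ |S|` ordered pairs of disjoint subsets of `S`. -/
lemma card_pairs (S : Finset ℕ) :
    ∑ A ∈ S.powerset, ∑ _D ∈ (S \ A).powerset, (1 : ℝ) = 3 ^ S.card := by
  have h := Finset.sum_pow_mul_eq_add_pow (1 : ℝ) 2 S
  norm_num at h
  rw [← h]
  apply Finset.sum_congr rfl
  intro A hA
  rw [Finset.sum_const, Finset.card_powerset, nsmul_eq_mul, mul_one,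
    Finset.card_sdiff_of_subset (Finset.mem_powerset.1 hA)]
  push_cast
  rfl

/-- The constant in the bound for the number of primes in a short window. -/
noncomputable def Cw : ℝ := Real.log 4 * Real.exp (2 * Real.log 2)

lemma Cw_pos : 0 < Cw := mul_pos (Real.log_pos (by norm_num)) (Real.exp_pos _)

/-- Each pair of disjoint subsets excludes a short window of `log p`. -/
lemma sum_cnt_le (S P : Finset ℕ) (T : ℝ) (hT : 0 < T) (hP : ∀ p ∈ P, p.Prime ∧ T < Real.log p) :
    ∑ p ∈ P, 1 / (p : ℝ) * cnt S p ≤ 3 ^ S.card * (Cw / T) := by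
  have e : ∑ p ∈ P, 1 / (p : ℝ) * cnt S p = ∑ A ∈ S.powerset, ∑ D ∈ (S \ A).powerset,
      ∑ p ∈ P.filter (fun p : ℕ =>
        |Real.log p + ∑ q ∈ A, Real.log q - ∑ q ∈ D, Real.log q| < Real.log 2), 1 / (p : ℝ) := by
    simp only [cnt, Finset.mul_sum, Finset.sum_filter]
    rw [Finset.sum_comm]
    apply Finset.sum_congr rfl
    intro A _
    rw [Finset.sum_comm]
    apply Finset.sum_congr rfl
    intro D _
    apply Finset.sum_congr rfl
    intro p _
    split_ifs <;> simp
  rw [e, ← card_pairs, Finset.sum_mul]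
  apply Finset.sum_le_sum
  intro A _
  rw [Finset.sum_mul]
  apply Finset.sum_le_sum
  intro D _
  rw [one_mul]
  refine window_upper _ T (∑ q ∈ D, Real.log q - ∑ q ∈ A, Real.log q) (Real.log 2) hT ?_
  intro p hp
  rw [Finset.mem_filter] at hp
  refine ⟨(hP p hp.1).1, (hP p hp.1).2, ?_⟩
  have := hp.2
  rwa [sub_sub_eq_add_sub]

/-- The weight of the sets of a new block that create a divisor in `E`. -/
lemma fail_block (S P : Finset ℕ) (T : ℝ) (hT : 0 < T) (g : ℕ)
    (hP : ∀ p ∈ P, p.Prime ∧ T < Real.log p) (hS : ∀ p ∈ S, p.Prime) :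
    W P (fun B => (if B.card = g + 1 then 1 else 0) * (1 - I (S ∪ B))) ≤
      es P (g + 1) * (1 - I S) + es P g * (3 ^ (S.card + g) * (Cw / T)) := by
  have h1 : W P (fun B => (if B.card = g + 1 then 1 else 0) * (1 - I (S ∪ B))) ≤
      W P (fun B => (1 - I S) * (if B.card = g + 1 then 1 else 0) +
        ∑ p ∈ B, (if (B.erase p).card = g then 1 else 0) * cnt (S ∪ B.erase p) p) := by
    apply W_mono
    intro B hB
    have e : ∑ p ∈ B, (if (B.erase p).card = g then 1 else 0) * cnt (S ∪ B.erase p) p =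
        (if B.card = g + 1 then 1 else 0) * ∑ p ∈ B, cnt (S ∪ B.erase p) p := by
      rw [Finset.mul_sum]
      apply Finset.sum_congr rfl
      intro p hp
      congr 1
      have := Finset.card_erase_add_one hp
      apply if_congr _ rfl rfl
      omega
    rw [e]
    split_ifs with hc
    · have := fail_le hS (fun p hp => (hP p (hB hp)).1)
      linarith
    · simp
  refine h1.trans ?_
  rw [W_add P (fun B => (1 - I S) * (if B.card = g + 1 then 1 else 0)), W_mul P (1 - I S),
    W_palm P (fun B p => (if B.card = g then 1 else 0) * cnt (S ∪ B) p), mul_comm (1 - I S)]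
  refine add_le_add le_rfl ?_
  rw [mul_comm (es P g), es, ← W_mul]
  apply W_mono
  intro B hB
  split_ifs with hc
  · rw [mul_one]
    have hcard : (S ∪ B).card ≤ S.card + g := hc ▸ Finset.card_union_le S B
    calc ∑ p ∈ P \ B, 1 / (p : ℝ) * (1 * cnt (S ∪ B) p)
        ≤ ∑ p ∈ P, 1 / (p : ℝ) * cnt (S ∪ B) p := by
          simp only [one_mul]
          exact Finset.sum_le_sum_of_subset_of_nonneg Finset.sdiff_subset
            (fun p _ _ => mul_nonneg (by positivity) (cnt_nonneg _ _))
      _ ≤ 3 ^ (S ∪ B).card * (Cw / T) := sum_cnt_le _ _ T hT hP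
      _ ≤ _ := by
          have := Cw_pos
          gcongr
          norm_num
  · simp

/-- The sets with exactly `g` primes in each of the first `k` blocks, the `j`-th block consisting of
the primes `p` with `t j < log p ≤ t (j + 1)`. The condition is only meant for subsets of
`pr (t 0) (t k)`: it says nothing about primes with `log p ≤ t 0`, and the last block is not bounded
above. -/
def adm (t : ℕ → ℝ) (g : ℕ) : ℕ → Finset ℕ → Prop
  | 0, _ => True
  | k + 1, S => adm t g k (S.filter (fun p : ℕ => Real.log p ≤ t k)) ∧
      (S.filter (fun p : ℕ => ¬ Real.log p ≤ t k)).card = g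

lemma adm_union {t : ℕ → ℝ} {g k : ℕ} {S B : Finset ℕ} {a b : ℝ} (hS : S ⊆ pr a (t k))
    (hB : B ⊆ pr (t k) b) : adm t g (k + 1) (S ∪ B) ↔ adm t g k S ∧ B.card = g := by
  have h1 : (S ∪ B).filter (fun p : ℕ => Real.log p ≤ t k) = S := by
    rw [Finset.filter_union, Finset.filter_true_of_mem (fun p hp => (mem_pr.1 (hS hp)).2.2),
      Finset.filter_false_of_mem (fun p hp => not_le.2 (mem_pr.1 (hB hp)).2.1), Finset.union_empty]
  have h2 : (S ∪ B).filter (fun p : ℕ => ¬ Real.log p ≤ t k) = B := by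
    rw [Finset.filter_union, Finset.filter_false_of_mem (fun p hp h => h (mem_pr.1 (hS hp)).2.2),
      Finset.filter_true_of_mem (fun p hp => not_le.2 (mem_pr.1 (hB hp)).2.1), Finset.empty_union]
  rw [adm, h1, h2]

lemma adm_card {t : ℕ → ℝ} {g : ℕ} (k : ℕ) (S : Finset ℕ)
    (hS : S ⊆ pr (t 0) (t k)) (h : adm t g k S) : S.card = g * k := by
  induction k generalizing S with
  | zero =>
    have : S = ∅ := by
      rw [Finset.eq_empty_iff_forall_notMem]
      intro p hp
      have := mem_pr.1 (hS hp)
      linarith [this.2.1, this.2.2]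
    rw [this]; simp
  | succ k ih =>
    have h1 := ih (S.filter (fun p : ℕ => Real.log p ≤ t k)) (by
      intro p hp
      rw [Finset.mem_filter] at hp
      have := mem_pr.1 (hS hp.1)
      exact mem_pr.2 ⟨this.1, this.2.1, hp.2⟩) h.1
    rw [← Finset.card_filter_add_card_filter_not (fun p : ℕ => Real.log p ≤ t k), h1, h.2]
    ring

/-- An admissible set has product at most `exp (2 * g * M ^ (i₀ + k))`, the last block dominating. -/
lemma adm_log {M : ℝ} (hM : 2 ≤ M) {g i₀ : ℕ} (k : ℕ) (S : Finset ℕ)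
    (hS : S ⊆ pr (M ^ i₀) (M ^ (i₀ + k))) (h : adm (fun k => M ^ (i₀ + k)) g k S) :
    ∑ p ∈ S, Real.log p ≤ 2 * g * M ^ (i₀ + k) := by
  induction k generalizing S with
  | zero =>
    have : S = ∅ := by
      rw [Finset.eq_empty_iff_forall_notMem]
      intro p hp
      have := mem_pr.1 (hS hp)
      rw [add_zero] at this
      linarith [this.2.1, this.2.2]
    rw [this, Finset.sum_empty]; positivity
  | succ k ih =>
    have h1 := ih (S.filter (fun p : ℕ => Real.log p ≤ M ^ (i₀ + k))) (by
      intro p hp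
      rw [Finset.mem_filter] at hp
      have := mem_pr.1 (hS hp.1)
      exact mem_pr.2 ⟨this.1, this.2.1, hp.2⟩) h.1
    have h2 : ∑ p ∈ S.filter (fun p : ℕ => ¬ Real.log p ≤ M ^ (i₀ + k)), Real.log p ≤
        g * M ^ (i₀ + (k + 1)) := by
      have := Finset.sum_le_card_nsmul (S.filter (fun p : ℕ => ¬ Real.log p ≤ M ^ (i₀ + k)))
        (fun p : ℕ => Real.log p) (M ^ (i₀ + (k + 1)))
        (fun p hp => (mem_pr.1 (hS (Finset.mem_filter.1 hp).1)).2.2)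
      rwa [h.2, nsmul_eq_mul] at this
    rw [← Finset.sum_filter_add_sum_filter_not S (fun p : ℕ => Real.log p ≤ M ^ (i₀ + k))]
    have e : M ^ (i₀ + (k + 1)) = M * M ^ (i₀ + k) := by ring
    have h3 : (g : ℝ) * (2 * M ^ (i₀ + k)) ≤ g * (M * M ^ (i₀ + k)) := by gcongr
    rw [e] at h2 ⊢
    linarith

/-- A lower bound for the total weight of the admissible sets without divisor in `E`. The weight of
the admissible sets is at least `(M ^ a) ^ k`, and the proportion lost in block `k` is a multiple of
`(3 ^ g / M) ^ k`, so that at most one half is lost in all. -/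
lemma good_weight (a : ℝ) (ha : a < (1 + Real.log (Real.log 3)) / Real.log 3) :
    ∃ (M : ℝ) (g i₀ : ℕ), 2 ≤ M ∧ 1 ≤ g ∧ ∀ k : ℕ, 1 / 2 * (M ^ a) ^ k ≤
      W (pr (M ^ i₀) (M ^ (i₀ + k)))
        (fun S => (if adm (fun k => M ^ (i₀ + k)) g k S then 1 else 0) * I S) := by
  obtain ⟨C, hC, hmer⟩ := mertens_pr
  obtain ⟨g, M, hg, hM, h3, hCM, hMa⟩ := choose_gM (C + 1) a ha
  obtain ⟨g', rfl⟩ := Nat.exists_eq_add_of_le' hg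
  rw [← sub_sub] at hMa
  set s := Real.log M - C - 1 with hs
  have hs0 : 0 < s := by linarith
  have hCw := Cw_pos
  have hM0 : 0 < M := by linarith
  -- The failure proportion in block `k` is `K / M ^ i₀ * r ^ k`, with geometric sum `δ ≤ 1 / 2`.
  set r := (3 : ℝ) ^ (g' + 1) / M with hr
  have hr1 : r < 1 := by rw [hr, div_lt_one hM0]; exact h3
  have hr0 : 0 < r := by positivity
  set K := ((g' : ℝ) + 1) / s * (Cw * 3 ^ g') with hK
  have hK0 : 0 < K := by positivity
  obtain ⟨i₀, hi₀⟩ := pow_unbounded_of_one_lt (max (g' + 1 : ℝ) (2 * K / (1 - r)))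
    (show 1 < M by linarith)
  have hiT : (g' : ℝ) + 1 ≤ M ^ i₀ := (le_max_left _ _).trans hi₀.le
  have hiK : 2 * K / (1 - r) ≤ M ^ i₀ := (le_max_right _ _).trans hi₀.le
  have hr1' : 0 < 1 - r := by linarith
  set δ := K / (M ^ i₀ * (1 - r)) with hδ
  have hδ2 : δ ≤ 1 / 2 := by
    rw [hδ, div_le_iff₀ (by positivity)]
    rw [div_le_iff₀ hr1'] at hiK
    linarith
  have hδ0 : 0 < δ := by positivity
  refine ⟨M, g' + 1, i₀, hM, hg, ?_⟩
  set t : ℕ → ℝ := fun k => M ^ (i₀ + k) with ht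
  set ad : ℕ → Finset ℕ → ℝ := fun k S => if adm t (g' + 1) k S then 1 else 0 with had
  have had0 : ∀ k S, 0 ≤ ad k S := fun k S => by rw [had]; dsimp only; split_ifs <;> norm_num
  have main : ∀ k : ℕ, (M ^ a) ^ k ≤ W (pr (M ^ i₀) (t k)) (ad k) ∧
      W (pr (M ^ i₀) (t k)) (fun S => ad k S * (1 - I S)) ≤
        δ * (1 - r ^ k) * W (pr (M ^ i₀) (t k)) (ad k) := by
    intro k
    induction k with
    | zero =>
      have e : pr (M ^ i₀) (t 0) = ∅ := by
        ext p; rw [mem_pr]; simp only [ht, add_zero, Finset.notMem_empty, iff_false]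
        rintro ⟨_, h1, h2⟩; linarith
      rw [e, W_empty, W_empty]
      have hI : I ∅ = 1 := by
        unfold I
        rw [if_pos]
        rintro ⟨m, ⟨d, d', hd, hdd, _, rfl⟩, hdvd⟩
        rw [Finset.prod_empty, Nat.dvd_one] at hdvd
        have := Nat.eq_one_of_mul_eq_one_left hdvd
        omega
      rw [hI]
      simp [had, adm]
    | succ k ih =>
      obtain ⟨ih1, ih2⟩ := ih
      have hle : M ^ i₀ ≤ t k := pow_le_pow_right₀ (by linarith) (by omega)
      have e : t (k + 1) = M * t k := by simp only [ht]; ring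
      have htk : 0 < t k := by simp only [ht]; positivity
      have htg : (g' : ℝ) + 1 ≤ t k := hiT.trans hle
      have htk1 : 1 ≤ t k := by linarith [show (0 : ℝ) ≤ g' by positivity]
      have hle' : t k ≤ t (k + 1) := by rw [e]; nlinarith
      set Q := pr (M ^ i₀) (t k) with hQ
      set P := pr (t k) (t (k + 1)) with hP
      have hPQ : Disjoint Q P := pr_disjoint le_rfl
      have hun : pr (M ^ i₀) (t (k + 1)) = Q ∪ P := (pr_union hle hle').symm
      obtain ⟨hes, hes'⟩ := es_block hmer M (by linarith) g' (t k) htk1 htg hs0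
      rw [← e, ← hP, ← hs] at hes hes'
      have hes1 : M ^ a ≤ es P (g' + 1) := hMa.trans (hes _ le_rfl)
      have hes0 := es_nonneg P (g' + 1)
      have hadm : ∀ S ⊆ Q, ∀ B ⊆ P, ad (k + 1) (S ∪ B) =
          ad k S * (if B.card = g' + 1 then 1 else 0) := by
        intro S hS B hB
        simp only [had]
        rw [if_congr (adm_union hS hB) rfl rfl]
        by_cases h1 : adm t (g' + 1) k S <;> by_cases h2 : B.card = g' + 1 <;> simp [h1, h2]
      have hE : W (Q ∪ P) (ad (k + 1)) = es P (g' + 1) * W Q (ad k) := by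
        rw [W_union hPQ, ← W_mul]
        apply W_congr
        intro S hS
        rw [W_congr (hadm S hS), W_mul, es, mul_comm]
      have hmono : 0 ≤ W Q (ad k) := W_nonneg (fun S _ => had0 k S)
      rw [hun, hE]
      constructor
      · rw [pow_succ, mul_comm]
        exact mul_le_mul hes1 ih1 (by positivity) hes0
      have herr : ∀ S ⊆ Q, adm t (g' + 1) k S →
          es P g' * (3 ^ (S.card + g') * (Cw / t k)) ≤ es P (g' + 1) * (δ * (1 - r) * r ^ k) := by
        intro S hS hSa
        have hc := adm_card k S (by simpa [ht, hQ] using hS) hSa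
        have h1 : es P g' ≤ (g' + 1) / s * es P (g' + 1) := by
          rw [div_mul_eq_mul_div, le_div_iff₀ hs0, mul_comm]
          exact hes'
        calc es P g' * (3 ^ (S.card + g') * (Cw / t k))
            ≤ (g' + 1) / s * es P (g' + 1) * (3 ^ (S.card + g') * (Cw / t k)) := by gcongr
          _ = _ := by
            have e1 : t k = M ^ i₀ * M ^ k := by simp only [ht]; ring
            have e2 : δ * (1 - r) = K / M ^ i₀ := by rw [hδ]; field_simp
            rw [hc, e1, e2, hr, hK, div_pow, ← pow_mul, pow_add]
            field_simp
      have hF : W (Q ∪ P) (fun S => ad (k + 1) S * (1 - I S)) ≤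
          W Q (fun S => es P (g' + 1) * (ad k S * (1 - I S)) +
            es P (g' + 1) * (δ * (1 - r) * r ^ k) * ad k S) := by
        rw [W_union hPQ]
        apply W_mono
        intro S hS
        have e1 : W P (fun B => ad (k + 1) (S ∪ B) * (1 - I (S ∪ B))) =
            ad k S * W P (fun B => (if B.card = g' + 1 then 1 else 0) * (1 - I (S ∪ B))) := by
          rw [← W_mul]
          apply W_congr
          intro B hB
          rw [hadm S hS B hB]; ring
        rw [e1]
        by_cases h1 : adm t (g' + 1) k S
        · have h2 : ad k S = 1 := if_pos h1
          have h3 := fail_block S P (t k) htk g'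
            (fun p hp => ⟨(mem_pr.1 hp).1, (mem_pr.1 hp).2.1⟩) (fun p hp => (mem_pr.1 (hS hp)).1)
          have h4 := herr S hS h1
          rw [h2]
          linarith
        · have h2 : ad k S = 0 := if_neg h1
          rw [h2]; simp
      refine hF.trans ?_
      rw [W_add Q (fun S => es P (g' + 1) * (ad k S * (1 - I S))), W_mul Q (es P (g' + 1)),
        W_mul Q (es P (g' + 1) * (δ * (1 - r) * r ^ k))]
      have h5 := mul_le_mul_of_nonneg_left ih2 hes0
      refine (add_le_add h5 le_rfl).trans (le_of_eq ?_)
      rw [pow_succ]; ring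
  intro k
  obtain ⟨h1, h2⟩ := main k
  have hmono : 0 ≤ W (pr (M ^ i₀) (t k)) (ad k) := W_nonneg (fun S _ => had0 k S)
  have h3 : W (pr (M ^ i₀) (t k)) (fun S => ad k S * I S) = W (pr (M ^ i₀) (t k)) (ad k) -
      W (pr (M ^ i₀) (t k)) (fun S => ad k S * (1 - I S)) := by
    rw [← W_sub]
    exact W_congr (fun S _ => by ring)
  change _ ≤ W (pr (M ^ i₀) (t k)) (fun S => ad k S * I S)
  rw [h3]
  have h4 : δ * (1 - r ^ k) ≤ 1 / 2 := by
    have : 0 < r ^ k := by positivity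
    nlinarith
  nlinarith [mul_le_mul_of_nonneg_right h4 hmono]

/-! ### The lower bound -/

/-- The primes between `√x` and `x / a`. -/
noncomputable def bigP (x a : ℕ) : Finset ℕ :=
  (Finset.Ioc 0 (x / a)).filter (fun q => q.Prime ∧ x.sqrt < q)

/-- Chebyshev's lower bound for the number of large primes. -/
lemma bigP_card : ∀ᶠ x : ℕ in atTop, ∀ a : ℕ, 1 ≤ a → 3 * Real.log a ≤ Real.log x →
    (x : ℝ) / (4 * Real.log x) * (1 / (a : ℝ)) ≤ (bigP x a).card := by
  have hl2 := Real.log_two_gt_d9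
  obtain ⟨z₀, hz₀⟩ := eventually_atTop.1 (theta_lower (Real.log 2 - 1 / 2) (by linarith))
  have hL : Tendsto (fun x : ℕ => Real.log x) atTop atTop :=
    Real.tendsto_log_atTop.comp tendsto_natCast_atTop_atTop
  filter_upwards [eventually_ge_atTop 3, hL.eventually_ge_atTop 48, hL.eventually_ge_atTop (2 * z₀)]
    with x hx hL48 hLz a ha hax
  have hx0 : (0 : ℝ) < x := by positivity
  have ha0 : (0 : ℝ) < a := by exact_mod_cast ha
  set L := Real.log x with hLd
  set y : ℝ := (x : ℝ) / a with hy
  have hy0 : 0 < y := by positivity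
  have hly : 2 * L / 3 ≤ Real.log y := by
    rw [hy, Real.log_div hx0.ne' ha0.ne']; linarith
  have hsx : √(x : ℝ) = Real.exp (L / 2) := by
    rw [Real.sqrt_eq_rpow, Real.rpow_def_of_pos hx0, ← hLd]; ring_nf
  have hy1 : 8 * √(x : ℝ) ≤ y := by
    rw [hsx, ← Real.exp_log hy0]
    calc 8 * Real.exp (L / 2) ≤ Real.exp (L / 6) * Real.exp (L / 2) := by
          gcongr
          linarith [Real.add_one_le_exp (L / 6)]
      _ = Real.exp (2 * L / 3) := by rw [← Real.exp_add]; ring_nf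
      _ ≤ _ := Real.exp_le_exp.2 hly
  have hyz : z₀ ≤ y := by
    have h1 := Real.log_le_sub_one_of_pos hy0
    linarith
  have h1 := hz₀ y hyz
  have h2 := Chebyshev.theta_le_log4_mul_x (show 0 ≤ √(x : ℝ) by positivity)
  have hl4 : Real.log 4 ≤ 2 := by
    rw [show (4 : ℝ) = 2 ^ 2 by norm_num, Real.log_pow]
    push_cast
    linarith [Real.log_two_lt_d9]
  have hfy : ⌊y⌋₊ = x / a := by rw [hy, Nat.floor_div_eq_div]
  have hfs : ⌊√(x : ℝ)⌋₊ = x.sqrt := Real.nat_floor_real_sqrt_eq_nat_sqrt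
  have h3 : Chebyshev.theta y ≤ Chebyshev.theta √(x : ℝ) + (bigP x a).card * L := by
    unfold Chebyshev.theta
    rw [hfy, hfs]
    have hsub : (Finset.Ioc 0 (x / a)).filter Nat.Prime ⊆
        (Finset.Ioc 0 x.sqrt).filter Nat.Prime ∪ bigP x a := by
      intro q hq
      rw [Finset.mem_filter, Finset.mem_Ioc] at hq
      rw [Finset.mem_union, bigP, Finset.mem_filter, Finset.mem_filter, Finset.mem_Ioc,
        Finset.mem_Ioc]
      by_cases h : q ≤ x.sqrt
      · left; exact ⟨⟨hq.1.1, h⟩, hq.2⟩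
      · right; exact ⟨hq.1, hq.2, by omega⟩
    have h4 : ∑ q ∈ bigP x a, Real.log q ≤ (bigP x a).card * L := by
      rw [← nsmul_eq_mul]
      apply Finset.sum_le_card_nsmul
      intro q hq
      rw [bigP, Finset.mem_filter, Finset.mem_Ioc] at hq
      apply Real.log_le_log (by exact_mod_cast hq.1.1)
      exact_mod_cast hq.1.2.trans (Nat.div_le_self x a)
    calc _ ≤ ∑ q ∈ (Finset.Ioc 0 x.sqrt).filter Nat.Prime ∪ bigP x a, Real.log q :=
          Finset.sum_le_sum_of_subset_of_nonneg hsub (fun q _ _ => by positivity)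
      _ ≤ ∑ q ∈ (Finset.Ioc 0 x.sqrt).filter Nat.Prime, Real.log q + ∑ q ∈ bigP x a, Real.log q := by
          rw [← Finset.sum_union_inter]
          have : 0 ≤ ∑ q ∈ (Finset.Ioc 0 x.sqrt).filter Nat.Prime ∩ bigP x a, Real.log q :=
            Finset.sum_nonneg (fun q _ => by positivity)
          linarith
      _ ≤ _ := by gcongr
  have h5 : (Real.log 2 - (Real.log 2 - 1 / 2)) * y = y / 2 := by ring
  rw [h5] at h1
  have h6 : Real.log 4 * √(x : ℝ) ≤ 2 * √(x : ℝ) := by gcongr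
  have h7 : y / 4 ≤ (bigP x a).card * L := by linarith
  have h8 : (x : ℝ) / (4 * L) * (1 / (a : ℝ)) = y / 4 / L := by rw [hy]; field_simp
  rw [h8, div_le_iff₀ (by linarith)]
  exact h7

/-- Multiplying by a very large prime creates no divisor in `E`. -/
lemma RR_mul_big {S : Finset ℕ} {q x : ℕ} (hS : ∀ p ∈ S, p.Prime) (hR : RR (∏ p ∈ S, p))
    (hq : q.Prime) (hL : 12 ≤ Real.log x) (hqx : Real.log x / 2 ≤ Real.log q)
    (hSx : ∑ p ∈ S, Real.log p ≤ Real.log x / 3) : RR (q * ∏ p ∈ S, p) := by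
  have hl2 := Real.log_two_lt_d9
  have hqS : q ∉ S := by
    intro h
    have := Finset.single_le_sum (f := fun p : ℕ => Real.log p)
      (fun p _ => Real.log_natCast_nonneg p) h
    linarith
  rw [← Finset.prod_insert (f := fun p => p) hqS]
  by_contra hcon
  obtain ⟨A, D, hA, hD, hAD, hne, hlt⟩ := exists_of_not_RR (by
    intro p hp
    rcases Finset.mem_insert.1 hp with rfl | h
    · exact hq
    · exact hS p h) hcon
  have hsub : ∀ X ⊆ insert q S, q ∉ X → X ⊆ S := by
    intro X hX hqX p hp
    rcases Finset.mem_insert.1 (hX hp) with rfl | h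
    · exact absurd hp hqX
    · exact h
  have hle : ∀ X ⊆ S, ∑ p ∈ X, Real.log p ≤ Real.log x / 3 := fun X hX =>
    (Finset.sum_le_sum_of_subset_of_nonneg hX (fun p _ _ => Real.log_natCast_nonneg p)).trans hSx
  have hge : ∀ X : Finset ℕ, q ∈ X → Real.log x / 2 ≤ ∑ p ∈ X, Real.log p := fun X hX =>
    hqx.trans (Finset.single_le_sum (f := fun p : ℕ => Real.log p)
      (fun p _ => Real.log_natCast_nonneg p) hX)
  rw [abs_lt] at hlt
  by_cases h1 : q ∈ A
  · have h2 : q ∉ D := Finset.disjoint_left.1 hAD h1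
    linarith [hge A h1, hle D (hsub D hD h2)]
  · by_cases h2 : q ∈ D
    · linarith [hge D h2, hle A (hsub A hA h1)]
    · exact not_RR_of hS (hsub A hA h1) (hsub D hD h2) hAD hne (abs_lt.2 hlt) hR

/-- Integers without divisor in `E` from small sets of primes and one large prime. -/
lemma Rcount_ge : ∀ᶠ x : ℕ in atTop, ∀ (P : Finset ℕ) (f : Finset ℕ → ℝ), (∀ p ∈ P, p.Prime) →
    (∀ S ⊆ P, f S ≤ 1) → (∀ S ⊆ P, 0 < f S → ∑ p ∈ S, Real.log p ≤ Real.log x / 3) →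
    (x : ℝ) / (4 * Real.log x) * W P (fun S => f S * I S) ≤ Rcount x := by
  have hLt : Tendsto (fun x : ℕ => Real.log x) atTop atTop :=
    Real.tendsto_log_atTop.comp tendsto_natCast_atTop_atTop
  filter_upwards [bigP_card, hLt.eventually_ge_atTop 12, eventually_ge_atTop 3]
    with x hbig hL hx3 P f hP hf1 hfS
  have hx0 : (0 : ℝ) < x := by positivity
  set G := P.powerset.filter (fun S => 0 < f S ∧ RR (∏ p ∈ S, p)) with hG
  have hGm : ∀ S ∈ G, (∀ p ∈ S, p.Prime) ∧ ∑ p ∈ S, Real.log p ≤ Real.log x / 3 ∧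
      RR (∏ p ∈ S, p) ∧ f S ≤ 1 := by
    intro S hS
    rw [hG, Finset.mem_filter, Finset.mem_powerset] at hS
    exact ⟨fun p hp => hP p (hS.1 hp), hfS S hS.1 hS.2.1, hS.2.2, hf1 S hS.1⟩
  have hqlog : ∀ (a q : ℕ), q ∈ bigP x a → q.Prime ∧ 0 < q ∧ q ≤ x / a ∧
      Real.log x / 2 ≤ Real.log q := by
    intro a q hq
    rw [bigP, Finset.mem_filter, Finset.mem_Ioc] at hq
    refine ⟨hq.2.1, hq.1.1, hq.1.2, ?_⟩
    have h1 : x < q * q := Nat.sqrt_lt.1 hq.2.2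
    have hq0 : (0 : ℝ) < q := by exact_mod_cast hq.1.1
    have h2 : Real.log x ≤ Real.log ((q : ℝ) * q) :=
      Real.log_le_log hx0 (by exact_mod_cast h1.le)
    rw [Real.log_mul hq0.ne' hq0.ne'] at h2
    linarith
  have hnot : ∀ S ∈ G, ∀ a q, q ∈ bigP x a → q ∉ S := by
    intro S hS a q hq h
    have h1 := (hqlog a q hq).2.2.2
    have h2 := Finset.single_le_sum (f := fun p : ℕ => Real.log p)
      (fun p _ => Real.log_natCast_nonneg p) h
    have h3 := (hGm S hS).2.1
    linarith
  have hcard : ((G.sigma (fun S => bigP x (∏ p ∈ S, p))).card : ℝ) ≤ Rcount x := by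
    rw [Rcount_eq]
    have := Finset.card_le_card_of_injOn (s := G.sigma (fun S => bigP x (∏ p ∈ S, p))) (t := Rs x)
      (fun y => y.2 * ∏ p ∈ y.1, p) ?_ ?_
    · exact_mod_cast this
    · rintro ⟨S, q⟩ hy
      rw [Finset.mem_coe, Finset.mem_sigma] at hy
      obtain ⟨hS, hq⟩ := hy
      simp only at hS hq
      obtain ⟨hq1, hq2, hq3, hq4⟩ := hqlog _ q hq
      obtain ⟨hS1, hS2, hS3, _⟩ := hGm S hS
      have ha : 0 < ∏ p ∈ S, p := Finset.prod_pos (fun p hp => (hS1 p hp).pos)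
      rw [Finset.mem_coe, mem_Rs]
      refine ⟨⟨Nat.mul_pos hq2 ha, ?_⟩, RR_mul_big hS1 hS3 hq1 hL hq4 hS2⟩
      exact (Nat.le_div_iff_mul_le ha).1 hq3
    · rintro ⟨S, q⟩ hy ⟨S', q'⟩ hy' heq
      rw [Finset.mem_coe, Finset.mem_sigma] at hy hy'
      obtain ⟨hS, hq⟩ := hy
      obtain ⟨hS', hq'⟩ := hy'
      simp only at hS hq hS' hq' heq
      have hqp := (hqlog _ q hq).1
      -- The large prime is determined by the integer: it divides no product of the small primes.
      have hqq : q = q' := by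
        have hdvd : q ∣ q' * ∏ p ∈ S', p := heq ▸ Nat.dvd_mul_right q _
        rcases hqp.dvd_mul.1 hdvd with h | h
        · exact (Nat.prime_dvd_prime_iff_eq hqp (hqlog _ q' hq').1).1 h
        · obtain ⟨p, hp, hqp'⟩ := (hqp.prime.dvd_finsetProd_iff _).1 h
          rw [Nat.prime_dvd_prime_iff_eq hqp ((hGm S' hS').1 p hp)] at hqp'
          exact absurd (hqp' ▸ hp) (hnot S' hS' _ q hq)
      subst hqq
      have h1 := Nat.eq_of_mul_eq_mul_left hqp.pos heq
      have h2 : S = S' := by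
        rw [← primeFactors_prod_primes S (hGm S hS).1, h1,
          primeFactors_prod_primes S' (hGm S' hS').1]
      subst h2
      rfl
  refine le_trans ?_ hcard
  rw [Finset.card_sigma]
  push_cast
  have hc0 : 0 < (x : ℝ) / (4 * Real.log x) := div_pos hx0 (by linarith)
  calc (x : ℝ) / (4 * Real.log x) * W P (fun S => f S * I S)
      ≤ (x : ℝ) / (4 * Real.log x) * ∑ S ∈ G, wt S := by
        apply mul_le_mul_of_nonneg_left _ hc0.le
        rw [hG, Finset.sum_filter, W]
        apply Finset.sum_le_sum
        intro S hS
        have hS' := Finset.mem_powerset.1 hS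
        have hw := wt_nonneg S
        split_ifs with h
        · have h1 := hf1 S hS'
          have h2 : I S = 1 := if_pos h.2
          rw [h2]
          nlinarith
        · rw [not_and_or, not_lt] at h
          rcases h with h | h
          · have := I_nonneg S
            nlinarith [mul_nonneg hw this]
          · have : I S = 0 := if_neg h
            rw [this]; simp
    _ = ∑ S ∈ G, (x : ℝ) / (4 * Real.log x) * (1 / ((∏ p ∈ S, p : ℕ) : ℝ)) := by
        rw [Finset.mul_sum]
        apply Finset.sum_congr rfl
        intro S _
        unfold wt
        push_cast
        rw [Finset.prod_div_distrib]
        simp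
    _ ≤ _ := by
        apply Finset.sum_le_sum
        intro S hS
        obtain ⟨hS1, hS2, -, -⟩ := hGm S hS
        apply hbig
        · exact Finset.prod_pos (fun p hp => (hS1 p hp).pos)
        · rw [log_prod_primes S hS1]; linarith

/-- The block structure of `good_weight` is stopped at the scale `M ^ k ≍ log x`, which leaves room
for a prime factor larger than `√x`. -/
lemma Rcount_lower (ε : ℝ) (hε : 0 < ε) : ∀ᶠ x : ℕ in atTop,
      (x : ℝ) / (Real.log x) ^ ((1 - (1 + Real.log (Real.log 3)) / Real.log 3) + ε) ≤
        (Rcount x : ℝ) := by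
  have hl3 : 1 < Real.log 3 := by
    rw [Real.lt_log_iff_exp_lt (by norm_num)]
    linarith [Real.exp_one_lt_d9]
  set α := (1 + Real.log (Real.log 3)) / Real.log 3 with hα
  have hα0 : 0 < α := by
    have := Real.log_pos hl3
    positivity
  -- The maximum with `α / 2` only keeps the exponent positive when `ε` is large.
  set a := max (α / 2) (α - ε / 2) with ha
  have haα : a < α := max_lt (by linarith) (by linarith)
  have ha0 : 0 < a := lt_of_lt_of_le (by linarith) (le_max_left _ _)
  have haε : α - ε / 2 ≤ a := le_max_right _ _
  obtain ⟨M, g, i₀, hM, hg, hW⟩ := good_weight a haα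
  have hM1 : 1 < M := by linarith
  have hg0 : (0 : ℝ) < g := by exact_mod_cast hg
  have hLt : Tendsto (fun x : ℕ => Real.log x) atTop atTop :=
    Real.tendsto_log_atTop.comp tendsto_natCast_atTop_atTop
  set c := 6 * g * M ^ (i₀ + 1) with hc
  have hc0 : 0 < c := by positivity
  have hpow : Tendsto (fun x : ℕ => (Real.log x) ^ (ε / 2)) atTop atTop :=
    (tendsto_rpow_atTop (by linarith)).comp hLt
  filter_upwards [Rcount_ge, hLt.eventually_ge_atTop 1, hLt.eventually_ge_atTop c,
    hpow.eventually_ge_atTop (8 * c ^ a)] with x hR hL1 hLc hLε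
  set L := Real.log x with hLd
  have hL0 : 0 < L := by linarith
  -- By `adm_log` the first inequality keeps the small factor below `x ^ (1 / 3)`.
  obtain ⟨k, hk1, hk2⟩ : ∃ k : ℕ, 6 * g * M ^ (i₀ + k) ≤ L ∧ L ≤ c * M ^ k := by
    obtain ⟨k, h1, h2⟩ := exists_nat_pow_near
      (show 1 ≤ L / (6 * g * M ^ i₀) by
        rw [le_div_iff₀ (by positivity), one_mul]
        refine le_trans ?_ hLc
        rw [hc, pow_succ]
        have : 0 < 6 * (g : ℝ) * M ^ i₀ := by positivity
        nlinarith) hM1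
    rw [le_div_iff₀ (by positivity)] at h1
    rw [div_lt_iff₀ (by positivity)] at h2
    refine ⟨k, ?_, ?_⟩
    · rw [pow_add]; linarith
    · rw [hc]
      refine h2.le.trans (le_of_eq ?_)
      ring
  have h1 := hR (pr (M ^ i₀) (M ^ (i₀ + k)))
    (fun S => if adm (fun k => M ^ (i₀ + k)) g k S then 1 else 0)
    (fun p hp => (mem_pr.1 hp).1) (fun S _ => by split_ifs <;> norm_num) (by
      intro S hS h
      have hS' : adm (fun k => M ^ (i₀ + k)) g k S := by
        by_contra hcon
        rw [if_neg hcon] at h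
        exact lt_irrefl _ h
      have := adm_log hM k S hS hS'
      linarith)
  have h2 := hW k
  have h3 : (L / c) ^ a ≤ (M ^ a) ^ k := by
    rw [← Real.rpow_natCast, ← Real.rpow_mul (by linarith), mul_comm a, Real.rpow_mul (by linarith),
      Real.rpow_natCast]
    apply Real.rpow_le_rpow (by positivity) _ ha0.le
    rw [div_le_iff₀ hc0]; linarith
  rw [Real.div_rpow hL0.le hc0.le] at h3
  have h4 : L ^ α ≤ L ^ a * L ^ (ε / 2) := by
    rw [← Real.rpow_add hL0]
    exact Real.rpow_le_rpow_of_exponent_le hL1 (by linarith)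
  have hx0 : (0 : ℝ) ≤ x := by positivity
  have hca : 0 < c ^ a := by positivity
  refine le_trans ?_ h1
  calc (x : ℝ) / L ^ (1 - α + ε) ≤ x / (4 * L) * (1 / 2 * (L ^ a / c ^ a)) := by
        have e : L ^ (1 - α + ε) * L ^ α = L * (L ^ (ε / 2) * L ^ (ε / 2)) := by
          rw [← Real.rpow_add hL0, ← Real.rpow_add hL0, ← Real.rpow_one_add' hL0.le (by linarith)]
          ring_nf
        have hp1 : 0 < L ^ (1 - α + ε) := by positivity
        have hp2 : 0 < L ^ a := by positivity
        have hp3 : 0 < L ^ (ε / 2) := by positivity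
        have h5 : L * (8 * c ^ a) ≤ L ^ (1 - α + ε) * L ^ a := by
          have h6 : L * (L ^ (ε / 2) * L ^ (ε / 2)) ≤ (L ^ (1 - α + ε) * L ^ a) * L ^ (ε / 2) := by
            rw [← e, mul_assoc]
            exact mul_le_mul_of_nonneg_left h4 hp1.le
          have h7 : L * L ^ (ε / 2) ≤ L ^ (1 - α + ε) * L ^ a := by
            rw [← mul_assoc] at h6
            exact le_of_mul_le_mul_right h6 hp3
          refine le_trans ?_ h7
          gcongr
        rw [div_le_iff₀ hp1]
        have e2 : x / (4 * L) * (1 / 2 * (L ^ a / c ^ a)) * L ^ (1 - α + ε) =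
            x * ((L ^ (1 - α + ε) * L ^ a) / (L * (8 * c ^ a))) := by
          field_simp
          ring
        rw [e2]
        apply le_mul_of_one_le_right hx0
        rw [le_div_iff₀ (by positivity), one_mul]
        exact h5
    _ ≤ _ := by
        gcongr
        linarith

end ExSet

theorem exceptional_set_bounds :
    (∃ c : ℝ, 0 < c ∧ ∀ᶠ x : ℕ in atTop,
      (Rcount x : ℝ) ≤ (x : ℝ) * Real.exp (-c * Real.sqrt (Real.log (Real.log x)))) ∧
    (∀ ε : ℝ, 0 < ε → ∀ᶠ x : ℕ in atTop,
      (x : ℝ) / (Real.log x) ^ ((1 - (1 + Real.log (Real.log 3)) / Real.log 3) + ε) ≤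
        (Rcount x : ℝ)) :=
  ⟨ExSet.Rcount_upper, ExSet.Rcount_lower⟩
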